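/- Let p ∈ (7/3, 8/3) and let γ ∈ W^{3p/2−2,2}(ℝ/ℤ,ℝⁿ) be injective, parametrized by arc-length, and a stationary point of E_{p,2} with respect to fixed length, i.e. assume there exists λ ∈ ℝ such that δE_{p,2}(γ;h) + λ ∫_{ℝ/ℤ} ⟨γ'(u), h'(u)⟩ du = 0 for all h ∈ C^∞(ℝ/ℤ,ℝⁿ). Then γ ∈ C^∞(ℝ/ℤ,ℝⁿ). -/

import Mathlib

open MeasureTheory Set Filter Topology
open scoped ENNReal

noncomputable section

/-- The area `|a ∧ b|` of the parallelogram spanned by `a, b ∈ ℝⁿ`. -/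
def wedgeNorm {n : ℕ} (a b : EuclideanSpace ℝ (Fin n)) : ℝ :=
  Real.sqrt (‖a‖ ^ 2 * ‖b‖ ^ 2 - (inner ℝ a b : ℝ) ^ 2)

/-- `1 / R^{p,q}(x,y,z) = |(y-x) ∧ (z-x)|^q / (|y-z| |y-x| |z-x|)^p`. -/
def invR {n : ℕ} (p q : ℝ) (x y z : EuclideanSpace ℝ (Fin n)) : ℝ :=
  wedgeNorm (y - x) (z - x) ^ q / (‖y - z‖ * ‖y - x‖ * ‖z - x‖) ^ p

/-- The generalized integral Menger curvature `E_{p,q}` of a closed curve,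
modelled by a `1`-periodic function together with its derivative,
the parameter domain `ℝ/ℤ` being represented by `[0,1)`; values in `[0,∞]`. -/
def menger {n : ℕ} (p q : ℝ) (γ γ' : ℝ → EuclideanSpace ℝ (Fin n)) : ℝ≥0∞ :=
  ∫⁻ u₁ in Ico (0:ℝ) 1, ∫⁻ u₂ in Ico (0:ℝ) 1, ∫⁻ u₃ in Ico (0:ℝ) 1,
    ENNReal.ofReal (‖γ' u₁‖ * ‖γ' u₂‖ * ‖γ' u₃‖ * invR p q (γ u₁) (γ u₂) (γ u₃))

/-- Injectivity of a `1`-periodic curve as a map on `ℝ/ℤ`. -/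
def InjCircle {n : ℕ} (γ : ℝ → EuclideanSpace ℝ (Fin n)) : Prop :=
  ∀ u v : ℝ, γ u = γ v → ∃ k : ℤ, v = u + k

/-- Distance on `ℝ/ℤ`. -/
def circleDist (u v : ℝ) : ℝ := ⨅ k : ℤ, |u - v - (k : ℝ)|

/-- The `ρ`-th power of the Sobolev–Slobodeckiĭ seminorm `[f]_{W^{1+s,ρ}}`
of a periodic function with derivative `f'`; values in `[0,∞]`. -/
def sobSemiPow {n : ℕ} (s ρ : ℝ) (f' : ℝ → EuclideanSpace ℝ (Fin n)) : ℝ≥0∞ :=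
  ∫⁻ u in Ico (0:ℝ) 1, ∫⁻ w in Icc (-(1/2) : ℝ) (1/2),
    ENNReal.ofReal (‖f' (u + w) - f' u‖ ^ ρ / |w| ^ (1 + ρ * s))

/-- The norm `‖f‖_{W^{1+s,ρ}} = ‖f‖_{W^{1,ρ}} + [f]_{W^{1+s,ρ}}`. -/
def sobNorm {n : ℕ} (s ρ : ℝ) (f f' : ℝ → EuclideanSpace ℝ (Fin n)) : ℝ :=
  (∫ u in Ico (0:ℝ) 1, ‖f u‖ ^ ρ) ^ (1/ρ) + (∫ u in Ico (0:ℝ) 1, ‖f' u‖ ^ ρ) ^ (1/ρ)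
    + (sobSemiPow s ρ f').toReal ^ (1/ρ)

/-- `γ` is a closed `W^{1,1}` curve with weak derivative `γ'`:
both are `1`-periodic, `γ'` is measurable and `γ` is the primitive of `γ'`. -/
structure CurvePair {n : ℕ} (γ γ' : ℝ → EuclideanSpace ℝ (Fin n)) : Prop where
  periodic : Function.Periodic γ 1
  periodic' : Function.Periodic γ' 1
  meas' : Measurable γ'
  primitive : ∀ u, γ u = γ 0 + ∫ t in (0:ℝ)..u, γ' t

/-- The `k`-th Fourier coefficient `f̂_k ∈ ℂⁿ` of a `1`-periodic function. -/
def fourierCoef {n : ℕ} (f : ℝ → EuclideanSpace ℝ (Fin n)) (k : ℤ) :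
    EuclideanSpace ℂ (Fin n) :=
  (WithLp.equiv 2 (Fin n → ℂ)).symm fun j =>
    ∫ x in Ico (0:ℝ) 1, (f x j : ℂ) *
      Complex.exp (-(((2 * Real.pi * (k : ℝ) * x : ℝ) : ℂ) * Complex.I))

open scoped BoundedContinuousFunction

/-! ### Smooth orbits of critical points -/

/-- If `o` is a continuous path of critical points of a smooth functional `G` on a Hilbert space
whose Hessian becomes coercive after adding an operator `P`, and `P ∘ o` is smooth,
then `o` is smooth. -/
theorem contDiffAt_orbit_of_coercive {X : Type*} [NormedAddCommGroup X] [InnerProductSpace ℝ X]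
    [CompleteSpace X] {G : X → ℝ} {o : ℝ → X} {τ₀ : ℝ}
    (hG : ContDiffAt ℝ (⊤ : ℕ∞) G (o τ₀)) (ho : ContinuousAt o τ₀)
    (hcrit : ∀ᶠ τ in 𝓝 τ₀, fderiv ℝ G (o τ) = 0) (P : X →L[ℝ] X)
    (hP : ContDiffAt ℝ (⊤ : ℕ∞) (fun τ => P (o τ)) τ₀)
    (hco : ∃ c > 0, ∀ h, c * ‖h‖ ^ 2 ≤
      fderiv ℝ (fderiv ℝ G) (o τ₀) h h + inner ℝ (P h) h) :
    ContDiffAt ℝ (⊤ : ℕ∞) o τ₀ := by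
  have hdG : ContDiffAt ℝ (⊤ : ℕ∞) (fderiv ℝ G) (o τ₀) := hG.fderiv_right (by exact le_rfl)
  let D : X →L[ℝ] (X →L[ℝ] ℝ) := (innerSL ℝ).comp P
  let Ψ : X → (X →L[ℝ] ℝ) := fun x => fderiv ℝ G x + D x
  have hΨ : ContDiffAt ℝ (⊤ : ℕ∞) Ψ (o τ₀) := hdG.add D.contDiff.contDiffAt
  let B : X →L[ℝ] X →L[ℝ] ℝ := fderiv ℝ (fderiv ℝ G) (o τ₀) + D
  have hB : IsCoercive B := by
    obtain ⟨c, hc, h⟩ := hco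
    refine ⟨c, hc, fun u => ?_⟩
    have := h u
    simpa [B, D, pow_two, mul_assoc] using this
  let e : X ≃L[ℝ] (X →L[ℝ] ℝ) :=
    hB.continuousLinearEquivOfBilin.trans
      (InnerProductSpace.toDual ℝ X).toContinuousLinearEquiv
  have he : (e : X →L[ℝ] (X →L[ℝ] ℝ)) = B := by
    ext v w
    exact hB.continuousLinearEquivOfBilin_apply v w
  have hd : HasFDerivAt Ψ (e : X →L[ℝ] (X →L[ℝ] ℝ)) (o τ₀) := by
    rw [he]
    exact ((hdG.differentiableAt (by simp)).hasFDerivAt).add D.hasFDerivAt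
  have htop : ((⊤ : ℕ∞) : WithTop ℕ∞) ≠ 0 := by simp
  have hinv := hΨ.to_localInverse hd htop
  have hleft := (hΨ.hasStrictFDerivAt' hd htop).eventually_left_inverse
  have hΨo : ContDiffAt ℝ (⊤ : ℕ∞) (fun τ => Ψ (o τ)) τ₀ := by
    have h1 : ContDiffAt ℝ (⊤ : ℕ∞) (fun τ => innerSL ℝ (P (o τ))) τ₀ :=
      (innerSL ℝ (E := X)).contDiff.contDiffAt.comp τ₀ hP
    refine h1.congr_of_eventuallyEq ?_
    filter_upwards [hcrit] with τ hτ
    simp [Ψ, hτ, D]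
  refine (ContDiffAt.comp τ₀ hinv hΨo).congr_of_eventuallyEq ?_
  filter_upwards [ho.eventually hleft] with τ hτ
  exact hτ.symm

/-! ### Real powers of bounded continuous functions -/

theorem BoundedContinuousFunction.exp_apply_eq {α : Type*} [TopologicalSpace α] (y : α →ᵇ ℝ)
    (z : α) : (NormedSpace.exp y) z = Real.exp (y z) := by
  let f : (α →ᵇ ℝ) →+* ℝ :=
    { toFun := fun y => y z
      map_one' := rfl
      map_mul' := fun _ _ => rfl
      map_zero' := rfl
      map_add' := fun _ _ => rfl }
  have hf : Continuous f := continuous_eval_const z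
  have := NormedSpace.map_exp f hf y
  rw [Real.exp_eq_exp_ℝ]
  exact this

/-- On functions bounded away from zero, pointwise real powers are smooth. -/
theorem exists_contDiffAt_rpow {α : Type*} [TopologicalSpace α] (q₀ : α →ᵇ ℝ) {c : ℝ}
    (hc : 0 < c) (hq : ∀ z, c ≤ q₀ z) (a : ℝ) :
    ∃ ρ : (α →ᵇ ℝ) → (α →ᵇ ℝ), ContDiffAt ℝ (⊤ : ℕ∞) ρ q₀ ∧
      ∀ᶠ q in 𝓝 q₀, ∀ z, ρ q z = q z ^ a := by
  have hpos : ∀ z, 0 < q₀ z := fun z => hc.trans_le (hq z)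
  let y₀ : α →ᵇ ℝ := BoundedContinuousFunction.ofNormedAddCommGroup
    (fun z => Real.log (q₀ z))
    (q₀.continuous.log fun z => (hpos z).ne') (max |Real.log c| |Real.log ‖q₀‖|) (by
      intro z
      refine abs_le_max_abs_abs (Real.log_le_log hc (hq z)) (Real.log_le_log (hpos z) ?_)
      exact (le_abs_self _).trans (q₀.norm_coe_le_norm z))
  have hy₀ : NormedSpace.exp y₀ = q₀ := by
    ext z
    rw [BoundedContinuousFunction.exp_apply_eq]
    exact Real.exp_log (hpos z)
  have hexp : ContDiff ℝ (⊤ : ℕ∞) (NormedSpace.exp : (α →ᵇ ℝ) → (α →ᵇ ℝ)) :=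
    contDiff_iff_contDiffAt.2 fun x => (NormedSpace.exp_analytic (𝕂 := ℝ) x).contDiffAt
  have hinvl : NormedSpace.exp (-y₀) * NormedSpace.exp y₀ = 1 := by
    rw [← NormedSpace.exp_add]; simp
  let e : (α →ᵇ ℝ) ≃L[ℝ] (α →ᵇ ℝ) := ContinuousLinearEquiv.equivOfInverse
    (NormedSpace.exp y₀ • (1 : (α →ᵇ ℝ) →L[ℝ] (α →ᵇ ℝ)))
    (NormedSpace.exp (-y₀) • (1 : (α →ᵇ ℝ) →L[ℝ] (α →ᵇ ℝ)))
    (fun x => by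
      change NormedSpace.exp (-y₀) * (NormedSpace.exp y₀ * x) = x
      rw [← mul_assoc, hinvl, one_mul])
    (fun x => by
      change NormedSpace.exp y₀ * (NormedSpace.exp (-y₀) * x) = x
      rw [← mul_assoc, mul_comm (NormedSpace.exp y₀), hinvl, one_mul])
  have hd : HasFDerivAt (NormedSpace.exp : (α →ᵇ ℝ) → (α →ᵇ ℝ))
      (e : (α →ᵇ ℝ) →L[ℝ] (α →ᵇ ℝ)) y₀ := (hasStrictFDerivAt_exp (𝕂 := ℝ)).hasFDerivAt
  have htop : ((⊤ : ℕ∞) : WithTop ℕ∞) ≠ 0 := by simp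
  have hinv := hexp.contDiffAt.to_localInverse hd htop
  have hright := (hexp.contDiffAt.hasStrictFDerivAt' hd htop).eventually_right_inverse
  rw [hy₀] at hinv hright
  refine ⟨fun q => NormedSpace.exp (a • hexp.contDiffAt.localInverse hd htop q),
    hexp.contDiffAt.comp q₀ (hinv.const_smul a), ?_⟩
  filter_upwards [hright] with q h z
  have hz : Real.exp (hexp.contDiffAt.localInverse hd htop q z) = q z := by
    rw [← BoundedContinuousFunction.exp_apply_eq]
    exact congrArg (fun f : α →ᵇ ℝ => f z) h
  rw [BoundedContinuousFunction.exp_apply_eq, ← hz, ← Real.exp_mul]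
  simp [mul_comm]

/-! ### Second derivatives along lines -/

theorem ContDiffAt.differentiableAt_fderiv_top {Z : Type*} [NormedAddCommGroup Z]
    [NormedSpace ℝ Z] {g : Z → ℝ} {z : Z} (hg : ContDiffAt ℝ (⊤ : ℕ∞) g z) :
    DifferentiableAt ℝ (fderiv ℝ g) z := by
  have h : ContDiffAt ℝ (⊤ : ℕ∞) (fderiv ℝ g) z := hg.fderiv_right (by exact le_rfl)
  exact h.differentiableAt (by simp)

/-- The Hessian in a direction along which the function is a quartic polynomial. -/
theorem fderiv_fderiv_apply_of_line {Z : Type*} [NormedAddCommGroup Z] [NormedSpace ℝ Z]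
    {g : Z → ℝ} {z h : Z} (hg : ContDiffAt ℝ (⊤ : ℕ∞) g z) {c₀ c₁ c₂ c₃ c₄ : ℝ}
    (hline : ∀ t : ℝ, g (z + t • h) = c₀ + c₁ * t + c₂ * t ^ 2 + c₃ * t ^ 3 + c₄ * t ^ 4) :
    fderiv ℝ (fderiv ℝ g) z h h = 2 * c₂ := by
  have hcont : ContinuousAt (fun t : ℝ => z + t • h) 0 := by fun_prop
  have hl : ∀ t : ℝ, HasDerivAt (fun t : ℝ => z + t • h) h t := fun t => by
    simpa using ((hasDerivAt_id t).smul_const h).const_add z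
  have hg1 : ∀ᶠ x in 𝓝 z, DifferentiableAt ℝ g x := by
    have := (hg.of_le (m := 1) (by exact_mod_cast le_top)).eventually (by simp)
    exact this.mono fun x hx => hx.differentiableAt (by simp)
  have hz : z + (0 : ℝ) • h = z := by simp
  have h1 : (fun t : ℝ => fderiv ℝ g (z + t • h) h) =ᶠ[𝓝 0]
      fun t => c₁ + 2 * c₂ * t + 3 * c₃ * t ^ 2 + 4 * c₄ * t ^ 3 := by
    have hev : ∀ᶠ x in 𝓝 (z + (0 : ℝ) • h), DifferentiableAt ℝ g x := by rwa [hz]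
    filter_upwards [hcont.eventually hev] with t ht
    have hA : HasDerivAt (fun t : ℝ => g (z + t • h)) (fderiv ℝ g (z + t • h) h) t :=
      ht.hasFDerivAt.comp_hasDerivAt t (hl t)
    have hB : HasDerivAt (fun t : ℝ => g (z + t • h))
        (c₁ + 2 * c₂ * t + 3 * c₃ * t ^ 2 + 4 * c₄ * t ^ 3) t := by
      rw [funext hline]
      have := ((((hasDerivAt_const t c₀).add ((hasDerivAt_id t).const_mul c₁)).add
        ((hasDerivAt_pow 2 t).const_mul c₂)).add ((hasDerivAt_pow 3 t).const_mul c₃)).add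
        ((hasDerivAt_pow 4 t).const_mul c₄)
      refine this.congr_deriv ?_
      simp; ring
    exact hA.unique hB
  have hdg : DifferentiableAt ℝ (fderiv ℝ g) z := hg.differentiableAt_fderiv_top
  have hA : HasDerivAt (fun t : ℝ => fderiv ℝ g (z + t • h) h)
      (fderiv ℝ (fderiv ℝ g) z h h) 0 := by
    have h2 : HasDerivAt (fun t : ℝ => fderiv ℝ g (z + t • h)) (fderiv ℝ (fderiv ℝ g) z h) 0 :=
      HasFDerivAt.comp_hasDerivAt_of_eq (0 : ℝ) hdg.hasFDerivAt (hl 0) hz.symm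
    exact (ContinuousLinearMap.apply ℝ ℝ h).hasFDerivAt.comp_hasDerivAt (0 : ℝ) h2
  have hB : HasDerivAt (fun t : ℝ => fderiv ℝ g (z + t • h) h) (2 * c₂) 0 := by
    refine HasDerivAt.congr_of_eventuallyEq ?_ h1
    have := (((hasDerivAt_const (0 : ℝ) c₁).add ((hasDerivAt_id (0 : ℝ)).const_mul (2 * c₂))).add
        ((hasDerivAt_pow 2 (0 : ℝ)).const_mul (3 * c₃))).add
        ((hasDerivAt_pow 3 (0 : ℝ)).const_mul (4 * c₄))
    refine this.congr_deriv ?_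
    simp
  exact hA.unique hB

/-- The Hessian of a composition with a continuous linear map. -/
theorem fderiv_fderiv_comp_clm {X Z : Type*} [NormedAddCommGroup X] [NormedSpace ℝ X]
    [NormedAddCommGroup Z] [NormedSpace ℝ Z] (T : X →L[ℝ] Z) {g : Z → ℝ} {x : X}
    (hg : ContDiffAt ℝ (⊤ : ℕ∞) g (T x)) (h k : X) :
    fderiv ℝ (fderiv ℝ fun x => g (T x)) x h k = fderiv ℝ (fderiv ℝ g) (T x) (T h) (T k) := by
  have hg1 : ∀ᶠ x in 𝓝 (T x), DifferentiableAt ℝ g x := by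
    have := (hg.of_le (m := 1) (by exact_mod_cast le_top)).eventually (by simp)
    exact this.mono fun x hx => hx.differentiableAt (by simp)
  have h1 : (fderiv ℝ fun x => g (T x)) =ᶠ[𝓝 x] fun x => (fderiv ℝ g (T x)).comp T := by
    filter_upwards [T.continuous.continuousAt.eventually hg1] with y hy
    exact (hy.hasFDerivAt.comp y T.hasFDerivAt).fderiv
  have hdg : DifferentiableAt ℝ (fderiv ℝ g) (T x) :=
    hg.differentiableAt_fderiv_top
  rw [h1.fderiv_eq]
  have h2 : HasFDerivAt (fun x => (fderiv ℝ g (T x)).comp T)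
      (((ContinuousLinearMap.compL ℝ X Z ℝ).flip T).comp
        ((fderiv ℝ (fderiv ℝ g) (T x)).comp T)) x :=
    ((ContinuousLinearMap.compL ℝ X Z ℝ).flip T).hasFDerivAt.comp x
      (hdg.hasFDerivAt.comp x T.hasFDerivAt)
  rw [h2.fderiv]
  rfl

/-! ### The Hartley basis -/

/-- The Hartley functions `cos (2πku) + sin (2πku)`, an orthonormal system of real functions. -/
def cas (k : ℤ) (u : ℝ) : ℝ := Real.cos (2 * Real.pi * k * u) + Real.sin (2 * Real.pi * k * u)

theorem abs_cas_le (k : ℤ) (u : ℝ) : |cas k u| ≤ 2 := by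
  have h1 := abs_add_le (Real.cos (2 * Real.pi * k * u)) (Real.sin (2 * Real.pi * k * u))
  have h2 := Real.abs_cos_le_one (2 * Real.pi * k * u)
  have h3 := Real.abs_sin_le_one (2 * Real.pi * k * u)
  unfold cas
  linarith

theorem continuous_cas (k : ℤ) : Continuous (cas k) := by
  unfold cas
  fun_prop

theorem cas_add (k : ℤ) (u h : ℝ) : cas k (u + h) =
    Real.cos (2 * Real.pi * k * h) * cas k u + Real.sin (2 * Real.pi * k * h) * cas (-k) u := by
  have : 2 * Real.pi * ((-k : ℤ) : ℝ) * u = -(2 * Real.pi * k * u) := by push_cast; ring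
  simp only [cas]
  rw [this, Real.cos_neg, Real.sin_neg, mul_add, Real.cos_add, Real.sin_add]
  ring

theorem cas_periodic (k : ℤ) : Function.Periodic (cas k) 1 := by
  intro u
  have h : 2 * Real.pi * (k : ℝ) * 1 = k * (2 * Real.pi) := by ring
  rw [cas_add, h]
  have h1 : Real.cos (k * (2 * Real.pi)) = 1 := Real.cos_int_mul_two_pi k
  have h2 : Real.sin (k * (2 * Real.pi)) = 0 := by
    have := Real.sin_int_mul_pi (k * 2)
    push_cast at this
    rw [← this]; ring_nf
  rw [h1, h2]; ring

theorem hasDerivAt_cas (k : ℤ) (u : ℝ) :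
    HasDerivAt (cas k) (2 * Real.pi * k * cas (-k) u) u := by
  have hl : HasDerivAt (fun u : ℝ => 2 * Real.pi * k * u) (2 * Real.pi * k) u := by
    simpa using (hasDerivAt_id u).const_mul (2 * Real.pi * k)
  have := hl.cos.add hl.sin
  refine this.congr_deriv ?_
  have : 2 * Real.pi * ((-k : ℤ) : ℝ) * u = -(2 * Real.pi * k * u) := by push_cast; ring
  simp only [cas]
  rw [this, Real.cos_neg, Real.sin_neg]
  ring

theorem integral_cos_two_pi_int (m : ℤ) :
    ∫ u in (0:ℝ)..1, Real.cos (2 * Real.pi * m * u) = if m = 0 then 1 else 0 := by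
  split_ifs with h
  · simp [h]
  · have hm : 2 * Real.pi * (m : ℝ) ≠ 0 := by
      have : (m : ℝ) ≠ 0 := by exact_mod_cast h
      positivity
    rw [intervalIntegral.integral_comp_mul_left (fun x => Real.cos x) hm]
    have : Real.sin (2 * Real.pi * m) = 0 := by
      have := Real.sin_int_mul_pi (m * 2)
      push_cast at this
      rw [← this]; ring_nf
    simp [this]

theorem integral_sin_two_pi_int (m : ℤ) :
    ∫ u in (0:ℝ)..1, Real.sin (2 * Real.pi * m * u) = 0 := by
  by_cases h : m = 0
  · simp [h]
  · have hm : 2 * Real.pi * (m : ℝ) ≠ 0 := by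
      have : (m : ℝ) ≠ 0 := by exact_mod_cast h
      positivity
    rw [intervalIntegral.integral_comp_mul_left (fun x => Real.sin x) hm]
    have : Real.cos (2 * Real.pi * m) = 1 := by
      rw [← Real.cos_int_mul_two_pi m]; ring_nf
    simp [this]

theorem integral_cas_mul_cas (k j : ℤ) :
    ∫ u in (0:ℝ)..1, cas k u * cas j u = if k = j then 1 else 0 := by
  have h : ∀ u : ℝ, cas k u * cas j u =
      Real.cos (2 * Real.pi * ((k - j : ℤ) : ℝ) * u)
        + Real.sin (2 * Real.pi * ((k + j : ℤ) : ℝ) * u) := by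
    intro u
    have h1 : 2 * Real.pi * ((k - j : ℤ) : ℝ) * u
        = 2 * Real.pi * k * u - 2 * Real.pi * j * u := by push_cast; ring
    have h2 : 2 * Real.pi * ((k + j : ℤ) : ℝ) * u
        = 2 * Real.pi * k * u + 2 * Real.pi * j * u := by push_cast; ring
    rw [h1, h2, Real.cos_sub, Real.sin_add]
    simp only [cas]; ring
  simp_rw [h]
  rw [intervalIntegral.integral_add (Continuous.intervalIntegrable (by fun_prop) _ _)
    (Continuous.intervalIntegrable (by fun_prop) _ _), integral_cos_two_pi_int,
    integral_sin_two_pi_int, add_zero]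
  simp [sub_eq_zero]

section Series

variable {V : Type*} [NormedAddCommGroup V] [InnerProductSpace ℝ V]

theorem integral_norm_sq_sum_cas (F : Finset ℤ) (b : ℤ → V) :
    ∫ u in (0:ℝ)..1, ‖∑ k ∈ F, cas k u • b k‖ ^ 2 = ∑ k ∈ F, ‖b k‖ ^ 2 := by
  have h : ∀ u : ℝ, ‖∑ k ∈ F, cas k u • b k‖ ^ 2
      = ∑ k ∈ F, ∑ j ∈ F, (cas k u * cas j u) * inner ℝ (b k) (b j) := by
    intro u
    rw [← real_inner_self_eq_norm_sq, sum_inner]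
    refine Finset.sum_congr rfl fun k _ => ?_
    rw [inner_sum]
    refine Finset.sum_congr rfl fun j _ => ?_
    rw [real_inner_smul_left, real_inner_smul_right]; ring
  have hc := continuous_cas
  simp_rw [h]
  rw [intervalIntegral.integral_finsetSum fun k _ => Continuous.intervalIntegrable (by fun_prop) _ _]
  refine Finset.sum_congr rfl fun k hk => ?_
  rw [intervalIntegral.integral_finsetSum fun k _ => Continuous.intervalIntegrable (by fun_prop) _ _]
  simp_rw [intervalIntegral.integral_mul_const, integral_cas_mul_cas]
  simp [hk]

theorem norm_cas_smul_le (k : ℤ) (u : ℝ) (x : V) : ‖cas k u • x‖ ≤ 2 * ‖x‖ := by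
  rw [norm_smul]
  exact mul_le_mul_of_nonneg_right (abs_cas_le k u) (norm_nonneg _)

/-- Parseval's identity for absolutely convergent Hartley series. -/
theorem integral_norm_sq_tsum_cas [CompleteSpace V] {b : ℤ → V} (hb : Summable fun k => ‖b k‖) :
    ∫ u in (0:ℝ)..1, ‖∑' k, cas k u • b k‖ ^ 2 = ∑' k, ‖b k‖ ^ 2 := by
  have hs : ∀ u, Summable fun k => cas k u • b k := fun u =>
    Summable.of_norm_bounded (hb.mul_left 2) fun k => norm_cas_smul_le k u _
  have hsq : Summable fun k => ‖b k‖ ^ 2 := by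
    refine Summable.of_nonneg_of_le (fun k => by positivity) (fun k => ?_)
      (hb.mul_left (∑' k, ‖b k‖))
    rw [pow_two]
    exact mul_le_mul_of_nonneg_right (hb.le_tsum k fun j _ => norm_nonneg _) (norm_nonneg _)
  have hc := continuous_cas
  have hlim : Tendsto (fun F : Finset ℤ => ∫ u in (0:ℝ)..1, ‖∑ k ∈ F, cas k u • b k‖ ^ 2) atTop
      (𝓝 (∫ u in (0:ℝ)..1, ‖∑' k, cas k u • b k‖ ^ 2)) := by
    refine intervalIntegral.tendsto_integral_filter_of_dominated_convergence
      (fun _ => (∑' k, 2 * ‖b k‖) ^ 2) ?_ ?_ ?_ ?_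
    · exact Eventually.of_forall fun F => Continuous.aestronglyMeasurable (by fun_prop)
    · refine Eventually.of_forall fun F => Eventually.of_forall fun u _ => ?_
      rw [norm_pow, norm_norm]
      refine pow_le_pow_left₀ (norm_nonneg _) ?_ 2
      refine (norm_sum_le _ _).trans ((Finset.sum_le_sum fun k _ => norm_cas_smul_le k u _).trans ?_)
      exact (hb.mul_left 2).sum_le_tsum F fun k _ => by positivity
    · simp
    · exact Eventually.of_forall fun u _ => ((hs u).hasSum.norm.pow 2)
  refine tendsto_nhds_unique hlim ?_
  simp_rw [integral_norm_sq_sum_cas]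
  exact hsq.hasSum

end Series

/-! ### Square summable coefficients -/

/-- Square summable families of coefficients in `ℝⁿ`. -/
abbrev Coef (n : ℕ) := lp (fun _ : ℤ => EuclideanSpace ℝ (Fin n)) 2

theorem Coef.hasSum_norm_sq {n : ℕ} (a : Coef n) : HasSum (fun k => ‖a k‖ ^ 2) (‖a‖ ^ 2) := by
  have := lp.hasSum_norm (p := 2) (by norm_num) a
  simpa using this

theorem Coef.summable_mul_norm {n : ℕ} {c : ℤ → ℝ} (hc : Summable fun k => c k ^ 2) (a : Coef n) :
    Summable (fun k => |c k| * ‖a k‖) ∧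
      ∑' k, |c k| * ‖a k‖ ≤ √(∑' k, c k ^ 2) * ‖a‖ := by
  have h := Real.summable_and_inner_le_Lp_mul_Lq_tsum_of_nonneg (p := 2) (q := 2)
    (f := fun k => |c k|) (g := fun k => ‖a k‖) Real.HolderConjugate.two_two
    (fun _ => abs_nonneg _) (fun _ => norm_nonneg _)
    (by simpa using hc) (by simpa using (Coef.hasSum_norm_sq a).summable)
  refine ⟨h.1, h.2.trans (le_of_eq ?_)⟩
  have h1 : (∑' k, ‖a k‖ ^ (2:ℝ)) = ‖a‖ ^ 2 := by
    simpa using (Coef.hasSum_norm_sq a).tsum_eq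
  rw [h1, ← Real.sqrt_eq_rpow, ← Real.sqrt_eq_rpow, Real.sqrt_sq (norm_nonneg _)]
  simp

/-- The function-valued linear map `a ↦ ∑ e_k a_k` for coefficient functions
dominated by a square summable sequence. -/
def seriesCLM {n : ℕ} (e : ℤ → ℝ → ℝ) (c : ℤ → ℝ) (he : ∀ k, Continuous (e k))
    (hec : ∀ k u, |e k u| ≤ |c k|) (hc : Summable fun k => c k ^ 2) :
    Coef n →L[ℝ] (ℝ →ᵇ EuclideanSpace ℝ (Fin n)) :=
  have hle : ∀ (a : Coef n) k u, ‖e k u • a k‖ ≤ |c k| * ‖a k‖ := fun a k u => by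
    rw [norm_smul]
    exact mul_le_mul_of_nonneg_right (hec k u) (norm_nonneg _)
  have hs : ∀ (a : Coef n) u, Summable fun k => e k u • a k := fun a u =>
    Summable.of_norm_bounded (Coef.summable_mul_norm hc a).1 fun k => hle a k u
  LinearMap.mkContinuous
    { toFun := fun a => BoundedContinuousFunction.ofNormedAddCommGroup
        (fun u => ∑' k, e k u • a k)
        (continuous_tsum (fun k => (he k).smul continuous_const)
          (Coef.summable_mul_norm hc a).1 fun k u => hle a k u)
        (∑' k, |c k| * ‖a k‖)
        (fun u => tsum_of_norm_bounded (Coef.summable_mul_norm hc a).1.hasSum fun k => hle a k u)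
      map_add' := fun a b => by
        ext1 u
        simp only [BoundedContinuousFunction.coe_ofNormedAddCommGroup,
          BoundedContinuousFunction.coe_add, Pi.add_apply, lp.coeFn_add, smul_add]
        exact (hs a u).tsum_add (hs b u)
      map_smul' := fun r a => by
        ext1 u
        simp only [BoundedContinuousFunction.coe_ofNormedAddCommGroup,
          BoundedContinuousFunction.coe_smul, Pi.smul_apply, lp.coeFn_smul, RingHom.id_apply]
        rw [← tsum_const_smul'' r]
        exact tsum_congr fun k => smul_comm _ _ _ }
    (√(∑' k, c k ^ 2)) (fun a =>
      (BoundedContinuousFunction.norm_ofNormedAddCommGroup_le _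
        (tsum_nonneg fun k => by positivity)
        (fun u => tsum_of_norm_bounded (Coef.summable_mul_norm hc a).1.hasSum fun k =>
          hle a k u)).trans (Coef.summable_mul_norm hc a).2)

theorem seriesCLM_apply {n : ℕ} {e : ℤ → ℝ → ℝ} {c : ℤ → ℝ} (he : ∀ k, Continuous (e k))
    (hec : ∀ k u, |e k u| ≤ |c k|) (hc : Summable fun k => c k ^ 2) (a : Coef n) (u : ℝ) :
    seriesCLM e c he hec hc a u = ∑' k, e k u • a k := rfl

section Rotation

variable {V : Type*} [NormedAddCommGroup V] [InnerProductSpace ℝ V]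

theorem hasSum_norm_sq_pair {b : ℤ → V} {α β : ℤ → ℝ} (hα : ∀ k, α (-k) = α k)
    (hβ : ∀ k, β (-k) = -β k) (hs : Summable fun k => (α k ^ 2 + β k ^ 2) * ‖b k‖ ^ 2) :
    HasSum (fun k => ‖α k • b k - β k • b (-k)‖ ^ 2)
      (∑' k, (α k ^ 2 + β k ^ 2) * ‖b k‖ ^ 2) := by
  have key : ∀ k, ‖α k • b k - β k • b (-k)‖ ^ 2 + ‖α (-k) • b (-k) - β (-k) • b (- -k)‖ ^ 2
      = (α k ^ 2 + β k ^ 2) * ‖b k‖ ^ 2 + (α (-k) ^ 2 + β (-k) ^ 2) * ‖b (-k)‖ ^ 2 := by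
    intro k
    rw [neg_neg, hα, hβ, norm_sub_sq_real, norm_sub_sq_real]
    simp only [real_inner_smul_left, real_inner_smul_right, norm_smul, mul_pow, Real.norm_eq_abs,
      sq_abs, norm_neg, neg_smul, inner_neg_right]
    rw [real_inner_comm (b k) (b (-k))]
    ring
  have hneg : Summable fun k : ℤ => (α (-k) ^ 2 + β (-k) ^ 2) * ‖b (-k)‖ ^ 2 :=
    hs.comp_injective neg_injective
  have hf : Summable fun k => ‖α k • b k - β k • b (-k)‖ ^ 2 := by
    refine Summable.of_nonneg_of_le (fun k => by positivity) (fun k => ?_) (hs.add hneg)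
    rw [← key]
    exact le_add_of_nonneg_right (by positivity)
  have hfneg : Summable fun k : ℤ => ‖α (-k) • b (-k) - β (-k) • b (- -k)‖ ^ 2 :=
    hf.comp_injective neg_injective
  have e1 := hf.tsum_add hfneg
  have e2 := hs.tsum_add hneg
  have n1 : ∑' k : ℤ, ‖α (-k) • b (-k) - β (-k) • b (- -k)‖ ^ 2
      = ∑' k, ‖α k • b k - β k • b (-k)‖ ^ 2 :=
    (Equiv.neg ℤ).tsum_eq fun k => ‖α k • b k - β k • b (-k)‖ ^ 2
  have n2 : ∑' k : ℤ, (α (-k) ^ 2 + β (-k) ^ 2) * ‖b (-k)‖ ^ 2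
      = ∑' k, (α k ^ 2 + β k ^ 2) * ‖b k‖ ^ 2 :=
    (Equiv.neg ℤ).tsum_eq fun k => (α k ^ 2 + β k ^ 2) * ‖b k‖ ^ 2
  simp_rw [key] at e1
  have : ∑' k, (α k ^ 2 + β k ^ 2) * ‖b k‖ ^ 2 = ∑' k, ‖α k • b k - β k • b (-k)‖ ^ 2 := by
    linarith
  rw [this]
  exact hf.hasSum

theorem summable_pair {b : ℤ → V} (hb : Summable fun k => ‖b k‖) {α β : ℤ → ℝ} {C : ℝ}
    (hα : ∀ k, |α k| ≤ C) (hβ : ∀ k, |β k| ≤ C) :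
    Summable fun k => ‖α k • b k - β k • b (-k)‖ := by
  have hb' : Summable fun k => ‖b (-k)‖ := hb.comp_injective neg_injective
  refine Summable.of_nonneg_of_le (fun _ => norm_nonneg _) (fun k => ?_)
    ((hb.mul_left C).add (hb'.mul_left C))
  refine (norm_sub_le _ _).trans ?_
  rw [norm_smul, norm_smul]
  exact add_le_add (mul_le_mul_of_nonneg_right (hα k) (norm_nonneg _))
    (mul_le_mul_of_nonneg_right (hβ k) (norm_nonneg _))

theorem summable_norm_sq_of_summable_norm {V : Type*} [NormedAddCommGroup V] {b : ℤ → V} (hb : Summable fun k => ‖b k‖) :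
    Summable fun k => ‖b k‖ ^ 2 := by
  refine Summable.of_nonneg_of_le (fun k => by positivity) (fun k => ?_)
    (hb.mul_left (∑' k, ‖b k‖))
  rw [pow_two]
  exact mul_le_mul_of_nonneg_right (hb.le_tsum k fun j _ => norm_nonneg _) (norm_nonneg _)

variable [CompleteSpace V]

theorem summable_cas_smul {b : ℤ → V} (hb : Summable fun k => ‖b k‖) (u : ℝ) :
    Summable fun k => cas k u • b k :=
  Summable.of_norm_bounded (hb.mul_left 2) fun k => norm_cas_smul_le k u _

theorem tsum_cas_add {b : ℤ → V} (hb : Summable fun k => ‖b k‖) (u h : ℝ) :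
    ∑' k, cas k (u + h) • b k = ∑' k : ℤ, cas k u •
      (Real.cos (2 * Real.pi * k * h) • b k - Real.sin (2 * Real.pi * k * h) • b (-k)) := by
  have h1 : Summable fun k : ℤ => cas k u • (Real.cos (2 * Real.pi * k * h) • b k) := by
    refine summable_cas_smul (Summable.of_nonneg_of_le (fun _ => norm_nonneg _) (fun k => ?_) hb) u
    rw [norm_smul]
    exact mul_le_of_le_one_left (norm_nonneg _) (Real.abs_cos_le_one _)
  have hb' : Summable fun k => ‖b (-k)‖ := hb.comp_injective neg_injective
  have h2 : Summable fun k : ℤ => cas k u • (Real.sin (2 * Real.pi * k * h) • b (-k)) := by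
    refine summable_cas_smul (Summable.of_nonneg_of_le (fun _ => norm_nonneg _) (fun k => ?_) hb') u
    rw [norm_smul]
    exact mul_le_of_le_one_left (norm_nonneg _) (Real.abs_sin_le_one _)
  have h3 : Summable fun k : ℤ => (Real.sin (2 * Real.pi * k * h) * cas (-k) u) • b k := by
    have := h2.neg.comp_injective (neg_injective (G := ℤ))
    refine this.congr fun k => ?_
    simp only [Function.comp_apply, neg_neg, smul_smul, Int.cast_neg, mul_neg, neg_mul,
      Real.sin_neg, neg_smul]
    rw [mul_comm]
  simp_rw [smul_sub]
  rw [h1.tsum_sub h2]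
  have e2 : ∑' k : ℤ, cas k u • (Real.sin (2 * Real.pi * k * h) • b (-k))
      = - ∑' k : ℤ, (Real.sin (2 * Real.pi * k * h) * cas (-k) u) • b k := by
    rw [← tsum_neg, ← (Equiv.neg ℤ).tsum_eq]
    refine tsum_congr fun k => ?_
    simp only [Equiv.neg_apply, neg_neg, Int.cast_neg, mul_neg, neg_mul,
      Real.sin_neg, neg_smul, smul_neg, smul_smul]
    rw [mul_comm (cas (-k) u)]
  rw [e2, sub_neg_eq_add, ← h1.tsum_add h3]
  refine tsum_congr fun k => ?_
  rw [cas_add, add_smul, smul_smul]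
  rw [mul_comm (cas k u)]

/-- Parseval's identity for a real Fourier multiplier applied to a Hartley series. -/
theorem integral_norm_sq_tsum_cas_pair {b : ℤ → V} (hb : Summable fun k => ‖b k‖) {α β : ℤ → ℝ}
    {C : ℝ} (hα : ∀ k, |α k| ≤ C) (hβ : ∀ k, |β k| ≤ C) (hα' : ∀ k, α (-k) = α k)
    (hβ' : ∀ k, β (-k) = -β k) :
    ∫ u in (0:ℝ)..1, ‖∑' k, cas k u • (α k • b k - β k • b (-k))‖ ^ 2
      = ∑' k, (α k ^ 2 + β k ^ 2) * ‖b k‖ ^ 2 := by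
  rw [integral_norm_sq_tsum_cas (summable_pair hb hα hβ)]
  refine (hasSum_norm_sq_pair hα' hβ' ?_).tsum_eq
  refine Summable.of_nonneg_of_le (fun k => by positivity) (fun k => ?_)
    ((summable_norm_sq_of_summable_norm hb).mul_left (C ^ 2 + C ^ 2))
  have h1 := sq_le_sq' (neg_le_of_abs_le (hα k)) (le_of_abs_le (hα k))
  have h2 := sq_le_sq' (neg_le_of_abs_le (hβ k)) (le_of_abs_le (hβ k))
  gcongr

end Rotation

/-! ### Weighted Hartley series -/

/-- The Sobolev weight `(1 + k²)^(-s/2)`. -/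
def wt (s : ℝ) (k : ℤ) : ℝ := (1 + (k:ℝ) ^ 2) ^ (-s / 2)

theorem wt_pos (s : ℝ) (k : ℤ) : 0 < wt s k := by unfold wt; positivity

theorem wt_sq (s : ℝ) (k : ℤ) : wt s k ^ 2 = (1 + (k:ℝ) ^ 2) ^ (-s) := by
  rw [wt, ← Real.rpow_mul_natCast (by positivity)]
  congr 1; push_cast; ring

theorem wt_neg (s : ℝ) (k : ℤ) : wt s (-k) = wt s k := by simp [wt]

theorem summable_one_add_sq_rpow {r : ℝ} (hr : 1 / 2 < r) :
    Summable fun k : ℤ => (1 + (k:ℝ) ^ 2) ^ (-r) := by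
  have h := Real.summable_abs_int_rpow (b := 2 * r) (by linarith)
  refine Summable.of_norm_bounded_eventually h ?_
  filter_upwards [(Set.finite_singleton (0:ℤ)).compl_mem_cofinite] with k hk
  have hk0 : (k : ℝ) ≠ 0 := by exact_mod_cast hk
  have hk1 : 0 < |(k:ℝ)| := abs_pos.2 hk0
  rw [Real.norm_of_nonneg (by positivity)]
  have : |(k:ℝ)| ^ (-(2 * r)) = ((k:ℝ) ^ 2) ^ (-r) := by
    rw [← sq_abs, ← Real.rpow_natCast, ← Real.rpow_mul hk1.le]
    congr 1; push_cast; ring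
  rw [this]
  exact Real.rpow_le_rpow_of_nonpos (by positivity) (by linarith) (by linarith)

theorem summable_velWeight {s : ℝ} (hs : 3 / 2 < s) :
    Summable fun k : ℤ => (4 * Real.pi * k * wt s k) ^ 2 := by
  refine Summable.of_nonneg_of_le (fun _ => by positivity) (fun k => ?_)
    ((summable_one_add_sq_rpow (r := s - 1) (by linarith)).mul_left ((4 * Real.pi) ^ 2))
  have h : (1 + (k:ℝ) ^ 2) ^ (-(s - 1)) = (1 + (k:ℝ) ^ 2) * (1 + (k:ℝ) ^ 2) ^ (-s) := by
    rw [show -(s - 1) = 1 + -s by ring, Real.rpow_add (by positivity), Real.rpow_one]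
  rw [h, mul_pow, mul_pow, wt_sq, mul_assoc]
  have : 0 ≤ (1 + (k:ℝ) ^ 2) ^ (-s) := by positivity
  gcongr
  linarith

theorem summable_posWeight {s : ℝ} (hs : 3 / 2 < s) :
    Summable fun k : ℤ => (2 * wt s k) ^ 2 := by
  simp_rw [mul_pow, wt_sq]
  exact (summable_one_add_sq_rpow (by linarith)).mul_left _

/-- The curve with (weighted) Hartley coefficients `a`. -/
def pos {n : ℕ} {s : ℝ} (hs : 3 / 2 < s) : Coef n →L[ℝ] (ℝ →ᵇ EuclideanSpace ℝ (Fin n)) :=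
  seriesCLM (fun k u => wt s k * cas k u) (fun k => 2 * wt s k)
    (fun k => continuous_const.mul (continuous_cas k))
    (fun k u => by
      rw [abs_mul, abs_mul, mul_comm, abs_two]
      exact mul_le_mul_of_nonneg_right (abs_cas_le k u) (abs_nonneg _))
    (summable_posWeight hs)

/-- The derivative of the curve with (weighted) Hartley coefficients `a`. -/
def vel {n : ℕ} {s : ℝ} (hs : 3 / 2 < s) : Coef n →L[ℝ] (ℝ →ᵇ EuclideanSpace ℝ (Fin n)) :=
  seriesCLM (fun k u => 2 * Real.pi * k * wt s k * cas (-k) u) (fun k => 4 * Real.pi * k * wt s k)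
    (fun k => continuous_const.mul (continuous_cas _))
    (fun k u => by
      have h := mul_le_mul_of_nonneg_left (abs_cas_le (-k) u)
        (abs_nonneg (2 * Real.pi * k * wt s k))
      have h4 : |4 * Real.pi * k * wt s k| = |2 * Real.pi * k * wt s k| * 2 := by
        rw [show 4 * Real.pi * k * wt s k = (2 * Real.pi * k * wt s k) * 2 by ring, abs_mul,
          abs_two]
      rw [abs_mul, h4]
      exact h)
    (summable_velWeight hs)

section

variable {n : ℕ} {s : ℝ} (hs : 3 / 2 < s) (a : Coef n)

theorem summable_posCoef {n : ℕ} {s : ℝ} (hs : 3 / 2 < s) (a : Coef n) :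
     Summable fun k => ‖wt s k • a k‖ := by
  refine Summable.of_nonneg_of_le (fun _ => norm_nonneg _) (fun k => ?_)
    (Coef.summable_mul_norm (summable_posWeight hs) a).1
  rw [norm_smul, Real.norm_eq_abs, abs_mul, abs_two]
  have : 0 ≤ |wt s k| * ‖a k‖ := by positivity
  linarith

/-- The coefficients of the derivative with respect to the Hartley basis. -/
def velCoef (s : ℝ) (a : Coef n) (k : ℤ) : EuclideanSpace ℝ (Fin n) :=
  (-(2 * Real.pi * k * wt s k)) • a (-k)

theorem summable_velCoef {n : ℕ} {s : ℝ} (hs : 3 / 2 < s) (a : Coef n) :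
     Summable fun k => ‖velCoef s a k‖ := by
  have h := (Coef.summable_mul_norm (summable_velWeight hs) a).1.comp_injective
    (neg_injective (G := ℤ))
  refine Summable.of_nonneg_of_le (fun _ => norm_nonneg _) (fun k => ?_) h
  simp only [velCoef, norm_smul, Real.norm_eq_abs, Function.comp_apply, Int.cast_neg, wt_neg,
    abs_mul, abs_neg, abs_two]
  rw [show |(4:ℝ)| = 4 by norm_num]
  gcongr
  norm_num

theorem pos_apply (u : ℝ) : pos hs a u = ∑' k, cas k u • (wt s k • a k) := by
  rw [pos, seriesCLM_apply]
  refine tsum_congr fun k => ?_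
  rw [smul_smul, mul_comm]

theorem vel_apply (u : ℝ) : vel hs a u = ∑' k, cas k u • velCoef s a k := by
  rw [vel, seriesCLM_apply, ← (Equiv.neg ℤ).tsum_eq]
  refine tsum_congr fun k => ?_
  simp only [Equiv.neg_apply, neg_neg, velCoef, smul_smul, wt_neg, Int.cast_neg]
  congr 1; ring

theorem hasDerivAt_pos (u : ℝ) : HasDerivAt (pos hs a) (vel hs a u) u := by
  have h := hasDerivAt_tsum (𝕜 := ℝ) (g := fun (k : ℤ) u => cas k u • (wt s k • a k))
    (g' := fun (k : ℤ) u => (2 * Real.pi * k * cas (-k) u) • (wt s k • a k))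
    (u := fun k => |4 * Real.pi * k * wt s k| * ‖a k‖)
    (Coef.summable_mul_norm (summable_velWeight hs) a).1
    (fun k u => (hasDerivAt_cas k u).smul_const _) (fun k u => ?_)
    (summable_cas_smul (summable_posCoef hs a) 0) u
  · have e : ⇑(pos hs a) = fun u => ∑' k, cas k u • (wt s k • a k) := funext (pos_apply hs a)
    rw [e]
    refine h.congr_deriv ?_
    rw [vel, seriesCLM_apply]
    refine tsum_congr fun k => ?_
    rw [smul_smul]; congr 1; ring
  · simp only [norm_smul, Real.norm_eq_abs, abs_mul, abs_two]
    rw [show |(4:ℝ)| = 2 * 2 by norm_num]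
    have := abs_cas_le (-k) u
    calc 2 * |Real.pi| * |(k:ℝ)| * |cas (-k) u| * (|wt s k| * ‖a k‖)
        ≤ 2 * |Real.pi| * |(k:ℝ)| * 2 * (|wt s k| * ‖a k‖) := by gcongr
      _ = _ := by ring

theorem pos_periodic : Function.Periodic (pos hs a) 1 := fun u => by
  simp_rw [pos_apply, cas_periodic _ u]

theorem vel_periodic : Function.Periodic (vel hs a) 1 := fun u => by
  simp_rw [vel_apply, cas_periodic _ u]

theorem integral_norm_sq_vel_sub (h : ℝ) :
    ∫ u in (0:ℝ)..1, ‖vel hs a (u + h) - vel hs a u‖ ^ 2 = ∑' k : ℤ,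
      (2 - 2 * Real.cos (2 * Real.pi * k * h)) * ((2 * Real.pi * k * wt s k) ^ 2 * ‖a k‖ ^ 2) := by
  have hb := summable_velCoef hs a
  have e : ∀ u, vel hs a (u + h) - vel hs a u = ∑' k : ℤ, cas k u •
      ((Real.cos (2 * Real.pi * k * h) - 1) • velCoef s a k
        - Real.sin (2 * Real.pi * k * h) • velCoef s a (-k)) := by
    intro u
    rw [vel_apply, vel_apply, tsum_cas_add hb, ← Summable.tsum_sub]
    · refine tsum_congr fun k => ?_
      rw [← smul_sub, sub_smul, one_smul]
      congr 1; abel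
    · exact summable_cas_smul (summable_pair hb (fun k => Real.abs_cos_le_one _)
        (fun k => Real.abs_sin_le_one _)) u
    · exact summable_cas_smul hb u
  simp_rw [e]
  rw [integral_norm_sq_tsum_cas_pair hb (C := 2)
    (α := fun k : ℤ => Real.cos (2 * Real.pi * k * h) - 1)
    (β := fun k : ℤ => Real.sin (2 * Real.pi * k * h))
    (fun k => by
      rw [abs_le]; constructor <;>
      linarith [Real.neg_one_le_cos (2 * Real.pi * k * h), Real.cos_le_one (2 * Real.pi * k * h)])
    (fun k => (Real.abs_sin_le_one _).trans one_le_two)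
    (fun k => by simp) (fun k => by simp), ← (Equiv.neg ℤ).tsum_eq]
  refine tsum_congr fun k => ?_
  simp only [Equiv.neg_apply, velCoef, neg_neg, norm_smul, Real.norm_eq_abs, mul_pow, sq_abs,
    Int.cast_neg, mul_neg, neg_mul, Real.cos_neg, Real.sin_neg, wt_neg, neg_sq]
  have := Real.sin_sq_add_cos_sq (2 * Real.pi * k * h)
  rw [show (Real.cos (2 * Real.pi * k * h) - 1) ^ 2 + Real.sin (2 * Real.pi * k * h) ^ 2
    = 2 - 2 * Real.cos (2 * Real.pi * k * h) by linarith]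

end

/-! ### The measure on configurations -/

/-- Pairs `(a, b)` of arc lengths adjacent to a point opposite to the longest arc of the circle. -/
def arcs : Set (ℝ × ℝ) := {z | 0 < z.1 ∧ 0 < z.2 ∧ 2 * z.1 + z.2 ≤ 1 ∧ z.1 + 2 * z.2 < 1}

/-- The singular weight of the energy density. -/
def dens (p : ℝ) (z : ℝ × ℝ) : ℝ := z.1 ^ (2 - p) * z.2 ^ (2 - p) * (z.1 + z.2) ^ (-p)

/-- The weighted measure on pairs of adjacent arc lengths. -/
def arcMeasure (p : ℝ) : Measure (ℝ × ℝ) :=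
  (volume.restrict arcs).withDensity fun z => ENNReal.ofReal (dens p z)

/-- The weighted measure on triples `(u, a, b)` representing the points `u - a, u, u + b`. -/
def confMeasure (p : ℝ) : Measure (ℝ × ℝ × ℝ) :=
  (volume.restrict (Ico (0:ℝ) 1)).prod (arcMeasure p)

theorem measurableSet_arcs : MeasurableSet arcs := by
  unfold arcs
  have h1 : MeasurableSet {z : ℝ × ℝ | 0 < z.1} := measurableSet_lt (by fun_prop) (by fun_prop)
  have h2 : MeasurableSet {z : ℝ × ℝ | 0 < z.2} := measurableSet_lt (by fun_prop) (by fun_prop)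
  have h3 : MeasurableSet {z : ℝ × ℝ | 2 * z.1 + z.2 ≤ 1} :=
    measurableSet_le (by fun_prop) (by fun_prop)
  have h4 : MeasurableSet {z : ℝ × ℝ | z.1 + 2 * z.2 < 1} :=
    measurableSet_lt (by fun_prop) (by fun_prop)
  exact h1.inter (h2.inter (h3.inter h4))

theorem measurable_dens (p : ℝ) : Measurable (dens p) := by
  unfold dens; fun_prop

instance (p : ℝ) : SigmaFinite (arcMeasure p) := by
  unfold arcMeasure
  infer_instance

instance (p : ℝ) : SigmaFinite (confMeasure p) := by
  unfold confMeasure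
  infer_instance

theorem ae_arcMeasure (p : ℝ) : ∀ᵐ z ∂arcMeasure p, z ∈ arcs :=
  (withDensity_absolutelyContinuous _ _).ae_le (ae_restrict_mem measurableSet_arcs)

theorem ae_confMeasure (p : ℝ) : ∀ᵐ z ∂confMeasure p, z.2 ∈ arcs :=
  Measure.quasiMeasurePreserving_snd.ae (ae_arcMeasure p)

theorem lintegral_arcMeasure (p : ℝ) {φ : ℝ × ℝ → ℝ≥0∞} (hφ : Measurable φ) :
    ∫⁻ z, φ z ∂arcMeasure p = ∫⁻ z in arcs, ENNReal.ofReal (dens p z) * φ z := by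
  rw [arcMeasure, lintegral_withDensity_eq_lintegral_mul _ (measurable_dens p).ennreal_ofReal hφ]
  rfl

theorem lintegral_Ioc_rpow {r c : ℝ} (hr : -1 < r) (hc : 0 ≤ c) :
    ∫⁻ x in Ioc 0 c, ENNReal.ofReal (x ^ r) = ENNReal.ofReal (c ^ (r + 1) / (r + 1)) := by
  have hi := (intervalIntegral.intervalIntegrable_rpow' (a := 0) (b := c) hr)
  rw [intervalIntegrable_iff_integrableOn_Ioc_of_le hc] at hi
  rw [← ofReal_integral_eq_lintegral_ofReal hi, ← intervalIntegral.integral_of_le hc,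
    integral_rpow (Or.inl hr), Real.zero_rpow (by linarith), sub_zero]
  filter_upwards [ae_restrict_mem measurableSet_Ioc] with x hx
  exact Real.rpow_nonneg hx.1.le _

theorem lintegral_Ioi_rpow {r c : ℝ} (hr : r < -1) (hc : 0 < c) :
    ∫⁻ x in Ioi c, ENNReal.ofReal (x ^ r) = ENNReal.ofReal (-c ^ (r + 1) / (r + 1)) := by
  have hi := integrableOn_Ioi_rpow_of_lt hr hc
  rw [← ofReal_integral_eq_lintegral_ofReal hi, integral_Ioi_rpow_of_lt hr hc]
  filter_upwards [ae_restrict_mem measurableSet_Ioi] with x hx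
  exact Real.rpow_nonneg (hc.trans hx).le _

theorem lintegral_Ioi_dens_le {p : ℝ} (hp2 : 2 < p) (hp3 : p < 3) {b : ℝ} (hb : 0 < b) :
    ∫⁻ a in Ioi (0:ℝ), ENNReal.ofReal (dens p (a, b)) ≤
      ENNReal.ofReal ((1 / (3 - p) + 1 / (2 * p - 3)) * b ^ (5 - 3 * p)) := by
  rw [← Ioc_union_Ioi_eq_Ioi hb.le, lintegral_union measurableSet_Ioi
    (Ioc_disjoint_Ioi le_rfl), add_mul, ENNReal.ofReal_add]
  rotate_left
  · have : 0 < 3 - p := by linarith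
    positivity
  · have : 0 < 2 * p - 3 := by linarith
    positivity
  refine add_le_add ?_ ?_
  · calc ∫⁻ a in Ioc 0 b, ENNReal.ofReal (dens p (a, b))
        ≤ ∫⁻ a in Ioc 0 b, ENNReal.ofReal (b ^ (2 - p) * b ^ (-p)) * ENNReal.ofReal (a ^ (2 - p)) := by
          refine setLIntegral_mono (by fun_prop) fun a ha => ?_
          rw [← ENNReal.ofReal_mul (by positivity)]
          refine ENNReal.ofReal_le_ofReal ?_
          have h1 : (a + b) ^ (-p) ≤ b ^ (-p) :=
            Real.rpow_le_rpow_of_nonpos hb (by linarith [ha.1]) (by linarith)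
          have h2 : 0 ≤ a ^ (2 - p) := Real.rpow_nonneg ha.1.le _
          have h3 : 0 ≤ b ^ (2 - p) := by positivity
          simp only [dens]
          calc _ ≤ a ^ (2 - p) * b ^ (2 - p) * b ^ (-p) := by gcongr
            _ = _ := by ring
      _ = _ := by
          rw [lintegral_const_mul _ (by fun_prop), lintegral_Ioc_rpow (by linarith) hb.le,
            ← ENNReal.ofReal_mul (by positivity)]
          congr 1
          have e : b ^ (5 - 3 * p) = b ^ (2 - p) * b ^ (-p) * b ^ (2 - p + 1) := by
            rw [← Real.rpow_add hb, ← Real.rpow_add hb]; congr 1; ring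
          rw [e, show 3 - p = 2 - p + 1 by ring]
          ring
  · calc ∫⁻ a in Ioi b, ENNReal.ofReal (dens p (a, b))
        ≤ ∫⁻ a in Ioi b, ENNReal.ofReal (b ^ (2 - p)) * ENNReal.ofReal (a ^ (2 - 2 * p)) := by
          refine setLIntegral_mono (by fun_prop) fun a ha => ?_
          have ha0 : 0 < a := hb.trans ha
          rw [← ENNReal.ofReal_mul (by positivity)]
          refine ENNReal.ofReal_le_ofReal ?_
          have h1 : (a + b) ^ (-p) ≤ a ^ (-p) :=
            Real.rpow_le_rpow_of_nonpos ha0 (by linarith) (by linarith)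
          simp only [dens]
          calc _ ≤ a ^ (2 - p) * b ^ (2 - p) * a ^ (-p) := by gcongr
            _ = _ := by
              rw [show 2 - 2 * p = (2 - p) + (-p) by ring, Real.rpow_add ha0]; ring
      _ = _ := by
          rw [lintegral_const_mul _ (by fun_prop), lintegral_Ioi_rpow (by linarith) hb,
            ← ENNReal.ofReal_mul (by positivity)]
          congr 1
          have e : b ^ (5 - 3 * p) = b ^ (2 - p) * b ^ (2 - 2 * p + 1) := by
            rw [← Real.rpow_add hb]; congr 1; ring
          rw [e, show 2 * p - 3 = -(2 - 2 * p + 1) by ring, div_neg]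
          ring

theorem dens_swap (p a b : ℝ) : dens p (a, b) = dens p (b, a) := by
  simp only [dens]
  rw [add_comm a b]; ring

theorem lintegral_arcMeasure_snd_le {p : ℝ} (hp2 : 2 < p) (hp3 : p < 3) {φ : ℝ → ℝ≥0∞}
    (hφ : Measurable φ) : ∫⁻ z, φ z.2 ∂arcMeasure p ≤
      ENNReal.ofReal (1 / (3 - p) + 1 / (2 * p - 3)) *
        ∫⁻ b in Ioi (0:ℝ), ENNReal.ofReal (b ^ (5 - 3 * p)) * φ b := by
  have hd := measurable_dens p
  have h1 : 0 < 3 - p := by linarith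
  have h2 : 0 < 2 * p - 3 := by linarith
  rw [lintegral_arcMeasure p (by fun_prop)]
  calc _ ≤ ∫⁻ z in Ioi (0:ℝ) ×ˢ Ioi (0:ℝ), ENNReal.ofReal (dens p z) * φ z.2 :=
        lintegral_mono_set fun z hz => ⟨hz.1, hz.2.1⟩
    _ = ∫⁻ b in Ioi (0:ℝ), ∫⁻ a in Ioi (0:ℝ), ENNReal.ofReal (dens p (a, b)) * φ b := by
        rw [Measure.volume_eq_prod, ← Measure.prod_restrict, lintegral_prod_symm _ (by fun_prop)]
    _ ≤ ∫⁻ b in Ioi (0:ℝ), ENNReal.ofReal (1 / (3 - p) + 1 / (2 * p - 3)) *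
          (ENNReal.ofReal (b ^ (5 - 3 * p)) * φ b) := by
        refine setLIntegral_mono (by fun_prop) fun b hb => ?_
        rw [lintegral_mul_const _ (by fun_prop), ← mul_assoc,
          ← ENNReal.ofReal_mul (by positivity)]
        gcongr
        exact lintegral_Ioi_dens_le hp2 hp3 hb
    _ = _ := lintegral_const_mul _ (by fun_prop)

theorem lintegral_arcMeasure_fst_le {p : ℝ} (hp2 : 2 < p) (hp3 : p < 3) {φ : ℝ → ℝ≥0∞}
    (hφ : Measurable φ) : ∫⁻ z, φ z.1 ∂arcMeasure p ≤
      ENNReal.ofReal (1 / (3 - p) + 1 / (2 * p - 3)) *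
        ∫⁻ b in Ioi (0:ℝ), ENNReal.ofReal (b ^ (5 - 3 * p)) * φ b := by
  have hd := measurable_dens p
  have h1 : 0 < 3 - p := by linarith
  have h2 : 0 < 2 * p - 3 := by linarith
  rw [lintegral_arcMeasure p (by fun_prop)]
  calc _ ≤ ∫⁻ z in Ioi (0:ℝ) ×ˢ Ioi (0:ℝ), ENNReal.ofReal (dens p z) * φ z.1 :=
        lintegral_mono_set fun z hz => ⟨hz.1, hz.2.1⟩
    _ = ∫⁻ a in Ioi (0:ℝ), ∫⁻ b in Ioi (0:ℝ), ENNReal.ofReal (dens p (a, b)) * φ a := by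
        rw [Measure.volume_eq_prod, ← Measure.prod_restrict, lintegral_prod _ (by fun_prop)]
    _ ≤ ∫⁻ b in Ioi (0:ℝ), ENNReal.ofReal (1 / (3 - p) + 1 / (2 * p - 3)) *
          (ENNReal.ofReal (b ^ (5 - 3 * p)) * φ b) := by
        refine setLIntegral_mono (by fun_prop) fun b hb => ?_
        rw [lintegral_mul_const _ (by fun_prop), ← mul_assoc,
          ← ENNReal.ofReal_mul (by positivity)]
        gcongr
        simp_rw [dens_swap p b]
        exact lintegral_Ioi_dens_le hp2 hp3 hb
    _ = _ := lintegral_const_mul _ (by fun_prop)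

theorem lintegral_rpow_mul_min_le {r : ℝ} (hr1 : -3 < r) (hr2 : r < -1) {κ : ℝ} (hκ : 0 < κ) :
    ∫⁻ b in Ioi (0:ℝ), ENNReal.ofReal (b ^ r) * ENNReal.ofReal (min 4 ((κ * b) ^ 2)) ≤
      ENNReal.ofReal ((1 / (r + 3) - 4 / (r + 1)) * κ ^ (-r - 1)) := by
  have hc : 0 < κ⁻¹ := by positivity
  have h3 : 0 < r + 3 := by linarith
  have h1 : 0 < -(r + 1) := by linarith
  rw [← Ioc_union_Ioi_eq_Ioi hc.le, lintegral_union measurableSet_Ioi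
    (Ioc_disjoint_Ioi le_rfl), sub_mul, sub_eq_add_neg, ← neg_mul, ← div_neg, ENNReal.ofReal_add
    (by positivity) (by positivity)]
  refine add_le_add ?_ ?_
  · calc _ ≤ ∫⁻ b in Ioc 0 κ⁻¹, ENNReal.ofReal (κ ^ 2) * ENNReal.ofReal (b ^ (r + 2)) := by
          refine setLIntegral_mono (by fun_prop) fun b hb => ?_
          have hb0 : 0 < b := hb.1
          rw [← ENNReal.ofReal_mul (by positivity), ← ENNReal.ofReal_mul (by positivity)]
          refine ENNReal.ofReal_le_ofReal ?_
          rw [Real.rpow_add hb0, Real.rpow_two]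
          calc b ^ r * min 4 ((κ * b) ^ 2) ≤ b ^ r * (κ * b) ^ 2 := by
                gcongr; exact min_le_right _ _
            _ = _ := by ring
      _ = _ := by
          rw [lintegral_const_mul _ (by fun_prop), lintegral_Ioc_rpow (by linarith) hc.le,
            ← ENNReal.ofReal_mul (by positivity)]
          congr 1
          rw [Real.inv_rpow hκ.le, ← Real.rpow_neg hκ.le, show r + 2 + 1 = r + 3 by ring,
            show -r - 1 = 2 + -(r + 3) by ring, Real.rpow_add hκ, Real.rpow_two]
          ring
  · calc _ ≤ ∫⁻ b in Ioi κ⁻¹, ENNReal.ofReal 4 * ENNReal.ofReal (b ^ r) := by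
          refine setLIntegral_mono (by fun_prop) fun b hb => ?_
          rw [mul_comm]
          gcongr
          exact min_le_left _ _
      _ = _ := by
          rw [lintegral_const_mul _ (by fun_prop), lintegral_Ioi_rpow hr2 hc,
            ← ENNReal.ofReal_mul (by positivity)]
          congr 1
          rw [Real.inv_rpow hκ.le, ← Real.rpow_neg hκ.le, show -r - 1 = -(r + 1) by ring, div_neg]
          ring

/-! ### Oscillation of the derivative -/

section

variable {V : Type*} [NormedAddCommGroup V]

/-- The mean oscillation of `f` on the segment from `u` to `u + v`. -/
def osc (f : ℝ → V) (u v : ℝ) : ℝ := ∫ t in (0:ℝ)..1, ‖f (u + t * v) - f u‖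

theorem continuous_osc {f : ℝ → V} (hf : Continuous f) :
    Continuous fun z : ℝ × ℝ => osc f z.1 z.2 := by
  unfold osc
  refine intervalIntegral.continuous_parametric_intervalIntegral_of_continuous' ?_ 0 1
  unfold Function.uncurry
  fun_prop

theorem osc_nonneg (f : ℝ → V) (u v : ℝ) : 0 ≤ osc f u v :=
  intervalIntegral.integral_nonneg zero_le_one fun _ _ => norm_nonneg _

theorem sq_integral_le_integral_sq {g : ℝ → ℝ} (hg : Continuous g) :
    (∫ t in (0:ℝ)..1, g t) ^ 2 ≤ ∫ t in (0:ℝ)..1, g t ^ 2 := by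
  set m := ∫ t in (0:ℝ)..1, g t with hm
  have h : 0 ≤ ∫ t in (0:ℝ)..1, (g t - m) ^ 2 :=
    intervalIntegral.integral_nonneg zero_le_one fun _ _ => sq_nonneg _
  have e : ∀ t, (g t - m) ^ 2 = g t ^ 2 - 2 * m * g t + m ^ 2 := fun t => by ring
  simp_rw [e] at h
  rw [intervalIntegral.integral_add (Continuous.intervalIntegrable (by fun_prop) _ _)
    (Continuous.intervalIntegrable (by fun_prop) _ _),
    intervalIntegral.integral_sub (Continuous.intervalIntegrable (by fun_prop) _ _)
    (Continuous.intervalIntegrable (by fun_prop) _ _),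
    intervalIntegral.integral_const_mul, ← hm] at h
  simp only [intervalIntegral.integral_const, sub_zero, one_smul] at h
  linarith

theorem two_sub_two_mul_cos_le (x : ℝ) : 2 - 2 * Real.cos x ≤ min 4 (x ^ 2) := by
  refine le_min (by linarith [Real.neg_one_le_cos x]) ?_
  linarith [Real.one_sub_sq_div_two_le_cos (x := x)]

theorem ofReal_intervalIntegral_eq {g : ℝ → ℝ} (hg : Continuous g) (h0 : ∀ t, 0 ≤ g t) :
    ENNReal.ofReal (∫ t in (0:ℝ)..1, g t) = ∫⁻ t in Ico (0:ℝ) 1, ENNReal.ofReal (g t) := by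
  rw [intervalIntegral.integral_of_le zero_le_one,
    ofReal_integral_eq_lintegral_ofReal ?_ (Eventually.of_forall h0)]
  · exact (setLIntegral_congr Ico_ae_eq_Ioc).symm
  · exact (hg.integrableOn_Icc (a := 0) (b := 1)).mono_set Ioc_subset_Icc_self

end

section

variable {n : ℕ} {s : ℝ} (hs : 3 / 2 < s) (a : Coef n)

theorem summable_velWeight_mul {n : ℕ} {s : ℝ} (hs : 3 / 2 < s) (a : Coef n) : Summable fun k : ℤ =>
    4 * ((2 * Real.pi * k * wt s k) ^ 2 * ‖a k‖ ^ 2) := by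
  have h := summable_norm_sq_of_summable_norm (summable_velCoef hs a)
  have h2 := (h.comp_injective (neg_injective (G := ℤ))).mul_left 4
  refine h2.congr fun k => ?_
  simp [velCoef, norm_smul, mul_pow, wt_neg]

theorem lintegral_osc_vel_le (v : ℝ) :
    ∫⁻ u in Ico (0:ℝ) 1, ENNReal.ofReal (osc (vel hs a) u v ^ 2) ≤
      ∑' k : ℤ, ENNReal.ofReal (min 4 ((2 * Real.pi * k * v) ^ 2)) *
        ENNReal.ofReal ((2 * Real.pi * k * wt s k) ^ 2 * ‖a k‖ ^ 2) := by
  have hc := (vel hs a).continuous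
  calc _ ≤ ∫⁻ u in Ico (0:ℝ) 1, ∫⁻ t in Ico (0:ℝ) 1,
          ENNReal.ofReal (‖vel hs a (u + t * v) - vel hs a u‖ ^ 2) := by
        refine lintegral_mono fun u => ?_
        rw [← ofReal_intervalIntegral_eq (by fun_prop) (fun t => by positivity)]
        exact ENNReal.ofReal_le_ofReal (sq_integral_le_integral_sq (by fun_prop))
    _ = ∫⁻ t in Ico (0:ℝ) 1, ∫⁻ u in Ico (0:ℝ) 1,
          ENNReal.ofReal (‖vel hs a (u + t * v) - vel hs a u‖ ^ 2) := by
        refine lintegral_lintegral_swap (Measurable.aemeasurable ?_)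
        unfold Function.uncurry
        exact (Continuous.measurable (by fun_prop)).ennreal_ofReal
    _ ≤ ∫⁻ t in Ico (0:ℝ) 1, ∑' k : ℤ, ENNReal.ofReal (min 4 ((2 * Real.pi * k * v) ^ 2)) *
        ENNReal.ofReal ((2 * Real.pi * k * wt s k) ^ 2 * ‖a k‖ ^ 2) := by
        refine setLIntegral_mono measurable_const fun t ht => ?_
        rw [← ofReal_intervalIntegral_eq (by fun_prop) (fun t => by positivity),
          integral_norm_sq_vel_sub]
        have hle : ∀ k : ℤ, 2 - 2 * Real.cos (2 * Real.pi * k * (t * v)) ≤ 4 := fun k => by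
          linarith [Real.neg_one_le_cos (2 * Real.pi * k * (t * v))]
        have h0 : ∀ k : ℤ, 0 ≤ 2 - 2 * Real.cos (2 * Real.pi * k * (t * v)) := fun k => by
          linarith [Real.cos_le_one (2 * Real.pi * k * (t * v))]
        rw [ENNReal.ofReal_tsum_of_nonneg (fun k => mul_nonneg (h0 k) (by positivity))
          (Summable.of_nonneg_of_le (fun k => mul_nonneg (h0 k) (by positivity))
            (fun k => mul_le_mul_of_nonneg_right (hle k) (by positivity))
            (summable_velWeight_mul hs a))]
        refine ENNReal.tsum_le_tsum fun k => ?_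
        rw [← ENNReal.ofReal_mul (by positivity)]
        refine ENNReal.ofReal_le_ofReal (mul_le_mul_of_nonneg_right ?_ (by positivity))
        refine (two_sub_two_mul_cos_le _).trans (min_le_min_left _ ?_)
        rw [show 2 * Real.pi * k * (t * v) = t * (2 * Real.pi * k * v) by ring, mul_pow]
        refine mul_le_of_le_one_left (by positivity) ?_
        have := ht.1; have := ht.2
        nlinarith
    _ = _ := by simp

end

theorem velWeight_mul_le {s : ℝ} (hs : 0 ≤ s) (k : ℤ) (hk : k ≠ 0) {e : ℝ} (he : e = 2 * s - 2) :
    (2 * Real.pi * k * wt s k) ^ 2 * |2 * Real.pi * k| ^ e ≤ (2 * Real.pi) ^ (2 * s) := by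
  have hk0 : (k:ℝ) ≠ 0 := by exact_mod_cast hk
  have hk1 : 0 < |(k:ℝ)| := abs_pos.2 hk0
  have hπ := Real.pi_pos
  have h1 : wt s k ^ 2 ≤ |(k:ℝ)| ^ (-(2 * s)) := by
    rw [wt_sq]
    have : |(k:ℝ)| ^ (-(2 * s)) = ((k:ℝ) ^ 2) ^ (-s) := by
      rw [← sq_abs, ← Real.rpow_natCast, ← Real.rpow_mul hk1.le]
      congr 1; push_cast; ring
    rw [this]
    exact Real.rpow_le_rpow_of_nonpos (by positivity) (by linarith) (by linarith)
  have h2 : |2 * Real.pi * (k:ℝ)| = 2 * Real.pi * |(k:ℝ)| := by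
    rw [abs_mul, abs_of_pos (by positivity)]
  calc (2 * Real.pi * k * wt s k) ^ 2 * |2 * Real.pi * k| ^ e
      = (2 * Real.pi * |(k:ℝ)|) ^ (2:ℝ) * (2 * Real.pi * |(k:ℝ)|) ^ e * wt s k ^ 2 := by
        rw [← h2, mul_pow, ← sq_abs (2 * Real.pi * (k:ℝ)), Real.rpow_two]; ring
    _ ≤ (2 * Real.pi * |(k:ℝ)|) ^ (2:ℝ) * (2 * Real.pi * |(k:ℝ)|) ^ e * |(k:ℝ)| ^ (-(2 * s)) := by
        gcongr
    _ = _ := by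
        rw [← Real.rpow_add (by positivity), he, show 2 + (2 * s - 2) = 2 * s by ring,
          Real.mul_rpow (by positivity) hk1.le, mul_assoc, ← Real.rpow_add hk1]
        simp

theorem lintegral_confMeasure (p : ℝ) {F : ℝ × ℝ × ℝ → ℝ≥0∞} (hF : Measurable F) :
    ∫⁻ z, F z ∂confMeasure p = ∫⁻ y, (∫⁻ u in Ico (0:ℝ) 1, F (u, y)) ∂arcMeasure p :=
  lintegral_prod_symm' F hF

/-- The weighted square of the mean oscillation of the derivative is controlled by the
Sobolev norm. -/
theorem exists_lintegral_osc_le {p : ℝ} (hp : p < 8 / 3) (hs : 3 / 2 < 3 * p / 2 - 2) :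
    ∃ C : ℝ, 0 ≤ C ∧ ∀ (n : ℕ) (a : Coef n),
      ∫⁻ z, ENNReal.ofReal (osc (vel hs a) z.1 z.2.2 ^ 2) ∂confMeasure p ≤
        ENNReal.ofReal (C * ‖a‖ ^ 2) ∧
      ∫⁻ z, ENNReal.ofReal (osc (vel hs a) z.1 (-z.2.1) ^ 2) ∂confMeasure p ≤
        ENNReal.ofReal (C * ‖a‖ ^ 2) := by
  set s := 3 * p / 2 - 2 with hsdef
  have hd1 : 0 < 3 - p := by linarith
  have hd2 : 0 < 2 * p - 3 := by linarith
  set C₁ := 1 / (3 - p) + 1 / (2 * p - 3) with hC₁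
  set C₂ := 1 / (5 - 3 * p + 3) - 4 / (5 - 3 * p + 1) with hC₂
  have hC₁0 : 0 ≤ C₁ := by positivity
  have hC₂0 : 0 ≤ C₂ := by
    have h1 : 0 < 5 - 3 * p + 3 := by linarith
    have h2 : 4 / (5 - 3 * p + 1) ≤ 0 :=
      div_nonpos_of_nonneg_of_nonpos (by norm_num) (by linarith)
    have : 0 < 1 / (5 - 3 * p + 3) := by positivity
    linarith
  set C := C₁ * (C₂ * (2 * Real.pi) ^ (2 * s)) with hC
  have hC0 : 0 ≤ C := by positivity
  have main : ∀ (n : ℕ) (a : Coef n), ENNReal.ofReal C₁ * ∫⁻ b in Ioi (0:ℝ),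
      ENNReal.ofReal (b ^ (5 - 3 * p)) * ∑' k : ℤ,
        ENNReal.ofReal (min 4 ((2 * Real.pi * k * b) ^ 2)) *
        ENNReal.ofReal ((2 * Real.pi * k * wt s k) ^ 2 * ‖a k‖ ^ 2)
      ≤ ENNReal.ofReal (C * ‖a‖ ^ 2) := by
    intro n a
    rw [hC, mul_assoc, ENNReal.ofReal_mul hC₁0]
    gcongr
    simp_rw [← ENNReal.tsum_mul_left]
    rw [lintegral_tsum fun k => by fun_prop, ← (Coef.hasSum_norm_sq a).tsum_eq, ← tsum_mul_left,
      ENNReal.ofReal_tsum_of_nonneg (fun k => by positivity)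
        ((Coef.hasSum_norm_sq a).summable.mul_left _)]
    refine ENNReal.tsum_le_tsum fun k => ?_
    simp_rw [← mul_assoc]
    rw [lintegral_mul_const _ (by fun_prop)]
    rcases eq_or_ne k 0 with rfl | hk
    · simp
    have hk0 : (k:ℝ) ≠ 0 := by exact_mod_cast hk
    have hκ : 0 < |2 * Real.pi * k| := by
      have := Real.pi_pos
      positivity
    have h1 := lintegral_rpow_mul_min_le (r := 5 - 3 * p) (by linarith) (by linarith) hκ
    have h2 : ∀ b : ℝ, (|2 * Real.pi * k| * b) ^ 2 = (2 * Real.pi * k * b) ^ 2 := fun b => by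
      rw [mul_pow, sq_abs, mul_pow (2 * Real.pi * k)]
    simp_rw [h2] at h1
    refine (mul_le_mul_left h1 _).trans ?_
    rw [← ENNReal.ofReal_mul (by positivity)]
    refine ENNReal.ofReal_le_ofReal ?_
    have h3 := velWeight_mul_le (s := s) (by linarith) k hk (e := -(5 - 3 * p) - 1)
      (by rw [hsdef]; ring)
    calc _ = C₂ * ((2 * Real.pi * k * wt s k) ^ 2 * |2 * Real.pi * k| ^ (-(5 - 3 * p) - 1))
          * ‖a k‖ ^ 2 := by ring
      _ ≤ C₂ * (2 * Real.pi) ^ (2 * s) * ‖a k‖ ^ 2 := by gcongr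
  refine ⟨C, hC0, fun n a => ?_⟩
  have hφ : Measurable fun b : ℝ => ∑' k : ℤ,
      ENNReal.ofReal (min 4 ((2 * Real.pi * k * b) ^ 2)) *
        ENNReal.ofReal ((2 * Real.pi * k * wt s k) ^ 2 * ‖a k‖ ^ 2) :=
    Measurable.tsum fun k => by fun_prop
  have hosc := continuous_osc (vel hs a).continuous
  have hfst := lintegral_arcMeasure_fst_le (p := p) (by linarith) (by linarith) hφ
  have hsnd := lintegral_arcMeasure_snd_le (p := p) (by linarith) (by linarith) hφ
  constructor
  · have hm : Measurable fun z : ℝ × ℝ × ℝ => ENNReal.ofReal (osc (vel hs a) z.1 z.2.2 ^ 2) :=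
      (hosc.comp (continuous_fst.prodMk continuous_snd.snd)).measurable.pow_const 2
        |>.ennreal_ofReal
    rw [lintegral_confMeasure p hm]
    refine le_trans (lintegral_mono fun z => lintegral_osc_vel_le hs a z.2) ?_
    exact le_trans hsnd (main n a)
  · have hm : Measurable fun z : ℝ × ℝ × ℝ => ENNReal.ofReal (osc (vel hs a) z.1 (-z.2.1) ^ 2) :=
      (hosc.comp (continuous_fst.prodMk continuous_snd.fst.neg)).measurable.pow_const 2
        |>.ennreal_ofReal
    rw [lintegral_confMeasure p hm]
    have e : ∀ b : ℝ, ∫⁻ u in Ico (0:ℝ) 1, ENNReal.ofReal (osc (vel hs a) u (-b) ^ 2) ≤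
        ∑' k : ℤ, ENNReal.ofReal (min 4 ((2 * Real.pi * k * b) ^ 2)) *
          ENNReal.ofReal ((2 * Real.pi * k * wt s k) ^ 2 * ‖a k‖ ^ 2) := by
      intro b
      have h := lintegral_osc_vel_le hs a (-b)
      simp_rw [mul_neg, neg_sq] at h
      exact h
    refine le_trans (lintegral_mono fun z : ℝ × ℝ => e z.1) ?_
    exact le_trans hfst (main n a)

/-! ### Difference of mean velocities -/

section

variable {V : Type*} [NormedAddCommGroup V] [NormedSpace ℝ V]

/-- The mean of `f` on the segment from `u` to `u + v`. -/
def avg (f : ℝ → V) (u v : ℝ) : V := ∫ t in (0:ℝ)..1, f (u + t * v)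

/-- The difference of the means of `f` to the right and to the left of `u`. -/
def meanDiff (f : ℝ → V) (z : ℝ × ℝ × ℝ) : V := avg f z.1 z.2.2 - avg f z.1 (-z.2.1)

theorem continuous_avg {f : ℝ → V} (hf : Continuous f) :
    Continuous fun z : ℝ × ℝ => avg f z.1 z.2 := by
  unfold avg
  refine intervalIntegral.continuous_parametric_intervalIntegral_of_continuous' ?_ 0 1
  unfold Function.uncurry
  fun_prop

theorem continuous_meanDiff {f : ℝ → V} (hf : Continuous f) : Continuous (meanDiff f) := by
  have h := continuous_avg hf
  exact (h.comp (continuous_fst.prodMk continuous_snd.snd)).sub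
    (h.comp (continuous_fst.prodMk continuous_snd.fst.neg))

theorem norm_avg_sub_le {f : ℝ → V} [CompleteSpace V] (hf : Continuous f) (u v : ℝ) :
    ‖avg f u v - f u‖ ≤ osc f u v := by
  have h : avg f u v - f u = ∫ t in (0:ℝ)..1, (f (u + t * v) - f u) := by
    rw [intervalIntegral.integral_sub (Continuous.intervalIntegrable (by fun_prop) _ _)
      (Continuous.intervalIntegrable (by fun_prop) _ _)]
    simp [avg]
  rw [h]
  exact intervalIntegral.norm_integral_le_integral_norm zero_le_one

theorem norm_meanDiff_le {f : ℝ → V} [CompleteSpace V] (hf : Continuous f) (z : ℝ × ℝ × ℝ) :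
    ‖meanDiff f z‖ ≤ osc f z.1 z.2.2 + osc f z.1 (-z.2.1) := by
  have h : meanDiff f z = (avg f z.1 z.2.2 - f z.1) - (avg f z.1 (-z.2.1) - f z.1) := by
    unfold meanDiff; abel
  rw [h]
  exact (norm_sub_le _ _).trans (add_le_add (norm_avg_sub_le hf _ _) (norm_avg_sub_le hf _ _))

end

section

variable {n : ℕ} {s : ℝ} (hs : 3 / 2 < s) (a : Coef n)

theorem smul_avg_vel (u v : ℝ) : v • avg (vel hs a) u v = pos hs a (u + v) - pos hs a u := by
  have h := intervalIntegral.smul_integral_comp_add_mul (a := (0:ℝ)) (b := 1)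
    (fun x => vel hs a x) v u
  simp only [mul_zero, add_zero, mul_one] at h
  have e : avg (vel hs a) u v = ∫ x in (0:ℝ)..1, vel hs a (u + v * x) := by
    unfold avg
    simp_rw [mul_comm]
  rw [e, h]
  exact intervalIntegral.integral_eq_sub_of_hasDerivAt (fun x _ => hasDerivAt_pos hs a x)
    ((vel hs a).continuous.intervalIntegrable _ _)

theorem avg_vel {v : ℝ} (hv : v ≠ 0) (u : ℝ) :
    avg (vel hs a) u v = v⁻¹ • (pos hs a (u + v) - pos hs a u) := by
  rw [← smul_avg_vel, inv_smul_smul₀ hv]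

theorem pos_sub_pos (u h : ℝ) : pos hs a (u + h) - pos hs a u = ∑' k : ℤ, cas k u •
      ((Real.cos (2 * Real.pi * k * h) - 1) • (wt s k • a k)
        - Real.sin (2 * Real.pi * k * h) • (wt s (-k) • a (-k))) := by
  have hb := summable_posCoef hs a
  rw [pos_apply, pos_apply, tsum_cas_add hb, ← Summable.tsum_sub]
  · refine tsum_congr fun k => ?_
    rw [← smul_sub, sub_smul, one_smul]
    congr 1; abel
  · exact summable_cas_smul (summable_pair hb (fun k => Real.abs_cos_le_one _)
      (fun k => Real.abs_sin_le_one _)) u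
  · exact summable_cas_smul hb u

theorem abs_cos_sub_one_le (x : ℝ) : |Real.cos x - 1| ≤ 2 := by
  rw [abs_le]; constructor <;> linarith [Real.neg_one_le_cos x, Real.cos_le_one x]

theorem meanDiff_vel {x y : ℝ} (hx : x ≠ 0) (hy : y ≠ 0) (u : ℝ) :
    meanDiff (vel hs a) (u, x, y) = ∑' k : ℤ, cas k u •
      ((y⁻¹ * (Real.cos (2 * Real.pi * k * y) - 1)
          + x⁻¹ * (Real.cos (2 * Real.pi * k * x) - 1)) • (wt s k • a k)
        - (y⁻¹ * Real.sin (2 * Real.pi * k * y) - x⁻¹ * Real.sin (2 * Real.pi * k * x))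
          • (wt s (-k) • a (-k))) := by
  have hb := summable_posCoef hs a
  have hsum : ∀ h : ℝ, Summable fun k : ℤ => cas k u •
      ((Real.cos (2 * Real.pi * k * h) - 1) • (wt s k • a k)
        - Real.sin (2 * Real.pi * k * h) • (wt s (-k) • a (-k))) := fun h =>
    summable_cas_smul (summable_pair hb (C := 2) (fun k => abs_cos_sub_one_le _)
      (fun k => (Real.abs_sin_le_one _).trans one_le_two)) u
  simp only [meanDiff]
  rw [avg_vel hs a hy, avg_vel hs a (neg_ne_zero.2 hx), pos_sub_pos, pos_sub_pos,
    ← (hsum y).tsum_const_smul, ← (hsum (-x)).tsum_const_smul,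
    ← ((hsum y).const_smul _).tsum_sub ((hsum (-x)).const_smul _)]
  refine tsum_congr fun k => ?_
  simp only [mul_neg, Real.cos_neg, Real.sin_neg, inv_neg]
  module

theorem lintegral_meanDiff_vel_ge {x y : ℝ} (hx : x ≠ 0) (hy : y ≠ 0) :
    ∑' k : ℤ, ENNReal.ofReal ((y⁻¹ * (Real.cos (2 * Real.pi * k * y) - 1)
          + x⁻¹ * (Real.cos (2 * Real.pi * k * x) - 1)) ^ 2)
        * ENNReal.ofReal (wt s k ^ 2 * ‖a k‖ ^ 2)
      ≤ ∫⁻ u in Ico (0:ℝ) 1, ENNReal.ofReal (‖meanDiff (vel hs a) (u, x, y)‖ ^ 2) := by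
  have hb := summable_posCoef hs a
  have hc := continuous_meanDiff (vel hs a).continuous
  rw [← ofReal_intervalIntegral_eq (by fun_prop) (fun t => by positivity)]
  simp_rw [meanDiff_vel hs a hx hy]
  have hα : ∀ k : ℤ, |y⁻¹ * (Real.cos (2 * Real.pi * k * y) - 1)
          + x⁻¹ * (Real.cos (2 * Real.pi * k * x) - 1)| ≤ |y⁻¹| * 2 + |x⁻¹| * 2 := fun k => by
    refine (abs_add_le _ _).trans ?_
    rw [abs_mul, abs_mul]
    gcongr <;> exact abs_cos_sub_one_le _
  have hβ : ∀ k : ℤ, |y⁻¹ * Real.sin (2 * Real.pi * k * y)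
      - x⁻¹ * Real.sin (2 * Real.pi * k * x)| ≤ |y⁻¹| * 2 + |x⁻¹| * 2 := fun k => by
    refine (abs_sub _ _).trans ?_
    rw [abs_mul, abs_mul]
    gcongr <;> exact (Real.abs_sin_le_one _).trans one_le_two
  rw [integral_norm_sq_tsum_cas_pair hb (C := |y⁻¹| * 2 + |x⁻¹| * 2)
    (α := fun k : ℤ => y⁻¹ * (Real.cos (2 * Real.pi * k * y) - 1)
          + x⁻¹ * (Real.cos (2 * Real.pi * k * x) - 1))
    (β := fun k : ℤ => y⁻¹ * Real.sin (2 * Real.pi * k * y)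
      - x⁻¹ * Real.sin (2 * Real.pi * k * x)) hα hβ (fun k => by simp)
    (fun k => by
      simp only [Int.cast_neg, mul_neg, neg_mul, Real.sin_neg]
      ring),
    ENNReal.ofReal_tsum_of_nonneg (fun k => by positivity)]
  · refine ENNReal.tsum_le_tsum fun k => ?_
    rw [← ENNReal.ofReal_mul (by positivity), norm_smul, mul_pow, Real.norm_eq_abs, sq_abs]
    refine ENNReal.ofReal_le_ofReal ?_
    gcongr
    exact le_add_of_nonneg_right (by positivity)
  · refine Summable.of_nonneg_of_le (fun k => by positivity) (fun k => ?_)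
      ((summable_norm_sq_of_summable_norm hb).mul_left
        ((|y⁻¹| * 2 + |x⁻¹| * 2) ^ 2 + (|y⁻¹| * 2 + |x⁻¹| * 2) ^ 2))
    have h1 := sq_le_sq' (neg_le_of_abs_le (hα k)) (le_of_abs_le (hα k))
    have h2 := sq_le_sq' (neg_le_of_abs_le (hβ k)) (le_of_abs_le (hβ k))
    gcongr

end

theorem cos_two_pi_mul_nonpos {κ x : ℝ} (hκ : 0 < κ)
    (hx : x ∈ Icc (1 / (4 * κ)) (3 / (10 * κ))) : Real.cos (2 * Real.pi * κ * x) ≤ 0 := by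
  have hπ := Real.pi_pos
  have h1 : 1 / 4 ≤ κ * x := by
    have := mul_le_mul_of_nonneg_left hx.1 hκ.le
    calc (1:ℝ) / 4 = κ * (1 / (4 * κ)) := by field_simp
      _ ≤ _ := this
  have h2 : κ * x ≤ 3 / 10 := by
    have := mul_le_mul_of_nonneg_left hx.2 hκ.le
    calc κ * x ≤ κ * (3 / (10 * κ)) := this
      _ = 3 / 10 := by field_simp
  refine Real.cos_nonpos_of_pi_div_two_le_of_le ?_ ?_
  · nlinarith
  · nlinarith

theorem lintegral_arcMeasure_multiplier_ge {p : ℝ} (hp : 2 < p) {κ : ℝ} (hκ : 1 ≤ κ) :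
    ENNReal.ofReal (κ ^ (3 * p - 4) / 400) ≤ ∫⁻ z, ENNReal.ofReal
      ((z.2⁻¹ * (Real.cos (2 * Real.pi * κ * z.2) - 1)
          + z.1⁻¹ * (Real.cos (2 * Real.pi * κ * z.1) - 1)) ^ 2) ∂arcMeasure p := by
  have hκ0 : 0 < κ := by linarith
  set I := Icc (1 / (4 * κ)) (3 / (10 * κ)) with hI
  have hpos : ∀ x ∈ I, 0 < x := fun x hx => lt_of_lt_of_le (by positivity) hx.1
  have hle : ∀ x ∈ I, x ≤ 3 / 10 * κ⁻¹ := fun x hx => by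
    refine hx.2.trans (le_of_eq ?_)
    field_simp
  have hinv1 : κ⁻¹ ≤ 1 := inv_le_one_of_one_le₀ hκ
  have hinv0 : 0 < κ⁻¹ := by positivity
  rw [lintegral_arcMeasure p (by fun_prop)]
  have hsub : I ×ˢ I ⊆ arcs := by
    rintro ⟨x, y⟩ ⟨hx, hy⟩
    have := hle x hx
    have := hle y hy
    exact ⟨hpos x hx, hpos y hy, by simp only; linarith, by simp only; linarith⟩
  refine le_trans ?_ (lintegral_mono_set hsub)
  have hconst : ∀ z ∈ I ×ˢ I, ENNReal.ofReal (κ ^ (3 * p - 4) * κ ^ 2) ≤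
      ENNReal.ofReal (dens p z) * ENNReal.ofReal
      ((z.2⁻¹ * (Real.cos (2 * Real.pi * κ * z.2) - 1)
          + z.1⁻¹ * (Real.cos (2 * Real.pi * κ * z.1) - 1)) ^ 2) := by
    rintro ⟨x, y⟩ ⟨hx, hy⟩
    have hx0 := hpos x hx
    have hy0 := hpos y hy
    have hx1 := hle x hx
    have hy1 := hle y hy
    rw [← ENNReal.ofReal_mul (by simp only [dens]; positivity)]
    refine ENNReal.ofReal_le_ofReal ?_
    have hd : κ ^ (3 * p - 4) ≤ dens p (x, y) := by
      have hrp : ∀ {t r : ℝ}, 0 < t → t ≤ κ⁻¹ → r ≤ 0 → κ ^ (-r) ≤ t ^ r := by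
        intro t r h0 h1 hr
        have h := Real.rpow_le_rpow_of_nonpos h0 h1 hr
        rwa [Real.inv_rpow hκ0.le, ← Real.rpow_neg hκ0.le] at h
      have h1 := hrp hx0 (by linarith) (r := 2 - p) (by linarith)
      have h2 := hrp hy0 (by linarith) (r := 2 - p) (by linarith)
      have h3 := hrp (add_pos hx0 hy0) (by linarith) (r := -p) (by linarith)
      calc κ ^ (3 * p - 4) = κ ^ (-(2 - p)) * κ ^ (-(2 - p)) * κ ^ (- -p) := by
            rw [← Real.rpow_add hκ0, ← Real.rpow_add hκ0]; congr 1; ring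
        _ ≤ _ := by simp only [dens]; gcongr
    have hm : κ ^ 2 ≤ (y⁻¹ * (Real.cos (2 * Real.pi * κ * y) - 1)
          + x⁻¹ * (Real.cos (2 * Real.pi * κ * x) - 1)) ^ 2 := by
      have hcx := cos_two_pi_mul_nonpos hκ0 hx
      have hcy := cos_two_pi_mul_nonpos hκ0 hy
      have hxi : κ ≤ x⁻¹ := by
        rw [le_inv_comm₀ hκ0 hx0]; linarith
      have hyi : 0 < y⁻¹ := by positivity
      rw [← neg_sq (_ + _)]
      refine pow_le_pow_left₀ hκ0.le ?_ 2
      nlinarith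
    exact mul_le_mul hd hm (by positivity) (le_trans (by positivity) hd)
  refine le_trans (le_of_eq ?_) (setLIntegral_mono' (measurableSet_Icc.prod measurableSet_Icc) hconst)
  rw [setLIntegral_const, Measure.volume_eq_prod, Measure.prod_prod, hI, Real.volume_Icc,
    ← ENNReal.ofReal_mul, ← ENNReal.ofReal_mul (by positivity)]
  · congr 1
    field_simp
    norm_num
  · have : 3 / (10 * κ) - 1 / (4 * κ) = κ⁻¹ / 20 := by field_simp; norm_num
    rw [this]; positivity

/-- The difference of mean velocities controls the Sobolev norm modulo constants. -/
theorem exists_le_lintegral_meanDiff {p : ℝ} (hs : 3 / 2 < 3 * p / 2 - 2) :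
    ∃ c : ℝ, 0 < c ∧ ∀ (n : ℕ) (a : Coef n), ENNReal.ofReal (c * (‖a‖ ^ 2 - ‖a 0‖ ^ 2)) ≤
      ∫⁻ z, ENNReal.ofReal (‖meanDiff (vel hs a) z‖ ^ 2) ∂confMeasure p := by
  set s := 3 * p / 2 - 2 with hsdef
  refine ⟨2 ^ (-s) / 400, by positivity, fun n a => ?_⟩
  have hm : Measurable fun z => ENNReal.ofReal (‖meanDiff (vel hs a) z‖ ^ 2) :=
    ((continuous_meanDiff (vel hs a).continuous).norm.pow 2).measurable.ennreal_ofReal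
  rw [lintegral_confMeasure p hm]
  have h1 : ∫⁻ z, ∑' k : ℤ, ENNReal.ofReal ((z.2⁻¹ * (Real.cos (2 * Real.pi * k * z.2) - 1)
          + z.1⁻¹ * (Real.cos (2 * Real.pi * k * z.1) - 1)) ^ 2)
        * ENNReal.ofReal (wt s k ^ 2 * ‖a k‖ ^ 2) ∂arcMeasure p ≤
      ∫⁻ y, (∫⁻ u in Ico (0:ℝ) 1, ENNReal.ofReal (‖meanDiff (vel hs a) (u, y)‖ ^ 2))
        ∂arcMeasure p := by
    refine lintegral_mono_ae ?_
    filter_upwards [ae_arcMeasure p] with z hz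
    exact lintegral_meanDiff_vel_ge hs a hz.1.ne' hz.2.1.ne'
  refine le_trans ?_ h1
  rw [lintegral_tsum fun k => by fun_prop]
  have hsum := (Coef.hasSum_norm_sq a)
  have hsum' : HasSum (fun k : ℤ => 2 ^ (-s) / 400 * if k = 0 then 0 else ‖a k‖ ^ 2)
      (2 ^ (-s) / 400 * (‖a‖ ^ 2 - ‖a 0‖ ^ 2)) := by
    refine HasSum.mul_left _ ?_
    have h0 := hasSum_ite_eq (0:ℤ) (‖a 0‖ ^ 2)
    refine (hsum.sub h0).congr_fun ?_ 
    intro k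
    split_ifs with h <;> simp [h]
  rw [← hsum'.tsum_eq, ENNReal.ofReal_tsum_of_nonneg (fun k => by positivity) hsum'.summable]
  refine ENNReal.tsum_le_tsum fun k => ?_
  rw [lintegral_mul_const _ (by fun_prop)]
  rcases eq_or_ne k 0 with rfl | hk
  · simp
  rw [if_neg hk]
  have hκ : 1 ≤ |(k:ℝ)| := by
    rw [← Int.cast_abs]
    exact_mod_cast Int.one_le_abs hk
  have habs : ∀ x : ℝ, Real.cos (2 * Real.pi * k * x) = Real.cos (2 * Real.pi * |(k:ℝ)| * x) := by
    intro x
    rcases abs_choice (k:ℝ) with h | h <;> rw [h]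
    simp
  simp_rw [habs]
  refine le_trans ?_ (mul_le_mul_left (lintegral_arcMeasure_multiplier_ge (by linarith) hκ) _)
  rw [← ENNReal.ofReal_mul (by positivity)]
  refine ENNReal.ofReal_le_ofReal ?_
  have hκ0 : 0 < |(k:ℝ)| := by linarith
  have hw : 2 ^ (-s) * |(k:ℝ)| ^ (4 - 3 * p) ≤ wt s k ^ 2 := by
    rw [wt_sq, ← sq_abs (k:ℝ)]
    have : (2:ℝ) ^ (-s) * |(k:ℝ)| ^ (4 - 3 * p) = (2 * |(k:ℝ)| ^ 2) ^ (-s) := by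
      rw [Real.mul_rpow (by norm_num) (by positivity), ← Real.rpow_two, ← Real.rpow_mul hκ0.le]
      congr 2
      rw [hsdef]; ring
    rw [this]
    refine Real.rpow_le_rpow_of_nonpos (by positivity) ?_ (by linarith)
    nlinarith
  have hone : |(k:ℝ)| ^ (3 * p - 4) * |(k:ℝ)| ^ (4 - 3 * p) = 1 := by
    rw [← Real.rpow_add hκ0]; simp
  calc 2 ^ (-s) / 400 * ‖a k‖ ^ 2
      = |(k:ℝ)| ^ (3 * p - 4) / 400 * ((2 ^ (-s) * |(k:ℝ)| ^ (4 - 3 * p)) * ‖a k‖ ^ 2) := by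
        linear_combination (-(2 ^ (-s) / 400 * ‖a k‖ ^ 2)) * hone
    _ ≤ _ := by gcongr

/-! ### Reduction of symmetric triple integrals to ordered configurations -/

theorem Function.Periodic.lintegral_Ico_add {g : ℝ → ℝ≥0∞} (hg : Function.Periodic g 1) (c : ℝ) :
    ∫⁻ u in Ico (0:ℝ) 1, g (u + c) = ∫⁻ u in Ico (0:ℝ) 1, g u := by
  have h1 := isAddFundamentalDomain_Ioc (μ := volume) (T := (1:ℝ)) one_pos 0
  have h2 := isAddFundamentalDomain_Ioc (μ := volume) (T := (1:ℝ)) one_pos c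
  have h3 : ∫⁻ u in Ioc c (c + 1), g u = ∫⁻ u in Ioc 0 ((0:ℝ) + 1), g u := by
    refine h2.setLIntegral_eq h1 g fun k x => ?_
    obtain ⟨k, m, rfl⟩ := k
    have := hg.zsmul m x
    simpa [AddSubgroup.vadd_def, add_comm] using this
  have h4 := (measurePreserving_add_right (volume : Measure ℝ) c).setLIntegral_comp_preimage_emb
    (MeasurableEquiv.addRight c).measurableEmbedding g (Ioc c (c + 1))
  rw [zero_add] at h3
  rw [setLIntegral_congr Ico_ae_eq_Ioc, setLIntegral_congr Ico_ae_eq_Ioc, ← h3, ← h4]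
  simp

theorem measurePreserving_cyclic :
    MeasurePreserving (fun z : ℝ × ℝ => (z.2, 1 - z.1 - z.2)) volume volume := by
  have h1 : MeasurePreserving (fun z : ℝ × ℝ => (z.1, 1 - z.1 - z.2))
      ((volume : Measure ℝ).prod volume) ((volume : Measure ℝ).prod volume) := by
    refine (MeasurePreserving.id (volume : Measure ℝ)).skew_product
      (g := fun x y => 1 - x - y) (by fun_prop) (ae_of_all _ fun x => ?_)
    exact (Measure.measurePreserving_sub_left volume (1 - x)).map_eq
  have := h1.comp (Measure.measurePreserving_swap (μ := (volume : Measure ℝ)) (ν := volume))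
  have e : (fun z : ℝ × ℝ => (z.2, 1 - z.1 - z.2)) =
      (fun z : ℝ × ℝ => (z.1, 1 - z.1 - z.2)) ∘ Prod.swap := by
    funext z
    simp [sub_right_comm]
  rw [e]
  exact this

theorem measurePreserving_reverse :
    MeasurePreserving (fun z : ℝ × ℝ => (1 - z.2, 1 - z.1)) volume volume := by
  have h := Measure.measurePreserving_sub_left (volume : Measure ℝ) 1
  exact (h.prod h).comp (Measure.measurePreserving_swap (μ := (volume : Measure ℝ)) (ν := volume))

theorem ae_fst_ne (c : ℝ) : ∀ᵐ z : ℝ × ℝ, z.1 ≠ c :=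
  Measure.quasiMeasurePreserving_fst.ae (Measure.ae_ne volume c)

theorem ae_snd_ne (c : ℝ) : ∀ᵐ z : ℝ × ℝ, z.2 ≠ c :=
  Measure.quasiMeasurePreserving_snd.ae (Measure.ae_ne volume c)

theorem lintegral_Ico_sq_eq {Φ : ℝ × ℝ → ℝ≥0∞} (hΦ : Measurable Φ)
    (hcyc : ∀ z, Φ (z.2, 1 - z.1 - z.2) = Φ z) (hrev : ∀ z, Φ (1 - z.2, 1 - z.1) = Φ z) :
    ∫⁻ z in Ico (0:ℝ) 1 ×ˢ Ico (0:ℝ) 1, Φ z = 6 * ∫⁻ z in arcs, Φ z := by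
  have hne : ∀ᵐ z : ℝ × ℝ, 1 - z.1 - z.2 ≠ 0 :=
    measurePreserving_cyclic.quasiMeasurePreserving.ae (ae_snd_ne 0)
  set S : Set (ℝ × ℝ) := {z | 0 < z.1 ∧ 0 < z.2 ∧ 0 < 1 - z.1 - z.2} with hS
  have hSm : MeasurableSet S := by
    have h1 : MeasurableSet {z : ℝ × ℝ | 0 < z.1} := measurableSet_lt (by fun_prop) (by fun_prop)
    have h2 : MeasurableSet {z : ℝ × ℝ | 0 < z.2} := measurableSet_lt (by fun_prop) (by fun_prop)
    have h3 : MeasurableSet {z : ℝ × ℝ | 0 < 1 - z.1 - z.2} :=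
      measurableSet_lt (by fun_prop) (by fun_prop)
    exact h1.inter (h2.inter h3)
  set σ : ℝ × ℝ → ℝ × ℝ := fun z => (z.2, 1 - z.1 - z.2) with hσ
  set ρ : ℝ × ℝ → ℝ × ℝ := fun z => (1 - z.2, 1 - z.1) with hρ
  have hσm : Measurable σ := by fun_prop
  have hρm : Measurable ρ := by fun_prop
  have hσi : ∀ T, MeasurableSet T → ∫⁻ z in σ ⁻¹' T, Φ z = ∫⁻ z in T, Φ z := fun T hT => by
    rw [← measurePreserving_cyclic.setLIntegral_comp_preimage hT hΦ]
    exact lintegral_congr fun z => (hcyc z).symm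
  have hρi : ∀ T, MeasurableSet T → ∫⁻ z in ρ ⁻¹' T, Φ z = ∫⁻ z in T, Φ z := fun T hT => by
    rw [← measurePreserving_reverse.setLIntegral_comp_preimage hT hΦ]
    exact lintegral_congr fun z => (hrev z).symm
  have hsq : (Ico (0:ℝ) 1 ×ˢ Ico (0:ℝ) 1 : Set (ℝ × ℝ)) =ᵐ[volume] (S ∪ ρ ⁻¹' S : Set (ℝ × ℝ)) := by
    filter_upwards [ae_fst_ne 0, ae_snd_ne 0, hne] with z h1 h2 h3
    apply propext
    change z ∈ (Ico (0:ℝ) 1 ×ˢ Ico (0:ℝ) 1) ↔ z ∈ S ∪ ρ ⁻¹' S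
    simp only [mem_prod, mem_Ico, mem_union, mem_preimage, hS, hρ, mem_ofPred_eq]
    constructor
    · rintro ⟨⟨h4, h5⟩, h6, h7⟩
      rcases lt_or_gt_of_ne h3 with h | h
      · right; exact ⟨by linarith, by linarith, by linarith⟩
      · left; exact ⟨lt_of_le_of_ne h4 h1.symm, lt_of_le_of_ne h6 h2.symm, h⟩
    · rintro (⟨h4, h5, h6⟩ | ⟨h4, h5, h6⟩) <;>
        exact ⟨⟨by linarith, by linarith⟩, by linarith, by linarith⟩
  have hdisj : Disjoint S (ρ ⁻¹' S) := by
    rw [Set.disjoint_left]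
    rintro z ⟨_, _, h3⟩ ⟨_, _, h6⟩
    simp only [hρ] at h6
    linarith
  have hthird : S =ᵐ[volume] (arcs ∪ (σ ⁻¹' arcs ∪ σ ⁻¹' (σ ⁻¹' arcs)) : Set (ℝ × ℝ)) := by
    filter_upwards [ae_fst_ne (1 / 3)] with z h1
    apply propext
    change z ∈ S ↔ z ∈ arcs ∪ (σ ⁻¹' arcs ∪ σ ⁻¹' (σ ⁻¹' arcs))
    simp only [mem_union, mem_preimage, hS, hσ, arcs, mem_ofPred_eq]
    constructor
    · rintro ⟨h2, h3, h4⟩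
      by_contra hcon
      simp only [not_or, not_and, not_lt] at hcon
      obtain ⟨c1, c2, c3⟩ := hcon
      specialize c1 h2 h3
      specialize c2 h3 h4
      specialize c3 h4 (by linarith)
      apply h1
      by_cases k1 : 2 * z.1 + z.2 ≤ 1
      · have := c1 k1
        by_cases k3 : 2 * (1 - z.1 - z.2) + (1 - z.2 - (1 - z.1 - z.2)) ≤ 1
        · have := c3 k3
          linarith
        · by_cases k2 : 2 * z.2 + (1 - z.1 - z.2) ≤ 1
          · have := c2 k2
            linarith
          · linarith
      · by_cases k2 : 2 * z.2 + (1 - z.1 - z.2) ≤ 1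
        · have := c2 k2
          linarith
        · by_cases k3 : 2 * (1 - z.1 - z.2) + (1 - z.2 - (1 - z.1 - z.2)) ≤ 1
          · have := c3 k3
            linarith
          · linarith
    · rintro (⟨h2, h3, h4, h5⟩ | ⟨h2, h3, h4, h5⟩ | ⟨h2, h3, h4, h5⟩) <;>
        exact ⟨by linarith, by linarith, by linarith⟩
  have hd1 : Disjoint (σ ⁻¹' arcs) (σ ⁻¹' (σ ⁻¹' arcs)) := by
    rw [Set.disjoint_left]
    rintro z ⟨_, _, h3, h4⟩ ⟨_, _, h6, h7⟩
    simp only [hσ] at h3 h4 h6 h7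
    linarith
  have hd2 : Disjoint arcs (σ ⁻¹' arcs ∪ σ ⁻¹' (σ ⁻¹' arcs)) := by
    rw [Set.disjoint_left]
    rintro z ⟨_, _, h3, h4⟩ (⟨_, _, h6, h7⟩ | ⟨_, _, h6, h7⟩) <;>
    · simp only [hσ] at h6 h7
      linarith
  have hm1 := hσm measurableSet_arcs
  have hm2 := hσm hm1
  rw [setLIntegral_congr hsq, lintegral_union (hρm hSm) hdisj, hρi S hSm, setLIntegral_congr hthird,
    lintegral_union (hm1.union hm2) hd2, lintegral_union hm2 hd1, hσi _ hm1,
    hσi _ measurableSet_arcs]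
  ring

/-- A symmetric triple integral over the circle, as an integral over the configurations
`u - a, u, u + b` whose complementary arc is the longest one. -/
theorem lintegral_triple_eq {F : ℝ → ℝ → ℝ → ℝ≥0∞}
    (hF : Measurable fun x : ℝ × ℝ × ℝ => F x.1 x.2.1 x.2.2)
    (hswap : ∀ x y z, F x y z = F x z y) (hcyc : ∀ x y z, F x y z = F y z x)
    (hper : ∀ x y z, F (x + 1) y z = F x y z) :
    ∫⁻ u in Ico (0:ℝ) 1, ∫⁻ v in Ico (0:ℝ) 1, ∫⁻ w in Ico (0:ℝ) 1, F u v w =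
      6 * ∫⁻ y in arcs, ∫⁻ u in Ico (0:ℝ) 1, F (u - y.1) u (u + y.2) := by
  have hper2 : ∀ x y z, F x (y + 1) z = F x y z := fun x y z => by
    rw [hcyc, hper, ← hcyc]
  have hper3 : ∀ x y z, F x y (z + 1) = F x y z := fun x y z => by
    rw [hswap, hper2, hswap]
  have hm : ∀ {f g h : (ℝ × ℝ) × ℝ → ℝ}, Measurable f → Measurable g → Measurable h →
      Measurable fun x => F (f x) (g x) (h x) := fun hf hg hh =>
    hF.comp (hf.prodMk (hg.prodMk hh))
  set Φ : ℝ × ℝ → ℝ≥0∞ := fun z => ∫⁻ u in Ico (0:ℝ) 1, F (u - z.1) u (u + z.2) with hΦ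
  have hΦm : Measurable Φ := by
    refine Measurable.lintegral_prod_right' (f := fun x : (ℝ × ℝ) × ℝ =>
      F (x.2 - x.1.1) x.2 (x.2 + x.1.2)) ?_
    exact hm (by fun_prop) (by fun_prop) (by fun_prop)
  have hshift : ∀ a b c d : ℝ, ∫⁻ u in Ico (0:ℝ) 1, F (u + a + d) (u + b + d) (u + c + d) =
      ∫⁻ u in Ico (0:ℝ) 1, F (u + a) (u + b) (u + c) := fun a b c d => by
    have := Function.Periodic.lintegral_Ico_add (g := fun u => F (u + a) (u + b) (u + c))
      (fun u => by
        have e : ∀ x : ℝ, u + 1 + x = u + x + 1 := fun x => by ring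
        simp only [e, hper, hper2, hper3]) d
    rw [← this]
    refine lintegral_congr fun u => ?_
    simp only [add_right_comm _ d]
  rw [← lintegral_Ico_sq_eq hΦm]
  · have h1 : ∀ u : ℝ, ∫⁻ v in Ico (0:ℝ) 1, ∫⁻ w in Ico (0:ℝ) 1, F u v w =
        ∫⁻ z in Ico (0:ℝ) 1 ×ˢ Ico (0:ℝ) 1, F u (z.1 + u) (z.2 + (z.1 + u)) := fun u => by
      rw [Measure.volume_eq_prod,
        ← Measure.prod_restrict, lintegral_prod]
      · rw [← Function.Periodic.lintegral_Ico_add (g := fun v => ∫⁻ w in Ico (0:ℝ) 1, F u v w)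
          (fun v => by simp only [hper2]) u]
        refine lintegral_congr fun v => ?_
        rw [← Function.Periodic.lintegral_Ico_add (g := fun w => F u (v + u) w)
          (fun w => by simp only [hper3]) (v + u)]
      · exact (hF.comp (f := fun z : ℝ × ℝ => (u, z.1 + u, z.2 + (z.1 + u)))
          (by fun_prop)).aemeasurable
    simp_rw [h1]
    rw [lintegral_lintegral_swap]
    · refine lintegral_congr fun z => ?_
      have := hshift 0 z.1 (z.1 + z.2) (-z.1)
      simp only [hΦ]
      calc _ = ∫⁻ u in Ico (0:ℝ) 1, F (u + 0) (u + z.1) (u + (z.1 + z.2)) :=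
            lintegral_congr fun u => by ring_nf
        _ = _ := by rw [← this]; exact lintegral_congr fun u => by ring_nf
    · exact (hF.comp (f := fun x : ℝ × ℝ × ℝ => (x.1, x.2.1 + x.1, x.2.2 + (x.2.1 + x.1)))
        (by fun_prop)).aemeasurable
  · intro z
    simp only [hΦ]
    have := hshift (-z.1) 0 z.2 (-z.2)
    calc _ = ∫⁻ u in Ico (0:ℝ) 1, F (u + -z.1 + -z.2) (u + 0 + -z.2) (u + z.2 + -z.2) :=
          lintegral_congr fun u => by
            rw [hcyc]
            have e : u + (1 - z.1 - z.2) = (u + -z.1 + -z.2) + 1 := by ring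
            rw [e, hper2, hcyc]
            ring_nf
      _ = _ := by rw [this]; exact lintegral_congr fun u => by ring_nf
  · intro z
    simp only [hΦ]
    have e : ∀ u : ℝ, F (u - (1 - z.2)) u (u + (1 - z.1)) = F (u + -z.1) (u + 0) (u + z.2) := by
      intro u
      have e1 : u + (1 - z.1) = (u + -z.1) + 1 := by ring
      have e2 : u + z.2 = (u - (1 - z.2)) + 1 := by ring
      rw [e1, e2, hper3, hper3, hcyc, hcyc, hswap, add_zero]
    rw [lintegral_congr e]
    exact lintegral_congr fun u => by ring_nf

/-! ### The energy in terms of averages of the velocity -/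

section
variable {n : ℕ}

theorem wedgeNorm_sq (a b : EuclideanSpace ℝ (Fin n)) :
    wedgeNorm a b ^ 2 = ‖a‖ ^ 2 * ‖b‖ ^ 2 - (inner ℝ a b : ℝ) ^ 2 := by
  unfold wedgeNorm
  refine Real.sq_sqrt ?_
  have := abs_real_inner_le_norm a b
  nlinarith [sq_abs (inner ℝ a b : ℝ), abs_nonneg (inner ℝ a b : ℝ),
    mul_nonneg (norm_nonneg a) (norm_nonneg b)]

theorem wedgeNorm_comm (a b : EuclideanSpace ℝ (Fin n)) : wedgeNorm a b = wedgeNorm b a := by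
  simp only [wedgeNorm, real_inner_comm, mul_comm]

theorem wedgeNorm_sub_neg (b c : EuclideanSpace ℝ (Fin n)) :
    wedgeNorm (c - b) (-b) = wedgeNorm b c := by
  unfold wedgeNorm
  congr 1
  rw [norm_neg, inner_neg_right, inner_sub_left, norm_sub_sq_real, real_inner_self_eq_norm_sq,
    real_inner_comm c b]
  ring

theorem invR_swap (p q : ℝ) (x y z : EuclideanSpace ℝ (Fin n)) : invR p q x y z = invR p q x z y := by
  simp only [invR, wedgeNorm_comm (y - x), norm_sub_rev y z]
  ring_nf

theorem invR_cyclic (p q : ℝ) (x y z : EuclideanSpace ℝ (Fin n)) :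
    invR p q x y z = invR p q y z x := by
  simp only [invR]
  have h : wedgeNorm (z - y) (x - y) = wedgeNorm (y - x) (z - x) := by
    rw [← wedgeNorm_sub_neg (y - x) (z - x)]
    congr 1 <;> abel
  rw [h, norm_sub_rev z x, norm_sub_rev z y, norm_sub_rev x y, norm_sub_rev x z]
  ring_nf

theorem measurable_invR (p q : ℝ) {β : Type*} [MeasurableSpace β]
    {f g h : β → EuclideanSpace ℝ (Fin n)} (hf : Measurable f) (hg : Measurable g)
    (hh : Measurable h) : Measurable fun t => invR p q (f t) (g t) (h t) := by
  unfold invR wedgeNorm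
  fun_prop

theorem invR_smul {p a b : ℝ} (ha : 0 < a) (hb : 0 < b) (x Q L Q₂ Q₃ : EuclideanSpace ℝ (Fin n))
    (h₂ : Q₂ = Q + L) (h₃ : (a + b) • Q₃ = a • Q + b • Q₂) :
    invR p 2 x (x + a • Q) (x + a • Q + b • Q₂) =
      dens p (a, b) * ((‖Q‖ ^ p * ‖Q₂‖ ^ p * ‖Q₃‖ ^ p)⁻¹ *
        (‖Q‖ ^ 2 * ‖L‖ ^ 2 - (inner ℝ Q L : ℝ) ^ 2)) := by
  have e1 : x + a • Q - x = a • Q := by abel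
  have e2 : x + a • Q + b • Q₂ - x = (a + b) • Q₃ := by rw [h₃]; abel
  have e3 : x + a • Q - (x + a • Q + b • Q₂) = -(b • Q₂) := by abel
  have hw : wedgeNorm (a • Q) ((a + b) • Q₃) ^ 2 =
      a ^ 2 * b ^ 2 * (‖Q‖ ^ 2 * ‖L‖ ^ 2 - (inner ℝ Q L : ℝ) ^ 2) := by
    have : (a + b) • Q₃ = (a + b) • Q + b • L := by
      rw [h₃, h₂, smul_add, add_smul]; abel
    rw [this, wedgeNorm_sq, norm_add_sq_real]
    simp only [norm_smul, Real.norm_eq_abs, inner_add_right, inner_smul_left, inner_smul_right,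
      real_inner_self_eq_norm_sq, mul_pow, sq_abs, RCLike.conj_to_real]
    ring
  unfold invR dens
  rw [e1, e2, e3, Real.rpow_ofNat, hw, norm_neg, norm_smul, norm_smul, norm_smul,
    Real.norm_of_nonneg ha.le, Real.norm_of_nonneg hb.le, Real.norm_of_nonneg (add_pos ha hb).le]
  have hab := add_pos ha hb
  rw [Real.mul_rpow (by positivity) (by positivity), Real.mul_rpow (by positivity) (by positivity),
    Real.mul_rpow (by positivity) (by positivity), Real.mul_rpow (by positivity) (by positivity),
    Real.mul_rpow (by positivity) (by positivity)]
  simp only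
  rw [Real.rpow_sub ha, Real.rpow_sub hb, Real.rpow_neg hab.le, Real.rpow_ofNat, Real.rpow_ofNat]
  simp only [div_eq_mul_inv, mul_inv]
  ring

end

/-- Truncation to the interval `[-2/3, 2/3]`. -/
def clip (x : ℝ) : ℝ := max (-(2 / 3)) (min x (2 / 3))

theorem continuous_clip : Continuous clip := by unfold clip; fun_prop

theorem abs_clip_le (x : ℝ) : |clip x| ≤ 2 / 3 := by
  rw [abs_le, clip]
  exact ⟨le_max_left _ _, max_le (by norm_num) (min_le_right _ _)⟩

theorem clip_of_abs_le {x : ℝ} (hx : |x| ≤ 2 / 3) : clip x = x := by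
  rw [abs_le] at hx
  rw [clip, min_eq_left hx.2, max_eq_right hx.1]

/-- The base points and increments of the six averages entering the energy density. -/
def node (i : Fin 6) (z : ℝ × ℝ × ℝ) : ℝ × ℝ :=
  ![(z.1 - z.2.1, 0), (z.1, 0), (z.1 + z.2.2, 0), (z.1, clip (-z.2.1)), (z.1, clip z.2.2),
    (z.1 - z.2.1, clip (z.2.1 + z.2.2))] i

theorem continuous_node (i : Fin 6) : Continuous (node i) := by
  have := continuous_clip
  unfold node
  fin_cases i <;> simp <;> constructor <;> fun_prop

theorem abs_node_snd_le (i : Fin 6) (z : ℝ × ℝ × ℝ) : |(node i z).2| ≤ 2 / 3 := by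
  unfold node
  fin_cases i <;> simp [abs_clip_le] <;> norm_num

/-- The exponents of the squared averages in the energy density. -/
def expo (p : ℝ) (i : Fin 6) : ℝ := ![1 / 2, 1 / 2, 1 / 2, -p / 2, -p / 2, -p / 2] i

/-- The averages of the velocity entering the energy density. -/
def samp {V : Type*} [NormedAddCommGroup V] [NormedSpace ℝ V] (i : Fin 6) (f : ℝ → V)
    (z : ℝ × ℝ × ℝ) : V := avg f (node i z).1 (node i z).2

/-- The energy density with respect to the configuration measure. -/
def eDens {n : ℕ} (p : ℝ) (f : ℝ → EuclideanSpace ℝ (Fin n)) (z : ℝ × ℝ × ℝ) : ℝ :=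
  (∏ i, (‖samp i f z‖ ^ 2) ^ expo p i) *
    (‖samp 3 f z‖ ^ 2 * ‖meanDiff f z‖ ^ 2 - (inner ℝ (samp 3 f z) (meanDiff f z) : ℝ) ^ 2)

theorem continuous_samp {V : Type*} [NormedAddCommGroup V] [NormedSpace ℝ V] (i : Fin 6) {f : ℝ → V}
    (hf : Continuous f) : Continuous (samp i f) :=
  (continuous_avg hf).comp (continuous_node i)

theorem measurable_eDens {n : ℕ} (p : ℝ) {f : ℝ → EuclideanSpace ℝ (Fin n)} (hf : Continuous f) :
    Measurable (eDens p f) := by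
  have h1 : ∀ i, Measurable (samp i f) := fun i => (continuous_samp i hf).measurable
  have h2 := (continuous_meanDiff hf).measurable
  unfold eDens
  have h3 := h1 3
  refine Measurable.mul (Finset.measurable_fun_prod _ fun i _ => ?_) (by fun_prop)
  have := h1 i
  fun_prop

theorem menger_pos_vel {n : ℕ} {p s : ℝ} (hs : 3 / 2 < s) (x : Coef n) :
    menger p 2 (pos hs x) (vel hs x) =
      6 * ∫⁻ z, ENNReal.ofReal (eDens p (vel hs x) z) ∂confMeasure p := by
  unfold menger
  have hpm := (pos hs x).continuous.measurable
  have hvm := (vel hs x).continuous.measurable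
  rw [lintegral_triple_eq (F := fun u v w => ENNReal.ofReal (‖vel hs x u‖ * ‖vel hs x v‖ *
    ‖vel hs x w‖ * invR p 2 (pos hs x u) (pos hs x v) (pos hs x w)))]
  · congr 1
    have hm : Measurable fun z => ENNReal.ofReal (eDens p (vel hs x) z) :=
      (measurable_eDens p (vel hs x).continuous).ennreal_ofReal
    rw [lintegral_confMeasure p hm, lintegral_arcMeasure p]
    · refine setLIntegral_congr_fun measurableSet_arcs fun y hy => ?_
      obtain ⟨a, b⟩ := y
      obtain ⟨ha, hb, h3, h4⟩ := hy
      simp only at ha hb h3 h4 ⊢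
      rw [← lintegral_const_mul' _ _ ENNReal.ofReal_ne_top]
      refine lintegral_congr fun u => ?_
      have hd : 0 ≤ dens p (a, b) := by unfold dens; positivity
      rw [← ENNReal.ofReal_mul hd]
      congr 1
      have c1 : clip (-a) = -a := clip_of_abs_le (by rw [abs_neg, abs_of_pos ha]; linarith)
      have c2 : clip b = b := clip_of_abs_le (by rw [abs_of_pos hb]; linarith)
      have c3 : clip (a + b) = a + b :=
        clip_of_abs_le (by rw [abs_of_pos (add_pos ha hb)]; linarith)
      set Q := avg (vel hs x) u (-a) with hQ
      set Q₂ := avg (vel hs x) u b with hQ₂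
      set Q₃ := avg (vel hs x) (u - a) (a + b) with hQ₃
      have e1 : pos hs x u = pos hs x (u - a) + a • Q := by
        have := smul_avg_vel hs x u (-a)
        rw [neg_smul, ← sub_eq_add_neg u a] at this
        rw [hQ, ← neg_neg (a • avg (vel hs x) u (-a)), this]
        abel
      have e2 : pos hs x (u + b) = pos hs x (u - a) + a • Q + b • Q₂ := by
        rw [hQ₂, smul_avg_vel hs x u b, ← e1]
        abel
      have e3 : (a + b) • Q₃ = a • Q + b • Q₂ := by
        rw [hQ₃, smul_avg_vel hs x (u - a) (a + b), show u - a + (a + b) = u + b by ring, e2]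
        abel
      have hL : meanDiff (vel hs x) (u, a, b) = Q₂ - Q := rfl
      rw [e2, e1, invR_smul ha hb (pos hs x (u - a)) Q (Q₂ - Q) Q₂ Q₃ (by abel) e3]
      have hz : ∀ u, avg (vel hs x) u 0 = vel hs x u := fun u => by simp [avg]
      have hr : ∀ (v : EuclideanSpace ℝ (Fin n)) (q : ℝ), (‖v‖ ^ 2) ^ (q / 2) = ‖v‖ ^ q := by
        intro v q
        rw [← Real.rpow_natCast, ← Real.rpow_mul (norm_nonneg _)]
        congr 1
        push_cast
        ring
      have h0 : samp 0 (vel hs x) (u, a, b) = vel hs x (u - a) := by simp [samp, node, hz]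
      have h1 : samp 1 (vel hs x) (u, a, b) = vel hs x u := by simp [samp, node, hz]
      have h2 : samp 2 (vel hs x) (u, a, b) = vel hs x (u + b) := by simp [samp, node, hz]
      have h3 : samp 3 (vel hs x) (u, a, b) = Q := by simp [samp, node, c1, hQ]
      have h4 : samp 4 (vel hs x) (u, a, b) = Q₂ := by simp [samp, node, c2, hQ₂]
      have h5 : samp 5 (vel hs x) (u, a, b) = Q₃ := by simp [samp, node, c3, hQ₃]
      have hprod : ∏ i, (‖samp i (vel hs x) (u, a, b)‖ ^ 2) ^ expo p i =
          ‖vel hs x (u - a)‖ * ‖vel hs x u‖ * ‖vel hs x (u + b)‖ *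
            (‖Q‖ ^ p * ‖Q₂‖ ^ p * ‖Q₃‖ ^ p)⁻¹ := by
        simp only [Fin.prod_univ_six, h0, h1, h2, h3, h4, h5]
        simp only [expo, Matrix.cons_val, hr, Real.rpow_one]
        simp only [Real.rpow_neg (norm_nonneg _), mul_inv]
        ring
      rw [eDens, hprod, h3, hL]
      ring
    · exact (hm.comp (f := fun q : (ℝ × ℝ) × ℝ => (q.2, q.1)) (by fun_prop)).lintegral_prod_right'
  · have := measurable_invR p 2 (hpm.comp (measurable_fst (α := ℝ) (β := ℝ × ℝ)))
      (hpm.comp (measurable_snd.fst : Measurable fun t : ℝ × ℝ × ℝ => t.2.1))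
      (hpm.comp (measurable_snd.snd : Measurable fun t : ℝ × ℝ × ℝ => t.2.2))
    refine Measurable.ennreal_ofReal (Measurable.mul ?_ this)
    fun_prop
  · intro u v w
    simp only [invR_swap p 2 (pos hs x u) (pos hs x v)]
    ring_nf
  · intro u v w
    simp only [invR_cyclic p 2 (pos hs x u) (pos hs x v)]
    ring_nf
  · intro u v w
    simp only [pos_periodic hs x u, vel_periodic hs x u]

/-! ### Operators on spaces of bounded continuous and square integrable functions -/

section

variable {α : Type*} [TopologicalSpace α] [SecondCountableTopology α] [MeasurableSpace α]
  [BorelSpace α] {E F G : Type*} [NormedAddCommGroup E] [NormedSpace ℝ E]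
  [NormedAddCommGroup F] [NormedSpace ℝ F] [NormedAddCommGroup G] [NormedSpace ℝ G]

/-- Bounded continuous functions as essentially bounded functions. -/
def BoundedContinuousFunction.toLinf (μ : Measure α) : (α →ᵇ E) →L[ℝ] Lp E ∞ μ :=
  LinearMap.mkContinuous
    { toFun := fun f => (f.memLp_top (μ := μ)).toLp f
      map_add' := fun _ _ => rfl
      map_smul' := fun _ _ => rfl } 1 fun f => by
    rw [one_mul]
    change ‖(f.memLp_top (μ := μ)).toLp f‖ ≤ ‖f‖
    rw [Lp.norm_toLp, eLpNorm_exponent_top]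
    refine ENNReal.toReal_le_of_le_ofReal (norm_nonneg _) ?_
    exact eLpNormEssSup_le_of_ae_bound (ae_of_all _ f.norm_coe_le_norm)

/-- Pointwise bilinear products of bounded continuous with square integrable functions. -/
def mulLp (B : E →L[ℝ] F →L[ℝ] G) (μ : Measure α) : (α →ᵇ E) →L[ℝ] Lp F 2 μ →L[ℝ] Lp G 2 μ :=
  (B.holderL μ ∞ 2 2).comp (BoundedContinuousFunction.toLinf μ)

theorem coeFn_mulLp (B : E →L[ℝ] F →L[ℝ] G) (μ : Measure α) (f : α →ᵇ E) (g : Lp F 2 μ) :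
    mulLp B μ f g =ᵐ[μ] fun x => B (f x) (g x) := by
  have h := B.coeFn_holder (r := 2) (BoundedContinuousFunction.toLinf μ f) g
  have h2 : BoundedContinuousFunction.toLinf μ f =ᵐ[μ] f := MemLp.coeFn_toLp (f.memLp_top (μ := μ))
  filter_upwards [h, h2] with x hx hx2
  rw [← hx2]
  exact hx

theorem MemLp.norm_toLp_le_of_bound {μ : Measure α} {f : α → E} (hf : Continuous f) {g : α → ℝ}
    (hfg : ∀ z, ‖f z‖ ≤ g z) {C : ℝ} (hC : 0 ≤ C) (hg : eLpNorm g 2 μ ≤ ENNReal.ofReal C) :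
    ∃ h : MemLp f 2 μ, ‖h.toLp f‖ ≤ C := by
  have h1 : eLpNorm f 2 μ ≤ ENNReal.ofReal C := (eLpNorm_mono_real hfg).trans hg
  have h2 : MemLp f 2 μ := ⟨hf.aestronglyMeasurable, h1.trans_lt ENNReal.ofReal_lt_top⟩
  refine ⟨h2, ?_⟩
  rw [Lp.norm_toLp]
  exact ENNReal.toReal_le_of_le_ofReal hC h1

end

section

variable {α : Type*} [TopologicalSpace α] {V : Type*} [NormedAddCommGroup V]
  [InnerProductSpace ℝ V]

theorem norm_inner_apply_le (f g : α →ᵇ V) (z : α) : ‖(inner ℝ (f z) (g z) : ℝ)‖ ≤ ‖f‖ * ‖g‖ :=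
  (norm_inner_le_norm _ _).trans (mul_le_mul (f.norm_coe_le_norm z)
    (g.norm_coe_le_norm z) (norm_nonneg _) (norm_nonneg _))

/-- The pointwise inner product of bounded continuous functions. -/
def innerB : (α →ᵇ V) →L[ℝ] (α →ᵇ V) →L[ℝ] (α →ᵇ ℝ) :=
  LinearMap.mkContinuous₂
    (LinearMap.mk₂ ℝ (fun f g : α →ᵇ V => BoundedContinuousFunction.ofNormedAddCommGroup
      (fun z => (inner ℝ (f z) (g z) : ℝ)) (f.continuous.inner g.continuous) (‖f‖ * ‖g‖)
        (norm_inner_apply_le f g))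
      (fun _ _ _ => by ext z; simp [inner_add_left]) (fun _ _ _ => by ext z; simp [inner_smul_left])
      (fun _ _ _ => by ext z; simp [inner_add_right])
      (fun _ _ _ => by ext z; simp [inner_smul_right])) 1
    (fun f g => by
      rw [one_mul]
      exact BoundedContinuousFunction.norm_ofNormedAddCommGroup_le _ (by positivity)
        (norm_inner_apply_le f g))

theorem innerB_apply (f g : α →ᵇ V) (z : α) : innerB f g z = (inner ℝ (f z) (g z) : ℝ) := rfl

theorem innerB_comm (f g : α →ᵇ V) : innerB f g = innerB g f := by
  ext z
  simp only [innerB_apply, real_inner_comm]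

end

section

variable {V : Type*} [NormedAddCommGroup V] [NormedSpace ℝ V]

theorem norm_avg_le (f : ℝ →ᵇ V) (u v : ℝ) : ‖avg f u v‖ ≤ ‖f‖ := by
  have := intervalIntegral.norm_integral_le_of_norm_le_const (a := (0:ℝ)) (b := 1) (C := ‖f‖)
    (f := fun t => f (u + t * v)) fun t _ => f.norm_coe_le_norm _
  simpa [avg] using this

theorem avg_add {f g : ℝ → V} (hf : Continuous f) (hg : Continuous g) (u v : ℝ) :
    avg (f + g) u v = avg f u v + avg g u v :=
  intervalIntegral.integral_add (Continuous.intervalIntegrable (by fun_prop) _ _)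
    (Continuous.intervalIntegrable (by fun_prop) _ _)

theorem avg_smul (c : ℝ) (f : ℝ → V) (u v : ℝ) : avg (c • f) u v = c • avg f u v :=
  intervalIntegral.integral_smul _ _

theorem meanDiff_add {f g : ℝ → V} (hf : Continuous f) (hg : Continuous g) (z : ℝ × ℝ × ℝ) :
    meanDiff (f + g) z = meanDiff f z + meanDiff g z := by
  simp only [meanDiff, avg_add hf hg]
  abel

theorem meanDiff_smul (c : ℝ) (f : ℝ → V) (z : ℝ × ℝ × ℝ) :
    meanDiff (c • f) z = c • meanDiff f z := by
  simp only [meanDiff, avg_smul, smul_sub]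

/-- The averages entering the energy density, as a bounded linear operator. -/
def sampCLM (i : Fin 6) : (ℝ →ᵇ V) →L[ℝ] ((ℝ × ℝ × ℝ) →ᵇ V) :=
  LinearMap.mkContinuous
    { toFun := fun f => BoundedContinuousFunction.ofNormedAddCommGroup (samp i f)
        (continuous_samp i f.continuous) ‖f‖ fun _ => norm_avg_le f _ _
      map_add' := fun f g => by ext z; exact avg_add f.continuous g.continuous _ _
      map_smul' := fun c f => by ext z; exact avg_smul c f _ _ } 1 fun f => by
    rw [one_mul]
    exact BoundedContinuousFunction.norm_ofNormedAddCommGroup_le _ (norm_nonneg _)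
      fun _ => norm_avg_le f _ _

theorem sampCLM_apply (i : Fin 6) (f : ℝ →ᵇ V) (z : ℝ × ℝ × ℝ) : sampCLM i f z = samp i f z := rfl

/-- The sum of the mean oscillations of `f` to the right and to the left of a point. -/
def oscSum (f : ℝ → V) (z : ℝ × ℝ × ℝ) : ℝ := osc f z.1 z.2.2 + osc f z.1 (-z.2.1)

theorem continuous_oscSum {f : ℝ → V} (hf : Continuous f) : Continuous (oscSum f) := by
  have h := continuous_osc hf
  exact (h.comp (continuous_fst.prodMk continuous_snd.snd)).add
    (h.comp (continuous_fst.prodMk continuous_snd.fst.neg))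

end

section

variable {V : Type*} [NormedAddCommGroup V] [InnerProductSpace ℝ V]

theorem osc_inner_le (f g : ℝ →ᵇ V) (u v : ℝ) :
    osc (innerB f g) u v ≤ ‖f‖ * osc g u v + ‖g‖ * osc f u v := by
  unfold osc
  rw [← intervalIntegral.integral_const_mul, ← intervalIntegral.integral_const_mul,
    ← intervalIntegral.integral_add (Continuous.intervalIntegrable (by fun_prop) _ _)
      (Continuous.intervalIntegrable (by fun_prop) _ _)]
  refine intervalIntegral.integral_mono_on zero_le_one
    (Continuous.intervalIntegrable (by fun_prop) _ _)
    (Continuous.intervalIntegrable (by fun_prop) _ _) fun t _ => ?_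
  have h : innerB f g (u + t * v) - innerB f g u =
      (inner ℝ (f (u + t * v)) (g (u + t * v) - g u) : ℝ) +
        (inner ℝ (f (u + t * v) - f u) (g u) : ℝ) := by
    simp only [innerB_apply, inner_sub_left, inner_sub_right]
    ring
  rw [h]
  refine (norm_add_le _ _).trans (add_le_add ?_ ?_)
  · exact (norm_inner_le_norm _ _).trans
      (mul_le_mul_of_nonneg_right (f.norm_coe_le_norm _) (norm_nonneg _))
  · rw [mul_comm ‖g‖]
    exact (norm_inner_le_norm _ _).trans
      (mul_le_mul_of_nonneg_left (g.norm_coe_le_norm _) (norm_nonneg _))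

theorem oscSum_inner_le (f g : ℝ →ᵇ V) (z : ℝ × ℝ × ℝ) :
    oscSum (innerB f g) z ≤ ‖f‖ * oscSum g z + ‖g‖ * oscSum f z := by
  have h1 := osc_inner_le f g z.1 z.2.2
  have h2 := osc_inner_le f g z.1 (-z.2.1)
  unfold oscSum
  linarith

end

theorem exists_eLpNorm_oscSum_le {p : ℝ} (hp : p < 8 / 3) (hs : 3 / 2 < 3 * p / 2 - 2) :
    ∃ C, 0 ≤ C ∧ ∀ (n : ℕ) (a : Coef n),
      eLpNorm (oscSum (vel hs a)) 2 (confMeasure p) ≤ ENNReal.ofReal (C * ‖a‖) := by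
  obtain ⟨C, hC, h⟩ := exists_lintegral_osc_le hp hs
  refine ⟨2 * √C, by positivity, fun n a => ?_⟩
  have key : ∀ g : ℝ × ℝ × ℝ → ℝ, (∀ z, 0 ≤ g z) →
      ∫⁻ z, ENNReal.ofReal (g z ^ 2) ∂confMeasure p ≤ ENNReal.ofReal (C * ‖a‖ ^ 2) →
      eLpNorm g 2 (confMeasure p) ≤ ENNReal.ofReal (√C * ‖a‖) := fun g hg0 hg => by
    rw [eLpNorm_eq_lintegral_rpow_enorm_toReal (by simp) (by simp)]
    have e : ∫⁻ z, ‖g z‖ₑ ^ (2:ℝ≥0∞).toReal ∂confMeasure p =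
        ∫⁻ z, ENNReal.ofReal (g z ^ 2) ∂confMeasure p := lintegral_congr fun z => by
      rw [Real.enorm_eq_ofReal (hg0 z), ENNReal.ofReal_pow (hg0 z)]
      simp
    rw [e]
    calc _ ≤ ENNReal.ofReal (C * ‖a‖ ^ 2) ^ (1 / (2:ℝ≥0∞).toReal) :=
          ENNReal.rpow_le_rpow hg (by simp)
      _ = ENNReal.ofReal ((C * ‖a‖ ^ 2) ^ (1 / (2:ℝ))) := by
          rw [ENNReal.ofReal_rpow_of_nonneg (by positivity) (by simp)]
          simp
      _ = _ := by
          rw [← Real.sqrt_eq_rpow, Real.sqrt_mul hC, Real.sqrt_sq (norm_nonneg _)]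
  have hc := continuous_osc (vel hs a).continuous
  refine (eLpNorm_add_le (f := fun z : ℝ × ℝ × ℝ => osc (vel hs a) z.1 z.2.2)
    (g := fun z : ℝ × ℝ × ℝ => osc (vel hs a) z.1 (-z.2.1))
    (hc.comp (continuous_fst.prodMk continuous_snd.snd)).aestronglyMeasurable
    (hc.comp (continuous_fst.prodMk continuous_snd.fst.neg)).aestronglyMeasurable
    (by norm_num)).trans ?_
  rw [mul_assoc, two_mul, ENNReal.ofReal_add (by positivity) (by positivity)]
  exact add_le_add (key _ (fun _ => osc_nonneg _ _ _) (h n a).1)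
    (key _ (fun _ => osc_nonneg _ _ _) (h n a).2)

/-- A constant bounding mean oscillations of the velocity by the norm of the coefficients. -/
def oscConst {p : ℝ} (hp : p < 8 / 3) (hs : 3 / 2 < 3 * p / 2 - 2) : ℝ :=
  (exists_eLpNorm_oscSum_le hp hs).choose

theorem oscConst_nonneg {p : ℝ} (hp : p < 8 / 3) (hs : 3 / 2 < 3 * p / 2 - 2) :
    0 ≤ oscConst hp hs := (exists_eLpNorm_oscSum_le hp hs).choose_spec.1

theorem eLpNorm_oscSum_le {p : ℝ} (hp : p < 8 / 3) (hs : 3 / 2 < 3 * p / 2 - 2) {n : ℕ}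
    (a : Coef n) : eLpNorm (oscSum (vel hs a)) 2 (confMeasure p) ≤
      ENNReal.ofReal (oscConst hp hs * ‖a‖) :=
  (exists_eLpNorm_oscSum_le hp hs).choose_spec.2 n a

section

variable {p : ℝ} (hp : p < 8 / 3) (hs : 3 / 2 < 3 * p / 2 - 2) {n : ℕ}

theorem meanDiff_vel_toLp (a : Coef n) : ∃ h : MemLp (meanDiff (vel hs a)) 2 (confMeasure p),
    ‖h.toLp‖ ≤ oscConst hp hs * ‖a‖ :=
  MemLp.norm_toLp_le_of_bound (continuous_meanDiff (vel hs a).continuous)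
    (norm_meanDiff_le (vel hs a).continuous)
    (mul_nonneg (oscConst_nonneg hp hs) (norm_nonneg _)) (eLpNorm_oscSum_le hp hs a)

/-- The difference of mean velocities as a bounded linear operator into `L²`. -/
def diffCLM : Coef n →L[ℝ] Lp (EuclideanSpace ℝ (Fin n)) 2 (confMeasure p) :=
  LinearMap.mkContinuous
    { toFun := fun a => (meanDiff_vel_toLp hp hs a).choose.toLp
      map_add' := fun a b => by
        rw [← MemLp.toLp_add]
        refine MemLp.toLp_congr _ _ (ae_of_all _ fun z => ?_)
        rw [map_add]
        exact meanDiff_add (vel hs a).continuous (vel hs b).continuous z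
      map_smul' := fun c a => by
        rw [RingHom.id_apply, ← MemLp.toLp_const_smul]
        refine MemLp.toLp_congr _ _ (ae_of_all _ fun z => ?_)
        rw [map_smul]
        exact meanDiff_smul c _ z }
    (oscConst hp hs) fun a => (meanDiff_vel_toLp hp hs a).choose_spec

theorem coeFn_diffCLM (a : Coef n) :
    diffCLM hp hs a =ᵐ[confMeasure p] meanDiff (vel hs a) :=
  MemLp.coeFn_toLp (meanDiff_vel_toLp hp hs a).choose

theorem meanDiff_inner_toLp (a b : Coef n) :
    ∃ h : MemLp (meanDiff (innerB (vel hs a) (vel hs b))) 2 (confMeasure p),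
    ‖h.toLp‖ ≤ 2 * ‖vel (n := n) hs‖ * oscConst hp hs * ‖a‖ * ‖b‖ := by
  have hC := oscConst_nonneg hp hs
  refine MemLp.norm_toLp_le_of_bound (continuous_meanDiff (innerB _ _).continuous)
    (g := ‖vel hs a‖ • oscSum (vel hs b) + ‖vel hs b‖ • oscSum (vel hs a))
    (fun z => (norm_meanDiff_le (innerB _ _).continuous z).trans
      (oscSum_inner_le (vel hs a) (vel hs b) z))
    (by positivity) ?_
  have h1 := (continuous_oscSum (vel hs a).continuous).aestronglyMeasurable (μ := confMeasure p)
  have h2 := (continuous_oscSum (vel hs b).continuous).aestronglyMeasurable (μ := confMeasure p)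
  refine (eLpNorm_add_le (h2.const_smul _) (h1.const_smul _) (by norm_num)).trans ?_
  rw [eLpNorm_const_smul, eLpNorm_const_smul]
  have h3 : ∀ c d : Coef n, ‖‖vel hs c‖‖ₑ * eLpNorm (oscSum (vel hs d)) 2 (confMeasure p) ≤
      ENNReal.ofReal (‖vel (n := n) hs‖ * oscConst hp hs * ‖c‖ * ‖d‖) := fun c d => by
    rw [Real.enorm_eq_ofReal (norm_nonneg _)]
    refine (mul_le_mul_right (eLpNorm_oscSum_le hp hs d) _).trans ?_
    rw [← ENNReal.ofReal_mul (norm_nonneg _)]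
    refine ENNReal.ofReal_le_ofReal ?_
    have := mul_le_mul_of_nonneg_right ((vel (n := n) hs).le_opNorm c)
      (mul_nonneg hC (norm_nonneg d))
    refine this.trans (le_of_eq ?_)
    ring
  refine (add_le_add (h3 a b) (h3 b a)).trans ?_
  rw [← ENNReal.ofReal_add (by positivity) (by positivity)]
  refine ENNReal.ofReal_le_ofReal (le_of_eq ?_)
  ring

/-- The difference of the means of the inner product of two velocities, as a bounded bilinear
map into `L²`. -/
def gramCLM : Coef n →L[ℝ] Coef n →L[ℝ] Lp ℝ 2 (confMeasure p) :=
  LinearMap.mkContinuous₂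
    (LinearMap.mk₂ ℝ (fun a b : Coef n => (meanDiff_inner_toLp hp hs a b).choose.toLp)
      (fun a b c => by
        rw [← MemLp.toLp_add]
        refine MemLp.toLp_congr _ _ (ae_of_all _ fun z => ?_)
        rw [map_add, map_add]
        exact meanDiff_add (innerB _ _).continuous (innerB _ _).continuous z)
      (fun r a b => by
        rw [← MemLp.toLp_const_smul]
        refine MemLp.toLp_congr _ _ (ae_of_all _ fun z => ?_)
        rw [map_smul, map_smul]
        exact meanDiff_smul r _ z)
      (fun a b c => by
        rw [← MemLp.toLp_add]
        refine MemLp.toLp_congr _ _ (ae_of_all _ fun z => ?_)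
        rw [map_add, map_add]
        exact meanDiff_add (innerB _ _).continuous (innerB _ _).continuous z)
      (fun r a b => by
        rw [← MemLp.toLp_const_smul]
        refine MemLp.toLp_congr _ _ (ae_of_all _ fun z => ?_)
        rw [map_smul, map_smul]
        exact meanDiff_smul r _ z))
    (2 * ‖vel (n := n) hs‖ * oscConst hp hs) fun a b => (meanDiff_inner_toLp hp hs a b).choose_spec

theorem coeFn_gramCLM (a b : Coef n) : gramCLM hp hs a b =ᵐ[confMeasure p]
    meanDiff (innerB (vel hs a) (vel hs b)) :=
  MemLp.coeFn_toLp (meanDiff_inner_toLp hp hs a b).choose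

theorem gramCLM_comm (a b : Coef n) : gramCLM hp hs a b = gramCLM hp hs b a := by
  refine Lp.ext ?_
  filter_upwards [coeFn_gramCLM hp hs a b, coeFn_gramCLM hp hs b a] with z h1 h2
  rw [h1, h2, innerB_comm]

end

/-! ### The energy as a smooth functional -/

theorem exists_le_norm_avg {n : ℕ} {s : ℝ} (hs : 3 / 2 < s) (x : Coef n)
    (hinj : InjCircle (pos hs x)) (hunit : ∀ u, ‖vel hs x u‖ = 1) :
    ∃ c, 0 < c ∧ ∀ u v : ℝ, |v| ≤ 2 / 3 → c ≤ ‖avg (vel hs x) u v‖ := by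
  have hK : IsCompact (Icc (0:ℝ) 1 ×ˢ Icc (-(2 / 3) : ℝ) (2 / 3)) := isCompact_Icc.prod isCompact_Icc
  obtain ⟨w, hw, hmin⟩ : ∃ w ∈ Icc (0:ℝ) 1 ×ˢ Icc (-(2 / 3) : ℝ) (2 / 3),
      ∀ q ∈ Icc (0:ℝ) 1 ×ˢ Icc (-(2 / 3) : ℝ) (2 / 3),
        ‖avg (vel hs x) w.1 w.2‖ ≤ ‖avg (vel hs x) q.1 q.2‖ := by
    have hf := (vel hs x).continuous
    generalize (vel hs x : ℝ → EuclideanSpace ℝ (Fin n)) = f at hf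
    have hcont : Continuous fun q : ℝ × ℝ => ‖avg f q.1 q.2‖ := (continuous_avg hf).norm
    exact hK.exists_isMinOn ⟨(0, 0), by norm_num⟩ hcont.continuousOn
  refine ⟨‖avg (vel hs x) w.1 w.2‖, ?_, fun u v hv => ?_⟩
  · rw [norm_pos_iff]
    intro h0
    by_cases hv : w.2 = 0
    · rw [hv] at h0
      have := hunit w.1
      simp [avg] at h0
      simp [h0] at this
    · have h1 := smul_avg_vel hs x w.1 w.2
      rw [h0, smul_zero] at h1
      obtain ⟨k, hk⟩ := hinj w.1 (w.1 + w.2) (sub_eq_zero.mp h1.symm).symm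
      have hk' : w.2 = k := by linarith
      have h2 : |(k:ℝ)| < 1 := by
        rw [← hk']
        exact (abs_le.mpr hw.2).trans_lt (by norm_num)
      have h3 : |k| < 1 := by exact_mod_cast h2
      rw [Int.abs_lt_one_iff] at h3
      exact hv (by rw [hk', h3]; simp)
  · have hper : avg (vel hs x) u v = avg (vel hs x) (Int.fract u) v := by
      unfold avg
      congr 1
      funext t
      have := (vel_periodic hs x).int_mul ⌊u⌋ (Int.fract u + t * v)
      rw [← this]
      congr 1
      have := Int.fract_add_floor u
      linarith
    rw [hper]
    have hmem : (Int.fract u, v) ∈ Icc (0:ℝ) 1 ×ˢ Icc (-(2 / 3) : ℝ) (2 / 3) :=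
      ⟨⟨Int.fract_nonneg u, (Int.fract_lt_one u).le⟩, abs_le.mp hv⟩
    have h1 := hmin (Int.fract u, v) hmem
    exact h1

theorem ContDiffAt.clm_bilinear {E F G Z : Type*} [NormedAddCommGroup E] [NormedSpace ℝ E]
    [NormedAddCommGroup F] [NormedSpace ℝ F] [NormedAddCommGroup G] [NormedSpace ℝ G]
    [NormedAddCommGroup Z] [NormedSpace ℝ Z] (B : E →L[ℝ] F →L[ℝ] G) {f : Z → E} {g : Z → F}
    {z : Z} (hf : ContDiffAt ℝ (⊤ : ℕ∞) f z) (hg : ContDiffAt ℝ (⊤ : ℕ∞) g z) :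
    ContDiffAt ℝ (⊤ : ℕ∞) (fun z => B (f z) (g z)) z := by
  have h : ContDiffAt ℝ (⊤ : ℕ∞) (fun z => B (f z)) z := B.contDiff.contDiffAt.comp z hf
  exact h.clm_apply hg

theorem contDiff_innerB_self {α : Type*} [TopologicalSpace α] {V : Type*} [NormedAddCommGroup V]
    [InnerProductSpace ℝ V] {Y : Type*} [NormedAddCommGroup Y] [NormedSpace ℝ Y]
    (S : Y →L[ℝ] (α →ᵇ V)) : ContDiff ℝ (⊤ : ℕ∞) fun y => innerB (S y) (S y) :=
  contDiff_iff_contDiffAt.mpr fun _ =>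
    ContDiffAt.clm_bilinear innerB S.contDiff.contDiffAt S.contDiff.contDiffAt

theorem contDiff_sq_samp {V : Type*} [NormedAddCommGroup V] [InnerProductSpace ℝ V] (i : Fin 6) :
    ContDiff ℝ (⊤ : ℕ∞) fun y : ℝ →ᵇ V => innerB (sampCLM i y) (sampCLM i y) :=
  contDiff_innerB_self (Y := ℝ →ᵇ V) (sampCLM i)

theorem exists_contDiffAt_factor {V : Type*} [NormedAddCommGroup V] [InnerProductSpace ℝ V]
    (p : ℝ) (y₀ : ℝ →ᵇ V) {c : ℝ} (hc : 0 < c) (hy : ∀ i z, c ≤ ‖samp i y₀ z‖) :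
    ∃ m : (ℝ →ᵇ V) → ((ℝ × ℝ × ℝ) →ᵇ ℝ), ContDiffAt ℝ (⊤ : ℕ∞) m y₀ ∧
      ∀ᶠ y in 𝓝 y₀, ∀ z, m y z = ∏ i, (‖samp i y z‖ ^ 2) ^ expo p i := by
  have hq : ∀ (i : Fin 6) (y : ℝ →ᵇ V) z, innerB (sampCLM i y) (sampCLM i y) z =
      ‖samp i y z‖ ^ 2 := fun i y z => by
    rw [innerB_apply, real_inner_self_eq_norm_sq, sampCLM_apply]
  have h := fun i => exists_contDiffAt_rpow (innerB (sampCLM i y₀) (sampCLM i y₀))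
    (c := c ^ 2) (by positivity) (fun z => by
      rw [hq]
      exact pow_le_pow_left₀ hc.le (hy i z) 2) (expo p i)
  choose ρ hρ hρ2 using h
  refine ⟨fun y => ∏ i, ρ i (innerB (sampCLM i y) (sampCLM i y)), ?_, ?_⟩
  · have h2 : ∀ i, ContDiffAt ℝ (⊤ : ℕ∞) (fun y => ρ i (innerB (sampCLM i y) (sampCLM i y))) y₀ := by
      intro i
      have h1 : ContDiffAt ℝ (⊤ : ℕ∞) (fun y => innerB (sampCLM i y) (sampCLM i y)) y₀ :=
        (contDiff_sq_samp i).contDiffAt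
      exact ContDiffAt.comp (g := ρ i) y₀ (hρ i) h1
    exact contDiffAt_prod fun i _ => h2 i
  · have h2 : ∀ᶠ y in 𝓝 y₀, ∀ i, ∀ z, ρ i (innerB (sampCLM i y) (sampCLM i y)) z =
        innerB (sampCLM i y) (sampCLM i y) z ^ expo p i := by
      rw [eventually_all]
      intro i
      have h3 : ContinuousAt (fun y => innerB (sampCLM i y) (sampCLM i y)) y₀ :=
        (contDiff_sq_samp i).continuous.continuousAt
      exact h3.eventually (hρ2 i)
    filter_upwards [h2] with y hy z
    have e : (∏ i, ρ i (innerB (sampCLM i y) (sampCLM i y))) z =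
        ∏ i, ρ i (innerB (sampCLM i y) (sampCLM i y)) z := by
      simp only [Fin.prod_univ_six, BoundedContinuousFunction.coe_mul, Pi.mul_apply]
    rw [e]
    exact Finset.prod_congr rfl fun i _ => by rw [hy i z, hq]

section

variable {α : Type*} [TopologicalSpace α] [SecondCountableTopology α] [MeasurableSpace α]
  [BorelSpace α] {V : Type*} [NormedAddCommGroup V] [InnerProductSpace ℝ V]

/-- The pointwise inner product of a bounded continuous and a square integrable function. -/
def innerLp (μ : Measure α) : (α →ᵇ V) →L[ℝ] Lp V 2 μ →L[ℝ] Lp ℝ 2 μ :=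
  mulLp (isBoundedBilinearMap_inner (𝕜 := ℝ) (E := V)).toContinuousLinearMap μ

theorem coeFn_innerLp (μ : Measure α) (Q : α →ᵇ V) (l : Lp V 2 μ) :
    innerLp μ Q l =ᵐ[μ] fun z => (inner ℝ (Q z) (l z) : ℝ) := coeFn_mulLp _ μ Q l

/-- The weighted integral of the squared area of the parallelogram spanned by `Q` and `l`. -/
def areaForm (μ : Measure α) (m : α →ᵇ ℝ) (Q : α →ᵇ V) (l : Lp V 2 μ) : ℝ :=
  (inner ℝ (mulLp (ContinuousLinearMap.lsmul ℝ ℝ) μ (m * innerB Q Q) l) l : ℝ) -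
    (inner ℝ (mulLp (ContinuousLinearMap.mul ℝ ℝ) μ m (innerLp μ Q l)) (innerLp μ Q l) : ℝ)

theorem integrable_areaForm (μ : Measure α) (m : α →ᵇ ℝ) (Q : α →ᵇ V) (l : Lp V 2 μ) :
    Integrable (fun z => m z * (‖Q z‖ ^ 2 * ‖l z‖ ^ 2 - (inner ℝ (Q z) (l z) : ℝ) ^ 2)) μ ∧
    areaForm μ m Q l =
      ∫ z, m z * (‖Q z‖ ^ 2 * ‖l z‖ ^ 2 - (inner ℝ (Q z) (l z) : ℝ) ^ 2) ∂μ := by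
  have i1 := L2.integrable_inner (𝕜 := ℝ)
    (mulLp (ContinuousLinearMap.lsmul ℝ ℝ) μ (m * innerB Q Q) l) l
  have i2 := L2.integrable_inner (𝕜 := ℝ)
    (mulLp (ContinuousLinearMap.mul ℝ ℝ) μ m (innerLp μ Q l)) (innerLp μ Q l)
  have e : (fun z => (inner ℝ (mulLp (ContinuousLinearMap.lsmul ℝ ℝ) μ (m * innerB Q Q) l z) (l z)
      : ℝ) - (inner ℝ (mulLp (ContinuousLinearMap.mul ℝ ℝ) μ m (innerLp μ Q l) z)
        (innerLp μ Q l z) : ℝ)) =ᵐ[μ]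
      fun z => m z * (‖Q z‖ ^ 2 * ‖l z‖ ^ 2 - (inner ℝ (Q z) (l z) : ℝ) ^ 2) := by
    filter_upwards [coeFn_mulLp (ContinuousLinearMap.lsmul ℝ ℝ) μ (m * innerB Q Q) l,
      coeFn_mulLp (ContinuousLinearMap.mul ℝ ℝ) μ m (innerLp μ Q l), coeFn_innerLp μ Q l]
      with z h1 h2 h3
    rw [h1, h2, h3]
    simp only [ContinuousLinearMap.lsmul_apply, inner_smul_left, BoundedContinuousFunction.coe_mul,
      Pi.mul_apply, innerB_apply, real_inner_self_eq_norm_sq, RCLike.conj_to_real,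
      ContinuousLinearMap.mul_apply', RCLike.inner_apply]
    ring
  refine ⟨(i1.sub i2).congr e, ?_⟩
  rw [areaForm, L2.inner_def, L2.inner_def, ← integral_sub i1 i2]
  exact integral_congr_ae e

theorem sq_inner_le (x y : V) : (inner ℝ x y : ℝ) ^ 2 ≤ ‖x‖ ^ 2 * ‖y‖ ^ 2 := by
  have := real_inner_mul_inner_self_le x y
  rw [real_inner_self_eq_norm_sq, real_inner_self_eq_norm_sq] at this
  nlinarith

theorem le_areaForm (μ : Measure α) {m : α →ᵇ ℝ} {Q : α →ᵇ V} (hm : ∀ z, 1 ≤ m z) {c : ℝ}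
    (hc : 0 ≤ c) (hQ : ∀ z, c ≤ ‖Q z‖) (l : Lp V 2 μ) :
    c ^ 2 * ‖l‖ ^ 2 - ‖innerLp μ Q l‖ ^ 2 ≤ areaForm μ m Q l := by
  have h1 : ‖l‖ ^ 2 = ∫ z, ‖l z‖ ^ 2 ∂μ := by
    rw [← real_inner_self_eq_norm_sq, L2.inner_def]
    exact integral_congr_ae (ae_of_all _ fun z => real_inner_self_eq_norm_sq _)
  have h2 : ‖innerLp μ Q l‖ ^ 2 = ∫ z, (inner ℝ (Q z) (l z) : ℝ) ^ 2 ∂μ := by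
    rw [← real_inner_self_eq_norm_sq, L2.inner_def]
    refine integral_congr_ae ?_
    filter_upwards [coeFn_innerLp μ Q l] with z hz
    simp only [real_inner_self_eq_norm_sq, hz, Real.norm_eq_abs, sq_abs]
  have i1 : Integrable (fun z => c ^ 2 * ‖l z‖ ^ 2) μ := by
    refine Integrable.const_mul ?_ _
    refine (L2.integrable_inner (𝕜 := ℝ) l l).congr (ae_of_all _ fun z => ?_)
    exact real_inner_self_eq_norm_sq _
  have i2 : Integrable (fun z => (inner ℝ (Q z) (l z) : ℝ) ^ 2) μ := by
    refine (L2.integrable_inner (𝕜 := ℝ) (innerLp μ Q l) (innerLp μ Q l)).congr ?_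
    filter_upwards [coeFn_innerLp μ Q l] with z hz
    simp only [real_inner_self_eq_norm_sq, hz, Real.norm_eq_abs, sq_abs]
  rw [(integrable_areaForm μ m Q l).2, h1, h2, ← integral_const_mul, ← integral_sub i1 i2]
  refine integral_mono (i1.sub i2) (integrable_areaForm μ m Q l).1 fun z => ?_
  simp only
  have h3 := sq_inner_le (Q z) (l z)
  have h4 : c ^ 2 ≤ ‖Q z‖ ^ 2 := pow_le_pow_left₀ hc (hQ z) 2
  nlinarith [hm z, mul_le_mul_of_nonneg_right h4 (sq_nonneg ‖l z‖)]

set_option maxHeartbeats 1000000 in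
theorem contDiffAt_areaForm (μ : Measure α) {Z : Type*} [NormedAddCommGroup Z] [NormedSpace ℝ Z]
    {m : Z → (α →ᵇ ℝ)} {Q : Z → (α →ᵇ V)} {l : Z → Lp V 2 μ} {z : Z}
    (hm : ContDiffAt ℝ (⊤ : ℕ∞) m z) (hQ : ContDiffAt ℝ (⊤ : ℕ∞) Q z)
    (hl : ContDiffAt ℝ (⊤ : ℕ∞) l z) :
    ContDiffAt ℝ (⊤ : ℕ∞) (fun z => areaForm μ (m z) (Q z) (l z)) z := by
  have h1 : ContDiffAt ℝ (⊤ : ℕ∞) (fun z => innerB (Q z) (Q z)) z :=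
    ContDiffAt.clm_bilinear innerB hQ hQ
  have h2 : ContDiffAt ℝ (⊤ : ℕ∞) (fun z => innerLp μ (Q z) (l z)) z :=
    ContDiffAt.clm_bilinear (innerLp μ) hQ hl
  have h3 : ContDiffAt ℝ (⊤ : ℕ∞)
      (fun z => mulLp (ContinuousLinearMap.lsmul ℝ ℝ) μ (m z * innerB (Q z) (Q z)) (l z)) z :=
    ContDiffAt.clm_bilinear (mulLp (ContinuousLinearMap.lsmul ℝ ℝ) μ) (hm.mul h1) hl
  have h4 : ContDiffAt ℝ (⊤ : ℕ∞)
      (fun z => mulLp (ContinuousLinearMap.mul ℝ ℝ) μ (m z) (innerLp μ (Q z) (l z))) z :=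
    ContDiffAt.clm_bilinear (mulLp (ContinuousLinearMap.mul ℝ ℝ) μ) hm h2
  exact (h3.inner ℝ hl).sub (h4.inner ℝ h2)

end

theorem menger_toReal_eq {n : ℕ} {p : ℝ} (hp : p < 8 / 3) (hs : 3 / 2 < 3 * p / 2 - 2) (x : Coef n)
    (m : (ℝ × ℝ × ℝ) →ᵇ ℝ) (hm : ∀ z, m z = ∏ i, (‖samp i (vel hs x) z‖ ^ 2) ^ expo p i) :
    (menger p 2 (pos hs x) (vel hs x)).toReal =
      6 * areaForm (confMeasure p) m (sampCLM 3 (vel hs x)) (diffCLM hp hs x) := by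
  obtain ⟨hi, he⟩ := integrable_areaForm (confMeasure p) m (sampCLM 3 (vel hs x)) (diffCLM hp hs x)
  have e : (fun z => m z * (‖sampCLM 3 (vel hs x) z‖ ^ 2 * ‖diffCLM hp hs x z‖ ^ 2 -
      (inner ℝ (sampCLM 3 (vel hs x) z) (diffCLM hp hs x z) : ℝ) ^ 2)) =ᵐ[confMeasure p]
      eDens p (vel hs x) := by
    filter_upwards [coeFn_diffCLM hp hs x] with z hz
    rw [hz, sampCLM_apply, hm, eDens]
  have h0 : ∀ z, 0 ≤ eDens p (vel hs x) z := fun z => by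
    refine mul_nonneg (Finset.prod_nonneg fun i _ => by positivity) (sub_nonneg.mpr ?_)
    exact sq_inner_le _ _
  rw [menger_pos_vel, he, integral_congr_ae e,
    ← ofReal_integral_eq_lintegral_ofReal (hi.congr e) (ae_of_all _ h0), ENNReal.toReal_mul,
    ENNReal.toReal_ofReal (integral_nonneg h0)]
  simp

/-! ### The Gårding inequality -/

theorem fderiv_fderiv_norm_sq_bilinear {X H : Type*} [NormedAddCommGroup X] [NormedSpace ℝ X]
    [NormedAddCommGroup H] [InnerProductSpace ℝ H] (Γ : X →L[ℝ] X →L[ℝ] H)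
    (hsymm : ∀ a b, Γ a b = Γ b a) {x : X} (hx : Γ x x = 0) :
    ContDiffAt ℝ (⊤ : ℕ∞) (fun x => ‖Γ x x‖ ^ 2) x ∧ fderiv ℝ (fun x => ‖Γ x x‖ ^ 2) x = 0 ∧
      ∀ h, fderiv ℝ (fderiv ℝ fun x => ‖Γ x x‖ ^ 2) x h h = 8 * ‖Γ x h‖ ^ 2 := by
  have h1 : ContDiffAt ℝ (⊤ : ℕ∞) (fun x => Γ x x) x :=
    ContDiffAt.clm_bilinear Γ contDiffAt_id contDiffAt_id
  have h2 : ContDiffAt ℝ (⊤ : ℕ∞) (fun x => ‖Γ x x‖ ^ 2) x := h1.norm_sq ℝ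
  refine ⟨h2, ?_, fun h => ?_⟩
  · refine IsLocalMin.fderiv_eq_zero (Eventually.of_forall fun y => ?_)
    simp only [hx]
    simp
  · have h3 := fderiv_fderiv_apply_of_line (h := h) h2 (c₀ := 0) (c₁ := 0) (c₂ := 4 * ‖Γ x h‖ ^ 2)
      (c₃ := 4 * inner ℝ (Γ x h) (Γ h h)) (c₄ := ‖Γ h h‖ ^ 2) fun t => by
        have e : Γ (x + t • h) (x + t • h) = (2 * t) • Γ x h + (t ^ 2) • Γ h h := by
          simp only [map_add, map_smul, add_apply, smul_apply,
            hx, hsymm h x]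
          module
        simp only [e, norm_add_sq_real, norm_smul, inner_smul_left, inner_smul_right, mul_pow,
          Real.norm_eq_abs, sq_abs, RCLike.conj_to_real]
        ring
    rw [h3]
    ring

theorem garding_abstract {X Y H H' : Type*} [NormedAddCommGroup X] [NormedSpace ℝ X]
    [NormedAddCommGroup Y] [NormedSpace ℝ Y] [NormedAddCommGroup H] [NormedSpace ℝ H]
    [NormedAddCommGroup H'] [InnerProductSpace ℝ H'] (V : X →L[ℝ] Y) (L : X →L[ℝ] H)
    (Γ : X →L[ℝ] X →L[ℝ] H') (hsymm : ∀ a b, Γ a b = Γ b a) {x : X} (hx : Γ x x = 0)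
    {g : Y × H → ℝ} (hg : ContDiffAt ℝ (⊤ : ℕ∞) g (V x, L x)) (T : H →L[ℝ] H') {c C : ℝ}
    (hc : 0 < c) (hT : ∀ h, ‖T (L h)‖ ≤ ‖Γ x h‖ + C * ‖V h‖)
    (hpos : ∀ k, 12 * (c ^ 2 * ‖k‖ ^ 2 - ‖T k‖ ^ 2) ≤
      fderiv ℝ (fderiv ℝ g) (V x, L x) (0, k) (0, k)) :
    ContDiffAt ℝ (⊤ : ℕ∞) (fun x => g (V x, L x) + 3 * ‖Γ x x‖ ^ 2) x ∧
    ∃ K, 0 ≤ K ∧ ∀ h, 6 * c ^ 2 * ‖L h‖ ^ 2 - K * ‖V h‖ ^ 2 ≤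
      fderiv ℝ (fderiv ℝ fun x => g (V x, L x) + 3 * ‖Γ x x‖ ^ 2) x h h := by
  obtain ⟨hN, -, hN2⟩ := fderiv_fderiv_norm_sq_bilinear Γ hsymm hx
  have hN3 : ContDiffAt ℝ (⊤ : ℕ∞) (fun x => 3 * ‖Γ x x‖ ^ 2) x := contDiffAt_const.mul hN
  have hgV : ContDiffAt ℝ (⊤ : ℕ∞) (fun x => g (V x, L x)) x :=
    ContDiffAt.comp (g := g) x hg (V.contDiff.contDiffAt.prodMk L.contDiff.contDiffAt)
  have hD : ∀ h, fderiv ℝ (fderiv ℝ fun x => g (V x, L x) + 3 * ‖Γ x x‖ ^ 2) x h h =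
      fderiv ℝ (fderiv ℝ g) (V x, L x) (V h, L h) (V h, L h) + 24 * ‖Γ x h‖ ^ 2 := by
    intro h
    have hev : ∀ᶠ y in 𝓝 x, DifferentiableAt ℝ (fun x => g (V x, L x)) y := by
      have := (hgV.of_le (m := 1) (by exact_mod_cast le_top)).eventually (by simp)
      exact this.mono fun x hx => hx.differentiableAt (by simp)
    have hev2 : ∀ᶠ y in 𝓝 x, DifferentiableAt ℝ (fun x => ‖Γ x x‖ ^ 2) y := by
      have := (hN.of_le (m := 1) (by exact_mod_cast le_top)).eventually (by simp)
      exact this.mono fun x hx => hx.differentiableAt (by simp)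
    have e : (fderiv ℝ fun x => g (V x, L x) + 3 * ‖Γ x x‖ ^ 2) =ᶠ[𝓝 x] fun y =>
        fderiv ℝ (fun x => g (V x, L x)) y + (3:ℝ) • fderiv ℝ (fun x => ‖Γ x x‖ ^ 2) y := by
      filter_upwards [hev, hev2] with y h1 h2
      exact (h1.hasFDerivAt.add (h2.hasFDerivAt.const_mul 3)).fderiv
    have d1 := hgV.differentiableAt_fderiv_top
    have d2 := hN.differentiableAt_fderiv_top
    have e2 : fderiv ℝ (fderiv ℝ fun x => g (V x, L x) + 3 * ‖Γ x x‖ ^ 2) x =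
        fderiv ℝ (fderiv ℝ fun x => g (V x, L x)) x +
          (3:ℝ) • fderiv ℝ (fderiv ℝ fun x => ‖Γ x x‖ ^ 2) x := by
      rw [e.fderiv_eq]
      exact (d1.hasFDerivAt.add (d2.hasFDerivAt.const_smul (3:ℝ))).fderiv
    have e3 := fderiv_fderiv_comp_clm (V.prod L) (g := g) (x := x) hg h h
    simp only [ContinuousLinearMap.prod_apply] at e3
    rw [e2, add_apply, add_apply, e3,
      smul_apply, smul_apply, hN2, smul_eq_mul]
    ring
  refine ⟨hgV.add hN3, ?_⟩
  set B := fderiv ℝ (fderiv ℝ g) (V x, L x) with hB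
  refine ⟨‖B‖ + ‖B‖ ^ 2 / (6 * c ^ 2) + 24 * C ^ 2, by positivity, fun h => ?_⟩
  rw [hD h]
  have hsplit : B (V h, L h) (V h, L h) = B (0, L h) (0, L h) + B (0, L h) (V h, 0) +
      B (V h, 0) (0, L h) + B (V h, 0) (V h, 0) := by
    have e : (V h, L h) = ((0, L h) : Y × H) + (V h, 0) := by simp
    rw [e]
    simp only [map_add, add_apply]
    ring
  have n1 : ‖((0, L h) : Y × H)‖ = ‖L h‖ := by simp [Prod.norm_def]
  have n2 : ‖((V h, 0) : Y × H)‖ = ‖V h‖ := by simp [Prod.norm_def]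
  have b1 := abs_le.mp (B.le_opNorm₂ (0, L h) (V h, 0))
  have b2 := abs_le.mp (B.le_opNorm₂ (V h, 0) (0, L h))
  have b3 := abs_le.mp (B.le_opNorm₂ (V h, 0) (V h, 0))
  rw [n1, n2] at b1 b2
  rw [n2] at b3
  have h1 := hpos (L h)
  have h2 : ‖T (L h)‖ ^ 2 ≤ 2 * ‖Γ x h‖ ^ 2 + 2 * C ^ 2 * ‖V h‖ ^ 2 := by
    have := pow_le_pow_left₀ (norm_nonneg _) (hT h) 2
    nlinarith [sq_nonneg (‖Γ x h‖ - C * ‖V h‖)]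
  have h3 : 2 * (‖B‖ * ‖L h‖ * ‖V h‖) ≤ 6 * c ^ 2 * ‖L h‖ ^ 2 + ‖B‖ ^ 2 / (6 * c ^ 2) * ‖V h‖ ^ 2 := by
    have h4 : 0 ≤ (6 * c ^ 2 * ‖L h‖ - ‖B‖ * ‖V h‖) ^ 2 / (6 * c ^ 2) := by positivity
    have h5 : (6 * c ^ 2 * ‖L h‖ - ‖B‖ * ‖V h‖) ^ 2 / (6 * c ^ 2) =
        6 * c ^ 2 * ‖L h‖ ^ 2 - 2 * (‖B‖ * ‖L h‖ * ‖V h‖) + ‖B‖ ^ 2 / (6 * c ^ 2) * ‖V h‖ ^ 2 := by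
      field_simp
      ring
    linarith
  rw [hsplit]
  nlinarith [b1.1, b2.1, b3.1]

section

variable {V : Type*} [NormedAddCommGroup V] [InnerProductSpace ℝ V] [CompleteSpace V]

theorem abs_inner_avg_sub_le (f h : ℝ →ᵇ V) (q : V) (u v : ℝ) :
    |(inner ℝ q (avg h u v) : ℝ) - avg (innerB f h) u v| ≤ ‖h‖ * (‖q - f u‖ + osc f u v) := by
  have h1 : (inner ℝ q (avg h u v) : ℝ) - avg (innerB f h) u v =
      ∫ t in (0:ℝ)..1, (inner ℝ (q - f (u + t * v)) (h (u + t * v)) : ℝ) := by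
    have e : (inner ℝ q (avg h u v) : ℝ) = ∫ t in (0:ℝ)..1, (inner ℝ q (h (u + t * v)) : ℝ) := by
      have := (innerSL ℝ q).intervalIntegral_comp_comm (μ := volume) (a := 0) (b := 1)
        (f := fun t => h (u + t * v)) (Continuous.intervalIntegrable (by fun_prop) _ _)
      exact this.symm
    rw [e]
    unfold avg
    rw [← intervalIntegral.integral_sub (Continuous.intervalIntegrable (by fun_prop) _ _)
      (Continuous.intervalIntegrable (by fun_prop) _ _)]
    simp only [innerB_apply, inner_sub_left]
  have h2 : ‖h‖ * (‖q - f u‖ + osc f u v) =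
      ∫ t in (0:ℝ)..1, ‖h‖ * (‖q - f u‖ + ‖f (u + t * v) - f u‖) := by
    rw [intervalIntegral.integral_const_mul, intervalIntegral.integral_add
      (Continuous.intervalIntegrable (by fun_prop) _ _)
      (Continuous.intervalIntegrable (by fun_prop) _ _)]
    simp [osc]
  rw [h1, h2, ← Real.norm_eq_abs]
  refine (intervalIntegral.norm_integral_le_integral_norm zero_le_one).trans ?_
  refine intervalIntegral.integral_mono_on zero_le_one
    (Continuous.intervalIntegrable (by fun_prop) _ _)
    (Continuous.intervalIntegrable (by fun_prop) _ _) fun t _ => ?_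
  refine (norm_inner_le_norm _ _).trans ?_
  rw [mul_comm]
  refine mul_le_mul (h.norm_coe_le_norm _) ?_ (norm_nonneg _) (norm_nonneg _)
  have e : q - f (u + t * v) = (q - f u) - (f (u + t * v) - f u) := by abel
  rw [e]
  exact norm_sub_le _ _

theorem abs_inner_meanDiff_sub_le (f h : ℝ →ᵇ V) {z : ℝ × ℝ × ℝ} (hz : z.2 ∈ arcs) :
    |(inner ℝ (samp 3 f z) (meanDiff h z) : ℝ) - meanDiff (innerB f h) z| ≤
      3 * ‖h‖ * oscSum f z := by
  obtain ⟨h1, h2, h3, h4⟩ := hz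
  have hQ : samp 3 f z = avg f z.1 (-z.2.1) := by
    have : clip (-z.2.1) = -z.2.1 := clip_of_abs_le (by rw [abs_neg, abs_of_pos h1]; linarith)
    simp [samp, node, this]
  rw [hQ]
  have k0 := norm_avg_sub_le f.continuous z.1 (-z.2.1)
  have k1 := abs_le.mp (abs_inner_avg_sub_le f h (avg f z.1 (-z.2.1)) z.1 z.2.2)
  have k2 := abs_le.mp (abs_inner_avg_sub_le f h (avg f z.1 (-z.2.1)) z.1 (-z.2.1))
  have k3 := mul_le_mul_of_nonneg_left k0 (norm_nonneg h)
  have k4 := mul_nonneg (norm_nonneg h) (osc_nonneg f z.1 z.2.2)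
  unfold meanDiff oscSum
  rw [inner_sub_right, abs_le]
  constructor <;> nlinarith

end

theorem norm_innerLp_diffCLM_le {n : ℕ} {p : ℝ} (hp : p < 8 / 3) (hs : 3 / 2 < 3 * p / 2 - 2)
    (x h : Coef n) : ‖innerLp (confMeasure p) (sampCLM 3 (vel hs x)) (diffCLM hp hs h)‖ ≤
      ‖gramCLM hp hs x h‖ + 3 * (oscConst hp hs * ‖x‖) * ‖vel hs h‖ := by
  set f := innerLp (confMeasure p) (sampCLM 3 (vel hs x)) (diffCLM hp hs h) with hf
  set g := gramCLM hp hs x h with hg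
  have hC := oscConst_nonneg hp hs
  have key : ‖f - g‖ ≤ 3 * (oscConst hp hs * ‖x‖) * ‖vel hs h‖ := by
    rw [Lp.norm_def]
    refine ENNReal.toReal_le_of_le_ofReal (by positivity) ?_
    have h1 : eLpNorm (f - g : Lp ℝ 2 (confMeasure p)) 2 (confMeasure p) ≤
        eLpNorm ((3 * ‖vel hs h‖) • oscSum (vel hs x)) 2 (confMeasure p) := by
      refine eLpNorm_mono_ae_real ?_
      filter_upwards [Lp.coeFn_sub f g, coeFn_innerLp (confMeasure p) (sampCLM 3 (vel hs x))
        (diffCLM hp hs h), coeFn_diffCLM hp hs h, coeFn_gramCLM hp hs x h, ae_confMeasure p]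
        with z z1 z2 z3 z4 z5
      rw [z1, Pi.sub_apply, hf, z2, z3, hg, z4, Real.norm_eq_abs, sampCLM_apply]
      exact abs_inner_meanDiff_sub_le _ _ z5
    refine h1.trans ?_
    rw [eLpNorm_const_smul, Real.enorm_eq_ofReal (by positivity)]
    refine (mul_le_mul_right (eLpNorm_oscSum_le hp hs x) _).trans ?_
    rw [← ENNReal.ofReal_mul (by positivity)]
    refine ENNReal.ofReal_le_ofReal (le_of_eq ?_)
    ring
  have := norm_add_le (f - g) g
  rw [sub_add_cancel] at this
  linarith

theorem exists_le_norm_diffCLM {p : ℝ} (hp : p < 8 / 3) (hs : 3 / 2 < 3 * p / 2 - 2) (n : ℕ) :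
    ∃ c, 0 < c ∧ ∀ h : Coef n, c * (‖h‖ ^ 2 - ‖h 0‖ ^ 2) ≤ ‖diffCLM hp hs h‖ ^ 2 := by
  obtain ⟨c, hc, h⟩ := exists_le_lintegral_meanDiff hs
  refine ⟨c, hc, fun a => ?_⟩
  have h1 : ENNReal.ofReal (‖diffCLM hp hs a‖ ^ 2) =
      ∫⁻ z, ENNReal.ofReal (‖meanDiff (vel hs a) z‖ ^ 2) ∂confMeasure p := by
    have hi := L2.integrable_inner (𝕜 := ℝ) (diffCLM hp hs a) (diffCLM hp hs a)
    have e : (fun z => (inner ℝ (diffCLM hp hs a z) (diffCLM hp hs a z) : ℝ)) =ᵐ[confMeasure p]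
        fun z => ‖meanDiff (vel hs a) z‖ ^ 2 := by
      filter_upwards [coeFn_diffCLM hp hs a] with z hz
      rw [hz, real_inner_self_eq_norm_sq]
    rw [← real_inner_self_eq_norm_sq, L2.inner_def, integral_congr_ae e,
      ofReal_integral_eq_lintegral_ofReal (hi.congr e) (ae_of_all _ fun z => by positivity)]
  have h2 := h n a
  rw [← h1] at h2
  exact (ENNReal.ofReal_le_ofReal_iff (by positivity)).mp h2

theorem exists_norm_vel_sq_le {s : ℝ} (hs : 3 / 2 < s) (n : ℕ) {ε : ℝ} (hε : 0 < ε) :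
    ∃ (F : Finset ℤ) (C : ℝ), 0 ≤ C ∧ ∀ h : Coef n,
      ‖vel hs h‖ ^ 2 ≤ ε * ‖h‖ ^ 2 + C * ∑ k ∈ F, ‖h k‖ ^ 2 := by
  set c : ℤ → ℝ := fun k => 4 * Real.pi * k * wt s k with hcdef
  have hc : Summable fun k => c k ^ 2 := summable_velWeight hs
  obtain ⟨F, hF⟩ := ((tendsto_order.mp (tendsto_tsum_compl_atTop_zero fun k => c k ^ 2)).2 (ε / 2)
    (by positivity)).exists
  refine ⟨F, 2 * ∑ k ∈ F, c k ^ 2, by positivity, fun h => ?_⟩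
  classical
  set d : ℤ → ℝ := fun k => if k ∈ F then 0 else c k with hd
  have hd2 : ∀ k, d k ^ 2 = Set.indicator {k | k ∉ F} (fun k => c k ^ 2) k := fun k => by
    by_cases hk : k ∈ F <;> simp [hd, hk]
  have hdsum : Summable fun k => d k ^ 2 := by
    simp_rw [hd2]
    exact hc.indicator _
  have hdval : ∑' k, d k ^ 2 ≤ ε / 2 := by
    simp_rw [hd2]
    rw [← tsum_subtype]
    exact hF.le
  have hterm : ∀ u, ‖vel hs h u‖ ≤ ∑' k, |c k| * ‖h k‖ := fun u => by
    rw [vel, seriesCLM_apply]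
    refine tsum_of_norm_bounded (Coef.summable_mul_norm hc h).1.hasSum fun k => ?_
    rw [norm_smul, Real.norm_eq_abs]
    refine mul_le_mul_of_nonneg_right ?_ (norm_nonneg _)
    have h1 := mul_le_mul_of_nonneg_left (abs_cas_le (-k) u) (abs_nonneg (2 * Real.pi * k * wt s k))
    rw [← abs_mul] at h1
    refine h1.trans (le_of_eq ?_)
    rw [hcdef, ← abs_two, ← abs_mul]
    simp only
    congr 1
    ring
  have hsplit : ∑' k, |c k| * ‖h k‖ = ∑ k ∈ F, |c k| * ‖h k‖ + ∑' k, |d k| * ‖h k‖ := by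
    have e : ∀ k, |c k| * ‖h k‖ = (if k ∈ F then |c k| * ‖h k‖ else 0) + |d k| * ‖h k‖ := fun k => by
      by_cases hk : k ∈ F <;> simp [hd, hk]
    have hs1 : HasSum (fun k => if k ∈ F then |c k| * ‖h k‖ else 0) (∑ k ∈ F, |c k| * ‖h k‖) := by
      have := hasSum_sum_of_ne_finset_zero (L := .unconditional ℤ) (s := F)
        (f := fun k => if k ∈ F then |c k| * ‖h k‖ else 0) (fun k hk => if_neg hk)
      rwa [Finset.sum_congr rfl fun k hk => if_pos hk] at this
    rw [tsum_congr e, (hs1.add (Coef.summable_mul_norm hdsum h).1.hasSum).tsum_eq]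
  have hA : (∑ k ∈ F, |c k| * ‖h k‖) ^ 2 ≤ (∑ k ∈ F, c k ^ 2) * ∑ k ∈ F, ‖h k‖ ^ 2 := by
    have := Finset.sum_mul_sq_le_sq_mul_sq F (fun k => |c k|) fun k => ‖h k‖
    simpa only [sq_abs] using this
  have hB : (∑' k, |d k| * ‖h k‖) ^ 2 ≤ ε / 2 * ‖h‖ ^ 2 := by
    have h1 := pow_le_pow_left₀ (tsum_nonneg fun k => by positivity)
      (Coef.summable_mul_norm hdsum h).2 2
    rw [mul_pow, Real.sq_sqrt (tsum_nonneg fun k => sq_nonneg _)] at h1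
    exact h1.trans (mul_le_mul_of_nonneg_right hdval (sq_nonneg _))
  have h0 : ‖vel hs h‖ ≤ ∑ k ∈ F, |c k| * ‖h k‖ + ∑' k, |d k| * ‖h k‖ := by
    rw [← hsplit]
    exact (BoundedContinuousFunction.norm_le (tsum_nonneg fun k => by positivity)).mpr hterm
  have h2 := pow_le_pow_left₀ (norm_nonneg _) h0 2
  nlinarith [sq_nonneg (∑ k ∈ F, |c k| * ‖h k‖ - ∑' k, |d k| * ‖h k‖)]

/-- The mean over a period as a continuous linear functional. -/
def meanCLM : (ℝ →ᵇ ℝ) →L[ℝ] ℝ :=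
  LinearMap.mkContinuous
    { toFun := fun f => ∫ u in (0:ℝ)..1, f u
      map_add' := fun f g => intervalIntegral.integral_add (f.continuous.intervalIntegrable _ _)
        (g.continuous.intervalIntegrable _ _)
      map_smul' := fun c f => intervalIntegral.integral_const_mul c f } 1 fun f => by
    have := intervalIntegral.norm_integral_le_of_norm_le_const (a := (0:ℝ)) (b := 1) (f := f)
      (C := ‖f‖) fun u _ => f.norm_coe_le_norm u
    simpa using this

theorem meanCLM_apply (f : ℝ →ᵇ ℝ) : meanCLM f = ∫ u in (0:ℝ)..1, f u := rfl

theorem areaForm_add_smul {α : Type*} [TopologicalSpace α] [SecondCountableTopology α]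
    [MeasurableSpace α] [BorelSpace α] {V : Type*} [NormedAddCommGroup V] [InnerProductSpace ℝ V]
    (μ : Measure α) (m : α →ᵇ ℝ) (Q : α →ᵇ V) (l k : Lp V 2 μ) :
    ∃ c, ∀ t : ℝ, areaForm μ m Q (l + t • k) =
      areaForm μ m Q l + c * t + areaForm μ m Q k * t ^ 2 := by
  unfold areaForm
  generalize mulLp (ContinuousLinearMap.lsmul ℝ ℝ : ℝ →L[ℝ] V →L[ℝ] V) μ (m * innerB Q Q) = A
  generalize mulLp (ContinuousLinearMap.mul ℝ ℝ) μ m = B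
  generalize innerLp μ Q = T
  refine ⟨inner ℝ (A l) k + inner ℝ (A k) l - inner ℝ (B (T l)) (T k) - inner ℝ (B (T k)) (T l),
    fun t => ?_⟩
  simp only [map_add, map_smul, inner_add_left, inner_add_right, inner_smul_left, inner_smul_right,
    RCLike.conj_to_real]
  ring

/-- The Lagrange functional in terms of the velocity and the differences of its means. -/
def lagrangian {V : Type*} [NormedAddCommGroup V] [InnerProductSpace ℝ V] (p lam : ℝ)
    (m : (ℝ →ᵇ V) → ((ℝ × ℝ × ℝ) →ᵇ ℝ)) (w : (ℝ →ᵇ V) × Lp V 2 (confMeasure p)) : ℝ :=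
  6 * areaForm (confMeasure p) (m w.1) (sampCLM 3 w.1) w.2 + lam / 2 * meanCLM (innerB w.1 w.1)

theorem contDiffAt_lagrangian {V : Type*} [NormedAddCommGroup V] [InnerProductSpace ℝ V]
    (p lam : ℝ) {m : (ℝ →ᵇ V) → ((ℝ × ℝ × ℝ) →ᵇ ℝ)} {w : (ℝ →ᵇ V) × Lp V 2 (confMeasure p)}
    (hm : ContDiffAt ℝ (⊤ : ℕ∞) m w.1) : ContDiffAt ℝ (⊤ : ℕ∞) (lagrangian p lam m) w := by
  have a0 : ContDiffAt ℝ (⊤ : ℕ∞) (fun w : (ℝ →ᵇ V) × Lp V 2 (confMeasure p) => w.1) w :=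
    contDiffAt_fst
  have a1 : ContDiffAt ℝ (⊤ : ℕ∞) (fun w : (ℝ →ᵇ V) × Lp V 2 (confMeasure p) => m w.1) w :=
    ContDiffAt.comp (g := m) w hm a0
  have a2 : ContDiffAt ℝ (⊤ : ℕ∞)
      (fun w : (ℝ →ᵇ V) × Lp V 2 (confMeasure p) => sampCLM 3 w.1) w :=
    ContDiffAt.continuousLinearMap_comp (sampCLM (V := V) 3) a0
  have a3 := contDiffAt_areaForm (confMeasure p) a1 a2 contDiffAt_snd
  have a4 : ContDiffAt ℝ (⊤ : ℕ∞)
      (fun w : (ℝ →ᵇ V) × Lp V 2 (confMeasure p) => innerB w.1 w.1) w :=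
    ContDiffAt.clm_bilinear innerB a0 a0
  have a5 : ContDiffAt ℝ (⊤ : ℕ∞)
      (fun w : (ℝ →ᵇ V) × Lp V 2 (confMeasure p) => meanCLM (innerB w.1 w.1)) w :=
    ContDiffAt.continuousLinearMap_comp meanCLM a4
  exact (contDiffAt_const.mul a3).add (contDiffAt_const.mul a5)

theorem le_fderiv_fderiv_lagrangian {V : Type*} [NormedAddCommGroup V] [InnerProductSpace ℝ V]
    (p lam : ℝ) {m : (ℝ →ᵇ V) → ((ℝ × ℝ × ℝ) →ᵇ ℝ)} {y : ℝ →ᵇ V} {l : Lp V 2 (confMeasure p)}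
    (hm : ContDiffAt ℝ (⊤ : ℕ∞) m y) (hm1 : ∀ z, 1 ≤ m y z) {c : ℝ} (hc : 0 ≤ c)
    (hQ : ∀ z, c ≤ ‖sampCLM 3 y z‖) (k : Lp V 2 (confMeasure p)) :
    12 * (c ^ 2 * ‖k‖ ^ 2 - ‖innerLp (confMeasure p) (sampCLM 3 y) k‖ ^ 2) ≤
      fderiv ℝ (fderiv ℝ (lagrangian p lam m)) (y, l) (0, k) (0, k) := by
  obtain ⟨c₁, hc₁⟩ := areaForm_add_smul (confMeasure p) (m y) (sampCLM 3 y) l k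
  have hl := fderiv_fderiv_apply_of_line (h := (0, k))
    (contDiffAt_lagrangian p lam (w := (y, l)) hm)
    (c₀ := 6 * areaForm (confMeasure p) (m y) (sampCLM 3 y) l + lam / 2 * meanCLM (innerB y y))
    (c₁ := 6 * c₁) (c₂ := 6 * areaForm (confMeasure p) (m y) (sampCLM 3 y) k)
    (c₃ := 0) (c₄ := 0) fun t => by
      have e : (y, l) + t • ((0, k) : (ℝ →ᵇ V) × Lp V 2 (confMeasure p)) = (y, l + t • k) := by
        refine Prod.ext ?_ rfl
        ext u
        simp
      rw [e, lagrangian]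
      simp only [hc₁]
      ring
  rw [hl]
  have := le_areaForm (confMeasure p) hm1 hc hQ k
  linarith

section

variable {p : ℝ} (hp : p < 8 / 3) (hs : 3 / 2 < 3 * p / 2 - 2) {n : ℕ}

/-- The Lagrange functional, augmented by a penalty for varying speed that vanishes to second order
at curves of constant speed. -/
def energy (lam : ℝ) (x : Coef n) : ℝ :=
  (menger p 2 (pos hs x) (vel hs x)).toReal + lam / 2 * (∫ u in (0:ℝ)..1, ‖vel hs x u‖ ^ 2) +
    3 * ‖gramCLM hp hs x x‖ ^ 2

theorem gramCLM_self_eq_zero {x : Coef n} (hunit : ∀ u, ‖vel hs x u‖ = 1) :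
    gramCLM hp hs x x = 0 := by
  refine Lp.ext ?_
  filter_upwards [coeFn_gramCLM hp hs x x, Lp.coeFn_zero ℝ 2 (confMeasure p)] with z h1 h2
  rw [h1, h2]
  simp [meanDiff, avg, innerB_apply, hunit]

theorem one_le_factor {x : Coef n} (hunit : ∀ u, ‖vel hs x u‖ = 1) (hp0 : 0 ≤ p)
    (hne : ∀ i z, 0 < ‖samp i (vel hs x) z‖) (z : ℝ × ℝ × ℝ) :
    1 ≤ ∏ i, (‖samp i (vel hs x) z‖ ^ 2) ^ expo p i := by
  have hle : ∀ i, ‖samp i (vel hs x) z‖ ≤ 1 := fun i =>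
    (norm_avg_le _ _ _).trans
      ((BoundedContinuousFunction.norm_le zero_le_one).mpr fun u => (hunit u).le)
  have h0 : ∀ u, ‖avg (vel hs x) u 0‖ = 1 := fun u => by simp [avg, hunit]
  have h1 : ∀ i : Fin 6, 1 ≤ (‖samp i (vel hs x) z‖ ^ 2) ^ expo p i := fun i => by
    by_cases hi : expo p i ≤ 0
    · exact Real.one_le_rpow_of_pos_of_le_one_of_nonpos (pow_pos (hne i z) 2)
        (pow_le_one₀ (norm_nonneg _) (hle i)) hi
    · have : ‖samp i (vel hs x) z‖ = 1 := by
        fin_cases i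
        · exact h0 _
        · exact h0 _
        · exact h0 _
        all_goals (exact absurd (show -p / 2 ≤ 0 from div_nonpos_of_nonpos_of_nonneg (neg_nonpos.mpr hp0) zero_le_two) hi)
      rw [this]
      simp
  exact Finset.prod_induction _ (1 ≤ ·) (fun _ _ => one_le_mul_of_one_le_of_one_le) le_rfl
    fun i _ => h1 i

theorem energy_garding (hp0 : 0 ≤ p) (lam : ℝ) {x : Coef n} (hinj : InjCircle (pos hs x))
    (hunit : ∀ u, ‖vel hs x u‖ = 1) : ContDiffAt ℝ (⊤ : ℕ∞) (energy hp hs lam) x ∧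
      ∃ (F : Finset ℤ) (K c : ℝ), 0 < c ∧ ∀ h, c * ‖h‖ ^ 2 ≤
        fderiv ℝ (fderiv ℝ (energy hp hs lam)) x h h + K * ∑ k ∈ F, ‖h k‖ ^ 2 := by
  obtain ⟨c₀, hc₀, hav⟩ := exists_le_norm_avg hs x hinj hunit
  have hsamp : ∀ i z, c₀ ≤ ‖samp i (vel hs x) z‖ := fun i z => hav _ _ (abs_node_snd_le i z)
  obtain ⟨m, hm, hmev⟩ := exists_contDiffAt_factor p (vel hs x) hc₀ hsamp
  have hm1 : ∀ z, 1 ≤ m (vel hs x) z := fun z => by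
    rw [hmev.self_of_nhds z]
    exact one_le_factor hs hunit hp0 (fun i z => hc₀.trans_le (hsamp i z)) z
  have hQ : ∀ z, c₀ ≤ ‖sampCLM 3 (vel hs x) z‖ := fun z => by
    rw [sampCLM_apply]
    exact hsamp 3 z
  obtain ⟨hsm, K, hK, hgar⟩ := garding_abstract (vel hs) (diffCLM hp hs) (gramCLM hp hs)
    (gramCLM_comm hp hs) (gramCLM_self_eq_zero hp hs hunit)
    (contDiffAt_lagrangian p lam (w := (vel hs x, diffCLM hp hs x)) hm)
    (innerLp (confMeasure p) (sampCLM 3 (vel hs x))) hc₀ (norm_innerLp_diffCLM_le hp hs x)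
    (le_fderiv_fderiv_lagrangian p lam hm hm1 hc₀.le hQ)
  have hev : energy hp hs lam =ᶠ[𝓝 x] fun x =>
      lagrangian p lam m (vel hs x, diffCLM hp hs x) + 3 * ‖gramCLM hp hs x x‖ ^ 2 := by
    filter_upwards [(vel hs).continuous.continuousAt.eventually hmev] with y hy
    rw [energy, menger_toReal_eq hp hs y _ hy, lagrangian]
    simp only [meanCLM_apply, innerB_apply, real_inner_self_eq_norm_sq]
  refine ⟨hsm.congr_of_eventuallyEq hev, ?_⟩
  rw [hev.fderiv.fderiv_eq]
  obtain ⟨c₂, hc₂, hlow⟩ := exists_le_norm_diffCLM hp hs n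
  obtain ⟨F, C, hC, hvel⟩ := exists_norm_vel_sq_le hs n (ε := 3 * c₀ ^ 2 * c₂ / (K + 1))
    (by positivity)
  classical
  refine ⟨insert 0 F, 6 * c₀ ^ 2 * c₂ + K * C, 3 * c₀ ^ 2 * c₂, by positivity, fun h => ?_⟩
  have e1 := hgar h
  have e2 := mul_le_mul_of_nonneg_left (hlow h) (show 0 ≤ 6 * c₀ ^ 2 by positivity)
  have e3 := mul_le_mul_of_nonneg_left (hvel h) hK
  have e4 : ∑ k ∈ F, ‖h k‖ ^ 2 ≤ ∑ k ∈ insert 0 F, ‖h k‖ ^ 2 :=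
    Finset.sum_le_sum_of_subset_of_nonneg (Finset.subset_insert _ _) fun _ _ _ => sq_nonneg _
  have e5 : ‖h 0‖ ^ 2 ≤ ∑ k ∈ insert 0 F, ‖h k‖ ^ 2 :=
    Finset.single_le_sum (f := fun k => ‖h k‖ ^ 2) (fun _ _ => sq_nonneg _)
      (Finset.mem_insert_self _ _)
  have e6 : K * (3 * c₀ ^ 2 * c₂ / (K + 1)) ≤ 3 * c₀ ^ 2 * c₂ := by
    rw [mul_div_assoc', div_le_iff₀ (by positivity)]
    have : 0 ≤ 3 * c₀ ^ 2 * c₂ := by positivity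
    nlinarith
  have e7 := mul_le_mul_of_nonneg_right e6 (sq_nonneg ‖h‖)
  have e8 := mul_le_mul_of_nonneg_left e4 (mul_nonneg hK hC)
  have e9 := mul_le_mul_of_nonneg_left e5 (show 0 ≤ 6 * c₀ ^ 2 * c₂ by positivity)
  nlinarith

end

/-! ### Translation of the parameter -/

theorem Coef.hasSum_rotation {n : ℕ} (τ : ℝ) (a : Coef n) :
    HasSum (fun k : ℤ => ‖Real.cos (2 * Real.pi * k * τ) • a k -
      Real.sin (2 * Real.pi * k * τ) • a (-k)‖ ^ 2) (‖a‖ ^ 2) := by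
  have e : (fun k : ℤ => (Real.cos (2 * Real.pi * k * τ) ^ 2 +
      Real.sin (2 * Real.pi * k * τ) ^ 2) * ‖a k‖ ^ 2) = fun k => ‖a k‖ ^ 2 := by
    funext k
    rw [Real.cos_sq_add_sin_sq, one_mul]
  have h := hasSum_norm_sq_pair (b := fun k => a k)
    (α := fun k : ℤ => Real.cos (2 * Real.pi * k * τ))
    (β := fun k : ℤ => Real.sin (2 * Real.pi * k * τ)) (fun k => by simp) (fun k => by simp)
    (e ▸ (Coef.hasSum_norm_sq a).summable)
  rwa [e, (Coef.hasSum_norm_sq a).tsum_eq] at h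

/-- The action of a translation of the parameter on the Hartley coefficients. -/
def rot {n : ℕ} (τ : ℝ) : Coef n →L[ℝ] Coef n :=
  LinearMap.mkContinuous
    { toFun := fun a => ⟨fun k => Real.cos (2 * Real.pi * k * τ) • a k -
        Real.sin (2 * Real.pi * k * τ) • a (-k), by
          refine memℓp_gen ?_
          simpa using (Coef.hasSum_rotation τ a).summable⟩
      map_add' := fun a b => by
        ext1
        funext k
        simp only [lp.coeFn_add, Pi.add_apply, smul_add]
        abel
      map_smul' := fun r a => by
        ext1
        funext k
        simp only [lp.coeFn_smul, Pi.smul_apply, RingHom.id_apply, smul_sub, smul_comm r] }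
    1 (fun a => by
      rw [one_mul]
      refine le_of_eq ?_
      rw [← sq_eq_sq₀ (norm_nonneg _) (norm_nonneg _)]
      exact (Coef.hasSum_norm_sq _).unique (Coef.hasSum_rotation τ a))

theorem rot_apply {n : ℕ} (τ : ℝ) (a : Coef n) (k : ℤ) :
    rot τ a k = Real.cos (2 * Real.pi * k * τ) • a k -
      Real.sin (2 * Real.pi * k * τ) • a (-k) := rfl

theorem rot_neg_rot {n : ℕ} (τ : ℝ) (a : Coef n) : rot (-τ) (rot τ a) = a := by
  ext1
  funext k
  have h := Real.cos_sq_add_sin_sq (2 * Real.pi * k * τ)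
  simp only [rot_apply, neg_neg, mul_neg, neg_mul, Int.cast_neg, Real.cos_neg, Real.sin_neg,
    neg_smul, smul_sub, smul_smul]
  calc _ = (Real.cos (2 * Real.pi * k * τ) ^ 2 + Real.sin (2 * Real.pi * k * τ) ^ 2) • a k := by
        module
    _ = a k := by rw [h, one_smul]

theorem rot_zero {n : ℕ} (a : Coef n) : rot 0 a = a := by
  ext1
  funext k
  simp [rot_apply]

theorem continuous_rot_apply {n : ℕ} (a : Coef n) : ContinuousAt (fun τ => rot τ a) 0 := by
  have hn : ∀ τ, ‖rot τ a - a‖ ^ 2 =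
      ∑' k : ℤ, (2 - 2 * Real.cos (2 * Real.pi * k * τ)) * ‖a k‖ ^ 2 := fun τ => by
    have e : (fun k : ℤ => ((Real.cos (2 * Real.pi * k * τ) - 1) ^ 2 +
        Real.sin (2 * Real.pi * k * τ) ^ 2) * ‖a k‖ ^ 2) =
        fun k : ℤ => (2 - 2 * Real.cos (2 * Real.pi * k * τ)) * ‖a k‖ ^ 2 := by
      funext k
      have := Real.cos_sq_add_sin_sq (2 * Real.pi * k * τ)
      congr 1
      linarith
    have h := hasSum_norm_sq_pair (b := fun k => a k)
      (α := fun k : ℤ => Real.cos (2 * Real.pi * k * τ) - 1)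
      (β := fun k : ℤ => Real.sin (2 * Real.pi * k * τ)) (fun k => by simp) (fun k => by simp)
      (by
        rw [e]
        refine Summable.of_nonneg_of_le (fun k => ?_) (fun k => ?_)
          ((Coef.hasSum_norm_sq a).summable.mul_left 4)
        · exact mul_nonneg (by linarith [Real.cos_le_one (2 * Real.pi * k * τ)]) (sq_nonneg _)
        · exact mul_le_mul_of_nonneg_right
            (by linarith [Real.neg_one_le_cos (2 * Real.pi * k * τ)]) (sq_nonneg _))
    rw [e] at h
    refine (Coef.hasSum_norm_sq _).unique ?_
    refine h.congr_fun fun k => ?_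
    rw [lp.coeFn_sub, Pi.sub_apply, rot_apply, sub_smul, one_smul]
    congr 2
    abel
  have hc : Continuous fun τ : ℝ =>
      ∑' k : ℤ, (2 - 2 * Real.cos (2 * Real.pi * k * τ)) * ‖a k‖ ^ 2 := by
    refine continuous_tsum (fun k => by fun_prop)
      ((Coef.hasSum_norm_sq a).summable.mul_left 4) fun k τ => ?_
    rw [norm_mul, norm_pow, norm_norm]
    refine mul_le_mul_of_nonneg_right ?_ (sq_nonneg _)
    rw [Real.norm_eq_abs, abs_le]
    constructor <;>
      linarith [Real.neg_one_le_cos (2 * Real.pi * k * τ), Real.cos_le_one (2 * Real.pi * k * τ)]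
  have h0 : Tendsto (fun τ => ‖rot τ a - a‖ ^ 2) (𝓝 0) (𝓝 0) := by
    simp_rw [hn]
    simpa using hc.tendsto 0
  rw [ContinuousAt, rot_zero, tendsto_iff_norm_sub_tendsto_zero]
  simpa [Real.sqrt_sq] using h0.sqrt

section

variable {n : ℕ} {s : ℝ} (hs : 3 / 2 < s)

theorem pos_rot (τ : ℝ) (a : Coef n) (u : ℝ) : pos hs (rot τ a) u = pos hs a (u + τ) := by
  rw [pos_apply, pos_apply, tsum_cas_add (summable_posCoef hs a)]
  refine tsum_congr fun k => ?_
  rw [rot_apply, wt_neg, smul_sub, smul_comm (wt s k), smul_comm (wt s k)]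

theorem vel_rot (τ : ℝ) (a : Coef n) (u : ℝ) : vel hs (rot τ a) u = vel hs a (u + τ) := by
  have h1 := hasDerivAt_pos hs (rot τ a) u
  have h2 := (hasDerivAt_pos hs a (u + τ)).comp_add_const u τ
  have e : ⇑(pos hs (rot τ a)) = fun x => pos hs a (x + τ) := funext (pos_rot hs τ a)
  rw [e] at h1
  exact h1.unique h2

end

theorem menger_comp_add {n : ℕ} (p q τ : ℝ) {f f' : ℝ → EuclideanSpace ℝ (Fin n)}
    (hf : Function.Periodic f 1) (hf' : Function.Periodic f' 1) :
    menger p q (fun u => f (u + τ)) (fun u => f' (u + τ)) = menger p q f f' := by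
  unfold menger
  have h3 : ∀ u v : ℝ, ∫⁻ w in Ico (0:ℝ) 1, ENNReal.ofReal (‖f' u‖ * ‖f' v‖ * ‖f' (w + τ)‖ *
      invR p q (f u) (f v) (f (w + τ))) = ∫⁻ w in Ico (0:ℝ) 1, ENNReal.ofReal
      (‖f' u‖ * ‖f' v‖ * ‖f' w‖ * invR p q (f u) (f v) (f w)) := fun u v =>
    Function.Periodic.lintegral_Ico_add (g := fun w => ENNReal.ofReal
      (‖f' u‖ * ‖f' v‖ * ‖f' w‖ * invR p q (f u) (f v) (f w)))
      (fun w => by simp only [hf w, hf' w]) τ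
  simp_rw [h3]
  have h2 : ∀ u : ℝ, ∫⁻ v in Ico (0:ℝ) 1, ∫⁻ w in Ico (0:ℝ) 1, ENNReal.ofReal
      (‖f' u‖ * ‖f' (v + τ)‖ * ‖f' w‖ * invR p q (f u) (f (v + τ)) (f w)) =
      ∫⁻ v in Ico (0:ℝ) 1, ∫⁻ w in Ico (0:ℝ) 1, ENNReal.ofReal
      (‖f' u‖ * ‖f' v‖ * ‖f' w‖ * invR p q (f u) (f v) (f w)) := fun u =>
    Function.Periodic.lintegral_Ico_add (g := fun v => ∫⁻ w in Ico (0:ℝ) 1, ENNReal.ofReal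
      (‖f' u‖ * ‖f' v‖ * ‖f' w‖ * invR p q (f u) (f v) (f w)))
      (fun v => by simp only [hf v, hf' v]) τ
  simp_rw [h2]
  exact Function.Periodic.lintegral_Ico_add (g := fun u => ∫⁻ v in Ico (0:ℝ) 1,
    ∫⁻ w in Ico (0:ℝ) 1, ENNReal.ofReal
      (‖f' u‖ * ‖f' v‖ * ‖f' w‖ * invR p q (f u) (f v) (f w)))
      (fun u => by simp only [hf u, hf' u]) τ

section

variable {p : ℝ} (hp : p < 8 / 3) (hs : 3 / 2 < 3 * p / 2 - 2) {n : ℕ}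

theorem norm_gramCLM_rot (τ : ℝ) (x : Coef n) :
    ‖gramCLM hp hs (rot τ x) (rot τ x)‖ = ‖gramCLM hp hs x x‖ := by
  have hper : Function.Periodic (innerB (vel hs x) (vel hs x)) 1 := fun u => by
    simp only [innerB_apply, vel_periodic hs x u]
  have hmd : ∀ u y, meanDiff (innerB (vel hs x) (vel hs x)) (u + 1, y) =
      meanDiff (innerB (vel hs x) (vel hs x)) (u, y) := fun u y => by
    simp only [meanDiff, avg, add_right_comm _ (1:ℝ), hper _]
  have hrot : ∀ u y, meanDiff (innerB (vel hs (rot τ x)) (vel hs (rot τ x))) (u, y) =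
      meanDiff (innerB (vel hs x) (vel hs x)) (u + τ, y) := fun u y => by
    simp only [meanDiff, avg, innerB_apply, vel_rot, add_right_comm _ τ]
  have hm : ∀ f : ℝ →ᵇ ℝ, Measurable fun z => ‖meanDiff f z‖ₑ ^ (2:ℝ) := fun f =>
    (continuous_meanDiff f.continuous).measurable.enorm.pow_const _
  rw [Lp.norm_def, Lp.norm_def, eLpNorm_congr_ae (coeFn_gramCLM hp hs (rot τ x) (rot τ x)),
    eLpNorm_congr_ae (coeFn_gramCLM hp hs x x),
    eLpNorm_eq_lintegral_rpow_enorm_toReal two_ne_zero ENNReal.ofNat_ne_top,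
    eLpNorm_eq_lintegral_rpow_enorm_toReal two_ne_zero ENNReal.ofNat_ne_top, ENNReal.toReal_ofNat,
    lintegral_confMeasure p (hm _), lintegral_confMeasure p (hm _)]
  congr 3
  funext y
  simp only [hrot]
  exact Function.Periodic.lintegral_Ico_add
    (g := fun u => ‖meanDiff (innerB (vel hs x) (vel hs x)) (u, y)‖ₑ ^ (2:ℝ))
    (fun u => by simp only [hmd]) τ

theorem energy_rot (lam τ : ℝ) (x : Coef n) :
    energy hp hs lam (rot τ x) = energy hp hs lam x := by
  have e1 : ⇑(pos hs (rot τ x)) = fun u => pos hs x (u + τ) := funext (pos_rot hs τ x)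
  have e2 : ⇑(vel hs (rot τ x)) = fun u => vel hs x (u + τ) := funext (vel_rot hs τ x)
  have hper : Function.Periodic (fun u => ‖vel hs x u‖ ^ 2) 1 := fun u => by
    simp only [vel_periodic hs x u]
  have h := hper.intervalIntegral_add_eq τ 0
  have h2 : ∫ u in (0:ℝ)..1, ‖vel hs x (u + τ)‖ ^ 2 = ∫ u in (0:ℝ)..1, ‖vel hs x u‖ ^ 2 := by
    rw [intervalIntegral.integral_comp_add_right (fun u => ‖vel hs x u‖ ^ 2)]
    simpa [add_comm] using h
  rw [energy, energy, norm_gramCLM_rot, e1, e2,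
    menger_comp_add p 2 τ (pos_periodic hs x) (vel_periodic hs x), h2]

theorem fderiv_energy_rot_eq_zero {lam : ℝ} (τ : ℝ) {x : Coef n}
    (hd : DifferentiableAt ℝ (energy hp hs lam) x) (hx : fderiv ℝ (energy hp hs lam) x = 0) :
    fderiv ℝ (energy hp hs lam) (rot τ x) = 0 := by
  have h1 : HasFDerivAt (energy hp hs lam) (0 : Coef n →L[ℝ] ℝ) (rot (-τ) (rot τ x)) := by
    rw [rot_neg_rot, ← hx]
    exact hd.hasFDerivAt
  have h2 := h1.comp (rot τ x) (rot (n := n) (-τ)).hasFDerivAt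
  rw [ContinuousLinearMap.zero_comp] at h2
  have h3 : HasFDerivAt (energy hp hs lam) (0 : Coef n →L[ℝ] ℝ) (rot τ x) :=
    h2.congr_of_eventuallyEq (Eventually.of_forall fun y => (energy_rot hp hs lam (-τ) y).symm)
  exact h3.fderiv

/-- Truncation of the coefficients to a finite set of frequencies, multiplied by `K`. -/
def trunc (F : Finset ℤ) (K : ℝ) : Coef n →L[ℝ] Coef n :=
  K • ∑ k ∈ F, (lp.singleContinuousLinearMap ℝ (fun _ : ℤ => EuclideanSpace ℝ (Fin n)) 2 k).comp
    (lp.evalCLM ℝ (fun _ : ℤ => EuclideanSpace ℝ (Fin n)) 2 k)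

theorem trunc_apply (F : Finset ℤ) (K : ℝ) (h : Coef n) : trunc F K h =
    K • ∑ k ∈ F, lp.singleContinuousLinearMap ℝ (fun _ : ℤ => EuclideanSpace ℝ (Fin n)) 2 k
      (h k) := by
  simp only [trunc, smul_apply, sum_apply]
  rfl

theorem inner_trunc (F : Finset ℤ) (K : ℝ) (h : Coef n) :
    inner ℝ (trunc F K h) h = K * ∑ k ∈ F, ‖h k‖ ^ 2 := by
  rw [trunc_apply, real_inner_smul_left, sum_inner]
  congr 1
  refine Finset.sum_congr rfl fun k _ => ?_
  rw [lp.singleContinuousLinearMap_apply, lp.inner_single_left, real_inner_self_eq_norm_sq]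

theorem contDiff_trunc_rot (F : Finset ℤ) (K : ℝ) (x : Coef n) :
    ContDiff ℝ (⊤ : ℕ∞) fun τ => trunc F K (rot τ x) := by
  simp_rw [trunc_apply, rot_apply]
  refine ContDiff.const_smul K (ContDiff.sum fun k _ => ?_)
  refine ContDiff.continuousLinearMap_comp
    (lp.singleContinuousLinearMap ℝ (fun _ : ℤ => EuclideanSpace ℝ (Fin n)) 2 k)
    (ContDiff.sub ?_ ?_)
  · exact (Real.contDiff_cos.comp (contDiff_const.mul contDiff_id)).smul contDiff_const
  · exact (Real.contDiff_sin.comp (contDiff_const.mul contDiff_id)).smul contDiff_const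

/-- Critical points of the augmented functional are smooth. -/
theorem contDiff_pos_of_fderiv_energy_eq_zero (hp0 : 0 ≤ p) {lam : ℝ} {x : Coef n}
    (hinj : InjCircle (pos hs x)) (hunit : ∀ u, ‖vel hs x u‖ = 1)
    (hcrit : fderiv ℝ (energy hp hs lam) x = 0) : ContDiff ℝ (⊤ : ℕ∞) (pos hs x) := by
  obtain ⟨hsm, F, K, c, hc, hco⟩ := energy_garding hp hs hp0 lam hinj hunit
  have hd : DifferentiableAt ℝ (energy hp hs lam) x := hsm.differentiableAt (by simp)
  have horb : ContDiffAt ℝ (⊤ : ℕ∞) (fun τ => rot τ x) 0 := by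
    refine contDiffAt_orbit_of_coercive (G := energy hp hs lam) (o := fun τ => rot τ x) (τ₀ := 0)
      ?_ (continuous_rot_apply x)
      (Eventually.of_forall fun τ => fderiv_energy_rot_eq_zero hp hs τ hd hcrit) (trunc F K)
      (contDiff_trunc_rot F K x).contDiffAt ⟨c, hc, fun h => ?_⟩
    · rw [rot_zero]
      exact hsm
    · rw [rot_zero, inner_trunc]
      exact hco h
  rw [contDiff_iff_contDiffAt]
  intro u
  have h1 : ContDiffAt ℝ (⊤ : ℕ∞) (fun τ => pos hs (rot τ x) u) 0 :=
    ((BoundedContinuousFunction.evalCLM ℝ u).comp (pos hs)).contDiff.contDiffAt.comp (0 : ℝ) horb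
  simp_rw [pos_rot] at h1
  have h2 : ContDiffAt ℝ (⊤ : ℕ∞) (fun v : ℝ => v - u) u := contDiffAt_id.sub contDiffAt_const
  have h3 := ContDiffAt.comp (f := fun v : ℝ => v - u) u (by rwa [sub_self]) h2
  refine h3.congr_of_eventuallyEq (Eventually.of_forall fun v => ?_)
  simp

end

/-! ### Stationary curves are critical points -/

theorem pos_single {n : ℕ} {s : ℝ} (hs : 3 / 2 < s) (k : ℤ) (v : EuclideanSpace ℝ (Fin n)) (u : ℝ) :
    pos hs (lp.single 2 k v : Coef n) u = cas k u • wt s k • v := by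
  rw [pos_apply, tsum_eq_single k]
  · rw [lp.single_apply_self]
  · intro j hj
    rw [lp.single_apply_ne _ _ _ hj, smul_zero, smul_zero]

theorem contDiff_pos_single {n : ℕ} {s : ℝ} (hs : 3 / 2 < s) (k : ℤ)
    (v : EuclideanSpace ℝ (Fin n)) :
    ContDiff ℝ (⊤ : ℕ∞) (pos hs (lp.single 2 k v : Coef n)) := by
  have e : ⇑(pos hs (lp.single 2 k v : Coef n)) = fun u => cas k u • wt s k • v :=
    funext (pos_single hs k v)
  rw [e]
  unfold cas
  exact ((Real.contDiff_cos.comp (contDiff_const.mul contDiff_id)).add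
    (Real.contDiff_sin.comp (contDiff_const.mul contDiff_id))).smul contDiff_const

theorem hasDerivAt_meanCLM_innerB {V : Type*} [NormedAddCommGroup V] [InnerProductSpace ℝ V]
    (f g : ℝ →ᵇ V) : HasDerivAt
      (fun τ : ℝ => meanCLM (innerB (f + τ • g) (f + τ • g))) (2 * meanCLM (innerB f g)) 0 := by
  have e : (fun τ : ℝ => meanCLM (innerB (f + τ • g) (f + τ • g))) = fun τ : ℝ =>
      meanCLM (innerB f f) + τ * (2 * meanCLM (innerB f g)) + τ ^ 2 * meanCLM (innerB g g) := by
    funext τ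
    simp only [map_add, map_smul, add_apply, smul_apply, smul_eq_mul, innerB_comm g f]
    ring
  rw [e]
  have h := (((hasDerivAt_id (0:ℝ)).mul_const (2 * meanCLM (innerB f g))).const_add
    (meanCLM (innerB f f))).add ((hasDerivAt_pow 2 (0:ℝ)).mul_const (meanCLM (innerB g g)))
  refine h.congr_deriv ?_
  simp

theorem hasDerivAt_comp_line {X : Type*} [NormedAddCommGroup X] [NormedSpace ℝ X] {G : X → ℝ}
    {x : X} (hG : DifferentiableAt ℝ G x) (d : X) :
    HasDerivAt (fun τ : ℝ => G (x + τ • d)) (fderiv ℝ G x d) 0 := by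
  have h : HasFDerivAt G (fderiv ℝ G x) (x + (0:ℝ) • d) := by
    rw [zero_smul, add_zero]
    exact hG.hasFDerivAt
  have h2 : HasDerivAt (fun τ : ℝ => x + τ • d) d 0 := by
    simpa using ((hasDerivAt_id (0:ℝ)).smul_const d).const_add x
  exact h.comp_hasDerivAt (0:ℝ) h2

section

variable {p : ℝ} (hp : p < 8 / 3) (hs : 3 / 2 < 3 * p / 2 - 2) {n : ℕ}

theorem hasDerivAt_menger (hp0 : 0 ≤ p) (lam : ℝ) {x : Coef n} (hinj : InjCircle (pos hs x))
    (hunit : ∀ u, ‖vel hs x u‖ = 1) (d : Coef n) :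
    HasDerivAt (fun τ : ℝ => (menger p 2 (fun u => pos hs x u + τ • pos hs d u)
      (fun u => vel hs x u + τ • vel hs d u)).toReal)
      (fderiv ℝ (energy hp hs lam) x d - lam * meanCLM (innerB (vel hs x) (vel hs d))) 0 := by
  have hd : DifferentiableAt ℝ (energy hp hs lam) x :=
    (energy_garding hp hs hp0 lam hinj hunit).1.differentiableAt (by simp)
  have h1 := hasDerivAt_comp_line hd d
  have h2 := (hasDerivAt_meanCLM_innerB (vel hs x) (vel hs d)).const_mul (lam / 2)
  obtain ⟨g1, g2, -⟩ := fderiv_fderiv_norm_sq_bilinear (gramCLM hp hs (n := n))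
    (gramCLM_comm hp hs) (gramCLM_self_eq_zero hp hs hunit)
  have h3 := (hasDerivAt_comp_line (g1.differentiableAt (by simp)) d).const_mul 3
  rw [g2] at h3
  have h4 := (h1.sub h2).sub h3
  refine (h4.congr_deriv ?_).congr_of_eventuallyEq (Eventually.of_forall fun τ => ?_)
  · rw [zero_apply]
    ring
  · have e1 : ⇑(pos hs (x + τ • d)) = fun u => pos hs x u + τ • pos hs d u := by
      rw [map_add, map_smul]
      rfl
    have e2 : ⇑(vel hs (x + τ • d)) = fun u => vel hs x u + τ • vel hs d u := by
      rw [map_add, map_smul]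
      rfl
    have e3 : meanCLM (innerB (vel hs x + τ • vel hs d) (vel hs x + τ • vel hs d)) =
        ∫ u in (0:ℝ)..1, ‖vel hs x u + τ • vel hs d u‖ ^ 2 := by
      rw [meanCLM_apply]
      refine intervalIntegral.integral_congr fun u _ => ?_
      rw [innerB_apply, real_inner_self_eq_norm_sq]
      rfl
    simp only [Pi.sub_apply, energy, e1, e2, e3]
    ring

theorem fderiv_energy_eq_zero_of_stationary (hp0 : 0 ≤ p) {lam : ℝ} {x : Coef n}
    (hinj : InjCircle (pos hs x)) (hunit : ∀ u, ‖vel hs x u‖ = 1)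
    (hstat : ∀ h : ℝ → EuclideanSpace ℝ (Fin n),
      ContDiff ℝ (⊤ : ℕ∞) h → Function.Periodic h 1 →
      ∃ L : ℝ,
        Tendsto (fun τ : ℝ =>
            ((menger p 2 (fun u => pos hs x u + τ • h u)
                (fun u => vel hs x u + τ • deriv h u)).toReal
              - (menger p 2 (pos hs x) (vel hs x)).toReal) / τ)
          (𝓝[≠] (0:ℝ)) (𝓝 L) ∧
        L + lam * ∫ u in Ico (0:ℝ) 1, (inner ℝ (vel hs x u) (deriv h u) : ℝ) = 0) :
    fderiv ℝ (energy hp hs lam) x = 0 := by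
  refine lp.ext_continuousLinearMap (by simp) fun k => ?_
  ext1 v
  set d : Coef n := lp.single 2 k v with hd
  change fderiv ℝ (energy hp hs lam) x d = 0
  obtain ⟨L, hL, hL0⟩ := hstat (pos hs d) (contDiff_pos_single hs k v) (pos_periodic hs d)
  have hder : deriv (pos hs d) = vel hs d := funext fun u => (hasDerivAt_pos hs d u).deriv
  rw [hder] at hL hL0
  have h1 := hasDerivAt_iff_tendsto_slope_zero.mp
    (hasDerivAt_menger hp hs hp0 lam hinj hunit d)
  have h2 := tendsto_nhds_unique h1 (hL.congr fun τ => by simp [div_eq_inv_mul])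
  rw [← h2, integral_Ico_eq_integral_Ioc, ← intervalIntegral.integral_of_le zero_le_one] at hL0
  have e : meanCLM (innerB (vel hs x) (vel hs d)) =
      ∫ u in (0:ℝ)..1, inner ℝ (vel hs x u) (vel hs d u) := rfl
  rw [e] at hL0
  linarith

end

/-! ### Hartley coefficients of a Sobolev curve -/

theorem fourierCoef_apply {n : ℕ} (f : ℝ → EuclideanSpace ℝ (Fin n)) (k : ℤ) (j : Fin n) :
    fourierCoef f k j = ∫ x in Ico (0:ℝ) 1, (f x j : ℂ) *
      Complex.exp (-(((2 * Real.pi * (k : ℝ) * x : ℝ) : ℂ) * Complex.I)) := rfl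

theorem fourierCoef_neg {n : ℕ} (f : ℝ → EuclideanSpace ℝ (Fin n)) (k : ℤ) (j : Fin n) :
    fourierCoef f (-k) j = starRingEnd ℂ (fourierCoef f k j) := by
  rw [fourierCoef_apply, fourierCoef_apply, ← integral_conj]
  refine integral_congr_ae (ae_of_all _ fun x => ?_)
  simp only [map_mul, Complex.conj_ofReal, ← Complex.exp_conj, map_neg, Complex.conj_I]
  push_cast
  congr 2
  ring

theorem hasSum_fourierCoef {n : ℕ} {f : ℝ → EuclideanSpace ℝ (Fin n)} (hf : Continuous f)
    (hper : Function.Periodic f 1) (hsum : Summable fun k => ‖fourierCoef f k‖) (j : Fin n)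
    (u : ℝ) : HasSum (fun k : ℤ => fourierCoef f k j *
      Complex.exp (((2 * Real.pi * (k : ℝ) * u : ℝ) : ℂ) * Complex.I)) (f u j : ℂ) := by
  have hperj : Function.Periodic (fun u => (f u j : ℂ)) 1 := fun u => by simp only [hper u]
  have hcj : Continuous fun u => (f u j : ℂ) :=
    Complex.continuous_ofReal.comp ((EuclideanSpace.proj (𝕜 := ℝ) j).continuous.comp hf)
  let F : C(AddCircle (1:ℝ), ℂ) := ⟨hperj.lift, continuous_coinduced_dom.mpr hcj⟩
  have hF : ∀ x : ℝ, F (x : AddCircle (1:ℝ)) = (f x j : ℂ) := fun x => hperj.lift_coe x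
  have hco : ∀ k : ℤ, fourierCoeff F k = fourierCoef f k j := fun k => by
    rw [fourierCoeff_eq_intervalIntegral _ k 0, zero_add, fourierCoef_apply,
      intervalIntegral.integral_of_le zero_le_one, ← integral_Ico_eq_integral_Ioc, div_one,
      one_smul]
    refine integral_congr_ae (ae_of_all _ fun x => ?_)
    simp only [hF, fourier_coe_apply, smul_eq_mul]
    rw [mul_comm]
    congr 2
    push_cast
    ring
  have hs : Summable (fourierCoeff F) := by
    refine Summable.of_norm_bounded hsum fun k => ?_
    rw [hco]
    exact PiLp.norm_apply_le (fourierCoef f k) j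
  have h := has_pointwise_sum_fourier_series_of_summable hs (u : AddCircle (1:ℝ))
  rw [hF] at h
  refine h.congr_fun fun k => ?_
  rw [hco, fourier_coe_apply, smul_eq_mul]
  congr 2
  push_cast
  ring

/-- The `k`-th coefficient of a periodic function with respect to the Hartley basis. -/
def hartleyCoef {n : ℕ} (f : ℝ → EuclideanSpace ℝ (Fin n)) (k : ℤ) : EuclideanSpace ℝ (Fin n) :=
  WithLp.toLp 2 fun j => (fourierCoef f k j).re - (fourierCoef f k j).im

theorem norm_hartleyCoef_sq_le {n : ℕ} (f : ℝ → EuclideanSpace ℝ (Fin n)) (k : ℤ) :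
    ‖hartleyCoef f k‖ ^ 2 ≤ 2 * ‖fourierCoef f k‖ ^ 2 := by
  rw [EuclideanSpace.real_norm_sq_eq, EuclideanSpace.norm_sq_eq, Finset.mul_sum]
  refine Finset.sum_le_sum fun j _ => ?_
  rw [← Complex.normSq_eq_norm_sq, Complex.normSq_apply]
  change ((fourierCoef f k j).re - (fourierCoef f k j).im) ^ 2 ≤ _
  nlinarith [sq_nonneg ((fourierCoef f k j).re + (fourierCoef f k j).im)]

theorem hasSum_hartleyCoef {n : ℕ} {f : ℝ → EuclideanSpace ℝ (Fin n)} (hf : Continuous f)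
    (hper : Function.Periodic f 1) (hsum : Summable fun k => ‖fourierCoef f k‖) (j : Fin n)
    (u : ℝ) : HasSum (fun k : ℤ => cas k u * hartleyCoef f k j) (f u j) := by
  have h1 := Complex.reCLM.hasSum (hasSum_fourierCoef hf hper hsum j u)
  set g : ℤ → ℝ := fun k => Real.sin (2 * Real.pi * k * u) * (fourierCoef f k j).re -
    Real.cos (2 * Real.pi * k * u) * (fourierCoef f k j).im with hg
  have hgs : Summable g := by
    refine Summable.of_norm_bounded (hsum.mul_left 2) fun k => ?_
    have e1 : ‖Real.sin (2 * Real.pi * k * u) * (fourierCoef f k j).re‖ ≤ ‖fourierCoef f k‖ := by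
      rw [norm_mul, ← one_mul ‖fourierCoef f k‖]
      exact mul_le_mul (Real.abs_sin_le_one _) ((Complex.abs_re_le_norm _).trans
        (PiLp.norm_apply_le (fourierCoef f k) j)) (norm_nonneg _) zero_le_one
    have e2 : ‖Real.cos (2 * Real.pi * k * u) * (fourierCoef f k j).im‖ ≤ ‖fourierCoef f k‖ := by
      rw [norm_mul, ← one_mul ‖fourierCoef f k‖]
      exact mul_le_mul (Real.abs_cos_le_one _) ((Complex.abs_im_le_norm _).trans
        (PiLp.norm_apply_le (fourierCoef f k) j)) (norm_nonneg _) zero_le_one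
    linarith [norm_sub_le (Real.sin (2 * Real.pi * k * u) * (fourierCoef f k j).re)
      (Real.cos (2 * Real.pi * k * u) * (fourierCoef f k j).im)]
  have hg0 : ∑' k, g k = 0 := by
    have hodd : ∀ k, g (-k) = -g k := fun k => by
      simp only [hg, fourierCoef_neg, Complex.conj_re, Complex.conj_im, Int.cast_neg, mul_neg,
        neg_mul, Real.sin_neg, Real.cos_neg]
      ring
    have e := (Equiv.neg ℤ).tsum_eq g
    simp only [Equiv.neg_apply, hodd, tsum_neg] at e
    linarith
  have h2 := h1.add hgs.hasSum
  rw [hg0, add_zero] at h2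
  refine h2.congr_fun fun k => ?_
  change cas k u * ((fourierCoef f k j).re - (fourierCoef f k j).im) = _
  simp only [hg, cas, Complex.reCLM_apply, Complex.mul_re, Complex.exp_ofReal_mul_I_re,
    Complex.exp_ofReal_mul_I_im]
  ring

theorem summable_norm_fourierCoef {n : ℕ} {s : ℝ} (hs : 3 / 2 < s)
    {f : ℝ → EuclideanSpace ℝ (Fin n)}
    (hsob : Summable fun k : ℤ => (1 + (k:ℝ) ^ 2) ^ s * ‖fourierCoef f k‖ ^ 2) :
    Summable fun k => ‖fourierCoef f k‖ := by
  refine Summable.of_nonneg_of_le (fun _ => norm_nonneg _) (fun k => ?_)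
    ((summable_one_add_sq_rpow (r := s) (by linarith)).add hsob)
  have h1 : (1 + (k:ℝ) ^ 2) ^ (-s) * (1 + (k:ℝ) ^ 2) ^ s = 1 := by
    rw [← Real.rpow_add (by positivity), neg_add_cancel, Real.rpow_zero]
  have h2 : 0 < (1 + (k:ℝ) ^ 2) ^ s := by positivity
  have h3 : 0 < (1 + (k:ℝ) ^ 2) ^ (-s) := by positivity
  set A := (1 + (k:ℝ) ^ 2) ^ s
  set B := (1 + (k:ℝ) ^ 2) ^ (-s)
  have h4 : 0 ≤ A * (‖fourierCoef f k‖ - B) ^ 2 := by positivity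
  have h5 : A * (‖fourierCoef f k‖ - B) ^ 2 =
      A * ‖fourierCoef f k‖ ^ 2 - 2 * (B * A) * ‖fourierCoef f k‖ + (B * A) * B := by ring
  rw [h5, h1] at h4
  linarith [norm_nonneg (fourierCoef f k)]

/-- A continuous Sobolev curve is the sum of its Hartley series. -/
theorem exists_pos_eq {n : ℕ} {s : ℝ} (hs : 3 / 2 < s) {f : ℝ → EuclideanSpace ℝ (Fin n)}
    (hf : Continuous f) (hper : Function.Periodic f 1)
    (hsob : Summable fun k : ℤ => (1 + (k:ℝ) ^ 2) ^ s * ‖fourierCoef f k‖ ^ 2) :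
    ∃ a : Coef n, ⇑(pos hs a) = f := by
  have hmem : Memℓp (fun k => (wt s k)⁻¹ • hartleyCoef f k) 2 := by
    refine memℓp_gen ?_
    simp only [ENNReal.toReal_ofNat, Real.rpow_ofNat]
    refine Summable.of_nonneg_of_le (fun _ => by positivity) (fun k => ?_) (hsob.mul_left 2)
    rw [norm_smul, mul_pow, norm_inv, Real.norm_of_nonneg (wt_pos s k).le, inv_pow, wt_sq,
      Real.rpow_neg (by positivity), inv_inv]
    have := mul_le_mul_of_nonneg_left (norm_hartleyCoef_sq_le f k)
      (show 0 ≤ (1 + (k:ℝ) ^ 2) ^ s by positivity)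
    linarith
  refine ⟨⟨_, hmem⟩, funext fun u => ?_⟩
  have hsum := summable_norm_fourierCoef hs hsob
  rw [pos_apply]
  have h0 := summable_cas_smul (summable_posCoef hs ⟨_, hmem⟩) u
  ext j
  have h1 := (EuclideanSpace.proj (𝕜 := ℝ) j).hasSum h0.hasSum
  refine h1.unique ((hasSum_hartleyCoef hf hper hsum j u).congr_fun fun k => ?_)
  change cas k u * (wt s k * ((wt s k)⁻¹ * hartleyCoef f k j)) = _
  rw [mul_inv_cancel_left₀ (wt_pos s k).ne']

theorem menger_congr_ae {n : ℕ} (p q : ℝ) (f : ℝ → EuclideanSpace ℝ (Fin n))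
    {g g' : ℝ → EuclideanSpace ℝ (Fin n)} (h : g =ᵐ[volume] g') :
    menger p q f g = menger p q f g' := by
  have h' : ∀ᵐ u ∂(volume.restrict (Ico (0:ℝ) 1)), g u = g' u := ae_restrict_of_ae h
  unfold menger
  refine lintegral_congr_ae (h'.mono fun u hu => ?_)
  refine lintegral_congr_ae (h'.mono fun v hv => ?_)
  refine lintegral_congr_ae (h'.mono fun w hw => ?_)
  simp only [hu, hv, hw]

/-- **Regularity of stationary points.** For `p ∈ (7/3, 8/3)`, any injective
arc-length parametrized curve `γ ∈ W^{3p/2-2,2}(ℝ/ℤ,ℝⁿ)` that is a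
stationary point of `E_{p,2}` with respect to fixed length — i.e. there is a
Lagrange multiplier `λ ∈ ℝ` with
`δE_{p,2}(γ;h) + λ ∫ ⟨γ',h'⟩ = 0` for all smooth periodic `h` — is `C^∞`. -/
theorem regularity_of_stationary_points (n : ℕ) (p : ℝ)
    (hp : p ∈ Ioo (7/3 : ℝ) (8/3))
    (γ γ' : ℝ → EuclideanSpace ℝ (Fin n))
    (hγ : CurvePair γ γ') (harc : ∀ᵐ u : ℝ, ‖γ' u‖ = 1) (hinj : InjCircle γ)
    (hsob : Summable (fun k : ℤ =>
      (1 + (k:ℝ)^2) ^ (3*p/2 - 2) * ‖fourierCoef γ k‖^2))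
    (hstat : ∃ lam : ℝ, ∀ h : ℝ → EuclideanSpace ℝ (Fin n),
      ContDiff ℝ (⊤ : ℕ∞) h → Function.Periodic h 1 →
      ∃ L : ℝ,
        Tendsto (fun τ : ℝ =>
            ((menger p 2 (fun u => γ u + τ • h u)
                (fun u => γ' u + τ • deriv h u)).toReal
              - (menger p 2 γ γ').toReal) / τ)
          (𝓝[≠] (0:ℝ)) (𝓝 L) ∧
        L + lam * ∫ u in Ico (0:ℝ) 1, (inner ℝ (γ' u) (deriv h u) : ℝ) = 0) :
    ContDiff ℝ (⊤ : ℕ∞) γ := by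
  have hs : 3 / 2 < 3 * p / 2 - 2 := by linarith [hp.1]
  have hp0 : 0 ≤ p := by linarith [hp.1]
  have hloc : LocallyIntegrable γ' volume :=
    (locallyIntegrable_const (1:ℝ)).mono hγ.meas'.aestronglyMeasurable
      (harc.mono fun u hu => by rw [hu, norm_one])
  have hγ_int : ∀ a b, IntervalIntegrable γ' volume a b := fun a b =>
    (hloc.integrableOn_isCompact isCompact_uIcc).intervalIntegrable
  have hcont : Continuous γ := by
    rw [funext hγ.primitive]
    exact continuous_const.add (intervalIntegral.continuous_primitive hγ_int 0)
  obtain ⟨x, rfl⟩ := exists_pos_eq hs hcont hγ.periodic hsob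
  have hae : γ' =ᵐ[volume] vel hs x := by
    filter_upwards [LocallyIntegrable.ae_hasDerivAt_integral hloc] with u hu
    have h1 : HasDerivAt (pos hs x) (γ' u) u := by
      rw [funext hγ.primitive]
      exact (hu 0).const_add _
    exact h1.unique (hasDerivAt_pos hs x u)
  have hunit : ∀ u, ‖vel hs x u‖ = 1 := by
    have h1 : (fun u => ‖vel hs x u‖) =ᵐ[volume] fun _ => (1:ℝ) := by
      filter_upwards [hae, harc] with u h1 h2
      rw [← h1, h2]
    exact congr_fun ((Continuous.ae_eq_iff_eq volume (vel hs x).continuous.norm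
      continuous_const).mp h1)
  obtain ⟨lam, hlam⟩ := hstat
  refine contDiff_pos_of_fderiv_energy_eq_zero hp.2 hs hp0 hinj hunit
    (fderiv_energy_eq_zero_of_stationary hp.2 hs hp0 (lam := lam) hinj hunit
      fun h hh hper => ?_)
  obtain ⟨L, hL, hL0⟩ := hlam h hh hper
  refine ⟨L, ?_, ?_⟩
  · refine hL.congr fun τ => ?_
    have h1 : (fun u => γ' u + τ • deriv h u) =ᵐ[volume] fun u => vel hs x u + τ • deriv h u :=
      hae.mono fun u hu => by simp only [hu]
    rw [menger_congr_ae p 2 _ h1, menger_congr_ae p 2 _ hae]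
  · have h1 : ∫ u in Ico (0:ℝ) 1, (inner ℝ (vel hs x u) (deriv h u) : ℝ) =
        ∫ u in Ico (0:ℝ) 1, (inner ℝ (γ' u) (deriv h u) : ℝ) :=
      integral_congr_ae ((ae_restrict_of_ae hae).mono fun u hu => by simp only [hu])
    rw [h1, hL0]
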